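/- arXiv:1611.05314 — 3 statements merged into one kernel-verified Lean document; each statement's English description precedes it below -/
import Mathlib

section
/- Let 2 ≤ k ≤ n and 0 ≤ d ≤ n−1. The number of nonempty exposed faces of dimension d of the general permutahedron Π_{n−1}(k−1) ⊆ ℝ^n equals ∑ C(n,i)·C(n−i,j)·S(n−i−j, n−i−d−1)·(n−i−d−1)!, where the sum ranges over pairs of integers (i,j) with 0 ≤ i ≤ k−1 and k ≤ i+j ≤ n, and a summand is taken to be 0 whenever n−i−d−1 < 0. -/
open Pointwise

noncomputable section

/-- The simplex Δ_F ⊆ ℝ^n for F ⊆ {0,…,n−1}. -/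
def stdSimplexOn (n : ℕ) (F : Finset (Fin n)) : Set (Fin n → ℝ) :=
  {x | (∀ i, 0 ≤ x i) ∧ (∀ i, i ∉ F → x i = 0) ∧ ∑ i, x i = 1}

/-- The general permutahedron Π_{n−1}(k−1) ⊆ ℝ^n, Minkowski sum of all Δ_F with |F| = k. -/
def genPerm (n k : ℕ) : Set (Fin n → ℝ) :=
  ∑ F ∈ Finset.univ.powersetCard k, stdSimplexOn n F

/-- P_{n−1}(v): convex hull of the orbit of v under coordinate permutations. -/
def permPoly {n : ℕ} (v : Fin n → ℝ) : Set (Fin n → ℝ) :=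
  convexHull ℝ {w | ∃ σ : Equiv.Perm (Fin n), w = v ∘ σ}

/-- Dimension of a subset of ℝ^n : dimension of its affine span. -/
def setDim {n : ℕ} (S : Set (Fin n → ℝ)) : ℕ :=
  Module.finrank ℝ (affineSpan ℝ S).direction

/-- Nonempty exposed face of P : the maximizer set of some linear functional. -/
def IsExpFace {n : ℕ} (P A : Set (Fin n → ℝ)) : Prop :=
  A.Nonempty ∧ ∃ L : (Fin n → ℝ) →ₗ[ℝ] ℝ, A = {x ∈ P | ∀ y ∈ P, L y ≤ L x}

/-- Stirling numbers of the second kind. -/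
def stirling2 : ℕ → ℕ → ℕ
  | 0, 0 => 1
  | 0, _ + 1 => 0
  | _ + 1, 0 => 0
  | n + 1, k + 1 => (k + 1) * stirling2 n (k + 1) + stirling2 n k

/-- i-th backward difference of u at position k. -/
def bdiff {n : ℕ} (u : Fin n → ℝ) (i : ℕ) (k : Fin n) : ℝ :=
  ∑ j ∈ Finset.range (i + 1), (-1 : ℝ) ^ j * (i.choose j) *
    u ⟨(k : ℕ) - j, lt_of_le_of_lt (Nat.sub_le _ _) k.isLt⟩

/-- The number of chains A_1 ⊆ ⋯ ⊆ A_ℓ of nonempty exposed faces of P with dim A_i = s i. -/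
def flagCount {n : ℕ} (P : Set (Fin n → ℝ)) (l : ℕ) (s : Fin l → ℕ) : ℕ :=
  Nat.card {A : Fin l → Set (Fin n → ℝ) //
    (∀ i, IsExpFace P (A i) ∧ setDim (A i) = s i) ∧ ∀ i j, i ≤ j → A i ⊆ A j}

/-- The exponential (l+1)-flag polynomial of P ⊆ ℝ^n (a polytope of dimension n−1). -/
def xiFlag {n : ℕ} (P : Set (Fin n → ℝ)) (l : ℕ) (x : Fin (l + 1) → ℝ) : ℝ :=
  ∑ s : Fin (l + 1) → Fin n, if Monotone s then
    ((flagCount P (l + 1) (fun i => (s i : ℕ)) : ℝ) / (Nat.factorial (n - (s 0 : ℕ)))) *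
      ∏ i : Fin (l + 1), x i ^ (if (i : ℕ) = 0 then (s i : ℕ) else
        (s i : ℕ) - (s ⟨(i : ℕ) - 1, lt_of_le_of_lt (Nat.sub_le _ _) i.isLt⟩ : ℕ))
  else 0

/-- The standard permutahedron Π_{n−1} ⊆ ℝ^n. -/
def stdPermutahedron (n : ℕ) : Set (Fin n → ℝ) :=
  convexHull ℝ {w | ∃ σ : Equiv.Perm (Fin n), ∀ i, w i = ((σ i : ℕ) : ℝ) + 1}

/-- E_m(t) = ∑_{j=0}^m t^j/j!, the degree-m Taylor polynomial of exp. -/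
def Etaylor (m : ℕ) (t : ℝ) : ℝ :=
  ∑ j ∈ Finset.range (m + 1), t ^ j / (Nat.factorial j)

end

/-- the maximizers of a weight on a finite set. -/
noncomputable def Mx {n : ℕ} (w : Fin n → ℝ) (F : Finset (Fin n)) : Finset (Fin n) :=
  F.filter (fun x => ∀ y ∈ F, w y ≤ w x)

/-- the face of the general permutahedron in direction w. -/
noncomputable def faceW (n k : ℕ) (w : Fin n → ℝ) : Set (Fin n → ℝ) :=
  ∑ F ∈ Finset.univ.powersetCard k, stdSimplexOn n (Mx w F)

theorem mem_Mx {n : ℕ} {w : Fin n → ℝ} {F : Finset (Fin n)} {x : Fin n} :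
    x ∈ Mx w F ↔ x ∈ F ∧ ∀ y ∈ F, w y ≤ w x := by simp [Mx]

theorem Mx_nonempty {n : ℕ} (w : Fin n → ℝ) {F : Finset (Fin n)} (hF : F.Nonempty) :
    (Mx w F).Nonempty := by
  obtain ⟨x, hx, h⟩ := Finset.exists_max_image F w hF
  exact ⟨x, mem_Mx.2 ⟨hx, h⟩⟩

theorem simplex_bound {n : ℕ} (w : Fin n → ℝ) {F : Finset (Fin n)} {m : Fin n}
    (hm : m ∈ Mx w F) {x : Fin n → ℝ} (hx : x ∈ stdSimplexOn n F) :
    ∑ i, w i * x i ≤ w m := by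
  obtain ⟨h0, h1, h2⟩ := hx
  calc ∑ i, w i * x i ≤ ∑ i, w m * x i := by
        apply Finset.sum_le_sum
        intro i _
        by_cases hi : i ∈ F
        · exact mul_le_mul_of_nonneg_right ((mem_Mx.1 hm).2 i hi) (h0 i)
        · simp [h1 i hi]
    _ = w m := by rw [← Finset.mul_sum, h2, mul_one]

theorem simplex_eq {n : ℕ} (w : Fin n → ℝ) {F : Finset (Fin n)} {m : Fin n}
    (hm : m ∈ Mx w F) {x : Fin n → ℝ} (hx : x ∈ stdSimplexOn n F) :
    ∑ i, w i * x i = w m ↔ x ∈ stdSimplexOn n (Mx w F) := by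
  obtain ⟨h0, h1, h2⟩ := hx
  have e : w m - ∑ i, w i * x i = ∑ i, (w m - w i) * x i := by
    simp only [sub_mul, Finset.sum_sub_distrib]
    rw [← Finset.mul_sum, h2, mul_one]
  have nn : ∀ i ∈ Finset.univ, 0 ≤ (w m - w i) * x i := by
    intro i _
    by_cases hi : i ∈ F
    · exact mul_nonneg (sub_nonneg.2 ((mem_Mx.1 hm).2 i hi)) (h0 i)
    · simp [h1 i hi]
  constructor
  · intro h
    rw [h, sub_self, eq_comm, Finset.sum_eq_zero_iff_of_nonneg nn] at e
    refine ⟨h0, fun i hi => ?_, h2⟩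
    by_cases hF : i ∈ F
    · have h3 := e i (Finset.mem_univ _)
      rcases mul_eq_zero.1 h3 with h4 | h4
      · exfalso
        apply hi
        refine mem_Mx.2 ⟨hF, fun y hy => ?_⟩
        have := (mem_Mx.1 hm).2 y hy
        linarith
      · exact h4
    · exact h1 i hF
  · rintro ⟨-, h3, -⟩
    have : ∑ i, (w m - w i) * x i = 0 := by
      apply Finset.sum_eq_zero
      intro i _
      by_cases hi : i ∈ Mx w F
      · have := (mem_Mx.1 hm).2 i (mem_Mx.1 hi).1
        have := (mem_Mx.1 hi).2 m (mem_Mx.1 hm).1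
        have : w m - w i = 0 := by linarith
        simp [this]
      · simp [h3 i hi]
    linarith

theorem simplex_mono {n : ℕ} {F G : Finset (Fin n)} (h : F ⊆ G) :
    stdSimplexOn n F ⊆ stdSimplexOn n G := by
  rintro x ⟨h0, h1, h2⟩
  exact ⟨h0, fun i hi => h1 i (fun h' => hi (h h')), h2⟩

theorem Mx_subset {n : ℕ} (w : Fin n → ℝ) (F : Finset (Fin n)) : Mx w F ⊆ F :=
  Finset.filter_subset _ _

theorem single_mem {n : ℕ} {F : Finset (Fin n)} {x : Fin n} (h : x ∈ F) :
    (Pi.single x 1 : Fin n → ℝ) ∈ stdSimplexOn n F := by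
  refine ⟨fun i => ?_, fun i hi => ?_, ?_⟩
  · by_cases h : i = x
    · subst h; simp
    · simp [h]
  · have : i ≠ x := by rintro rfl; exact hi h
    simp [this]
  · simp

theorem card_nonempty {n k : ℕ} (hk : 2 ≤ k) {F : Finset (Fin n)}
    (hF : F ∈ (Finset.univ : Finset (Fin n)).powersetCard k) : F.Nonempty := by
  rw [Finset.mem_powersetCard] at hF
  apply Finset.card_pos.1; omega

/-- choice of a maximizer for each set in the family. -/
theorem exists_choice {n k : ℕ} (hk : 2 ≤ k) (hkn : k ≤ n) (w : Fin n → ℝ) :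
    ∃ m : Finset (Fin n) → Fin n,
      ∀ F ∈ (Finset.univ : Finset (Fin n)).powersetCard k, m F ∈ Mx w F := by
  have : ∀ F : Finset (Fin n), ∃ m, F ∈ (Finset.univ : Finset (Fin n)).powersetCard k →
      m ∈ Mx w F := by
    intro F
    by_cases hF : F ∈ (Finset.univ : Finset (Fin n)).powersetCard k
    · obtain ⟨m, hm⟩ := Mx_nonempty w (card_nonempty hk hF)
      exact ⟨m, fun _ => hm⟩
    · exact ⟨⟨0, by omega⟩, fun h => absurd h hF⟩
  choose m hm using this
  exact ⟨m, hm⟩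

theorem dot_sum {n : ℕ} (w : Fin n → ℝ) (S : Finset (Finset (Fin n)))
    (g : Finset (Fin n) → Fin n → ℝ) :
    ∑ i, w i * (∑ F ∈ S, g F) i = ∑ F ∈ S, ∑ i, w i * g F i := by
  simp only [Finset.sum_apply, Finset.mul_sum]
  exact Finset.sum_comm

theorem genPerm_bound {n k : ℕ} (w : Fin n → ℝ)
    (m : Finset (Fin n) → Fin n)
    (hm : ∀ F ∈ (Finset.univ : Finset (Fin n)).powersetCard k, m F ∈ Mx w F)
    {x : Fin n → ℝ} (hx : x ∈ genPerm n k) :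
    ∑ i, w i * x i ≤ ∑ F ∈ (Finset.univ : Finset (Fin n)).powersetCard k, w (m F) := by
  obtain ⟨g, hg, rfl⟩ := (Set.mem_finsetSum _ _ _).1 hx
  rw [dot_sum]
  exact Finset.sum_le_sum fun F hF => simplex_bound w (hm F hF) (hg hF)

theorem sum_eq_iff {n k : ℕ} (w : Fin n → ℝ)
    (m : Finset (Fin n) → Fin n)
    (hm : ∀ F ∈ (Finset.univ : Finset (Fin n)).powersetCard k, m F ∈ Mx w F)
    (g : Finset (Fin n) → Fin n → ℝ)
    (hg : ∀ F ∈ (Finset.univ : Finset (Fin n)).powersetCard k, g F ∈ stdSimplexOn n F) :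
    ∑ i, w i * (∑ F ∈ (Finset.univ : Finset (Fin n)).powersetCard k, g F) i
      = ∑ F ∈ (Finset.univ : Finset (Fin n)).powersetCard k, w (m F) ↔
    ∀ F ∈ (Finset.univ : Finset (Fin n)).powersetCard k, g F ∈ stdSimplexOn n (Mx w F) := by
  rw [dot_sum, Finset.sum_eq_sum_iff_of_le
    (fun F hF => simplex_bound w (hm F hF) (hg F hF))]
  exact forall₂_congr fun F hF => simplex_eq w (hm F hF) (hg F hF)

theorem mem_faceW_iff {n k : ℕ} (w : Fin n → ℝ)
    (m : Finset (Fin n) → Fin n)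
    (hm : ∀ F ∈ (Finset.univ : Finset (Fin n)).powersetCard k, m F ∈ Mx w F)
    (x : Fin n → ℝ) :
    x ∈ faceW n k w ↔ x ∈ genPerm n k ∧
      ∑ i, w i * x i = ∑ F ∈ (Finset.univ : Finset (Fin n)).powersetCard k, w (m F) := by
  constructor
  · intro hx
    obtain ⟨g, hg, rfl⟩ := (Set.mem_finsetSum _ _ _).1 hx
    have hg' : ∀ F ∈ (Finset.univ : Finset (Fin n)).powersetCard k, g F ∈ stdSimplexOn n F :=
      fun F hF => simplex_mono (Mx_subset w F) (hg hF)
    exact ⟨(Set.mem_finsetSum _ _ _).2 ⟨g, fun {F} hF => hg' F hF, rfl⟩,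
      (sum_eq_iff w m hm g hg').2 fun F hF => hg hF⟩
  · rintro ⟨hx, h⟩
    obtain ⟨g, hg, rfl⟩ := (Set.mem_finsetSum _ _ _).1 hx
    have := (sum_eq_iff w m hm g (fun F hF => hg hF)).1 h
    exact (Set.mem_finsetSum _ _ _).2 ⟨g, fun {F} hF => this F hF, rfl⟩

theorem faceW_sum_mem {n k : ℕ} (w : Fin n → ℝ)
    (m : Finset (Fin n) → Fin n)
    (hm : ∀ F ∈ (Finset.univ : Finset (Fin n)).powersetCard k, m F ∈ Mx w F) :
    ∑ F ∈ (Finset.univ : Finset (Fin n)).powersetCard k, (Pi.single (m F) 1 : Fin n → ℝ)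
      ∈ faceW n k w :=
  (Set.mem_finsetSum _ _ _).2 ⟨_, fun {F} hF => single_mem (hm F hF), rfl⟩

theorem faceW_eq {n k : ℕ} (hk : 2 ≤ k) (hkn : k ≤ n) (w : Fin n → ℝ) :
    faceW n k w = {x ∈ genPerm n k | ∀ y ∈ genPerm n k, ∑ i, w i * y i ≤ ∑ i, w i * x i} := by
  obtain ⟨m, hm⟩ := exists_choice hk hkn w
  ext x
  rw [mem_faceW_iff w m hm]
  constructor
  · rintro ⟨h1, h2⟩
    exact ⟨h1, fun y hy => h2 ▸ genPerm_bound w m hm hy⟩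
  · rintro ⟨h1, h2⟩
    refine ⟨h1, le_antisymm (genPerm_bound w m hm h1) ?_⟩
    have h3 := (mem_faceW_iff w m hm _).1 (faceW_sum_mem w m hm)
    rw [← h3.2]
    exact h2 _ h3.1

theorem isExpFace_iff {n k : ℕ} (hk : 2 ≤ k) (hkn : k ≤ n) (A : Set (Fin n → ℝ)) :
    IsExpFace (genPerm n k) A ↔ ∃ w, A = faceW n k w := by
  constructor
  · rintro ⟨-, L, rfl⟩
    have hL : ∀ x, L x = ∑ i, L (Pi.single i 1) * x i := by
      intro x
      conv_lhs => rw [LinearMap.pi_apply_eq_sum_univ L x]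
      apply Finset.sum_congr rfl
      intro i _
      rw [smul_eq_mul, mul_comm]
      congr 2
      ext j
      simp [Pi.single_apply, eq_comm]
    refine ⟨fun i => L (Pi.single i 1), ?_⟩
    rw [faceW_eq hk hkn]
    simp only [← hL]
  · rintro ⟨w, rfl⟩
    refine ⟨?_, ∑ i, w i • LinearMap.proj i, ?_⟩
    · obtain ⟨m, hm⟩ := exists_choice hk hkn w
      exact ⟨_, faceW_sum_mem w m hm⟩
    · rw [faceW_eq hk hkn]
      simp

theorem Mx_sub_of_faceW {n k : ℕ} (hk : 2 ≤ k) (hkn : k ≤ n) {w w' : Fin n → ℝ}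
    (h : faceW n k w = faceW n k w') {F : Finset (Fin n)} (hF : F.card = k) :
    Mx w F ⊆ Mx w' F := by
  intro x hx
  have hF' : F ∈ (Finset.univ : Finset (Fin n)).powersetCard k := by simp [hF]
  obtain ⟨m0, hm0⟩ := exists_choice hk hkn w
  obtain ⟨m', hm'⟩ := exists_choice hk hkn w'
  have hm : ∀ G ∈ (Finset.univ : Finset (Fin n)).powersetCard k,
      Function.update m0 F x G ∈ Mx w G := by
    intro G hG
    by_cases hGF : G = F
    · subst hGF; simpa using hx
    · simpa [hGF] using hm0 G hG
  have h1 := faceW_sum_mem w _ hm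
  rw [h, mem_faceW_iff w' m' hm'] at h1
  have h2 := (sum_eq_iff w' m' hm' (fun G => Pi.single (Function.update m0 F x G) 1)
    (fun G hG => single_mem (Mx_subset w G (hm G hG)))).1 h1.2 F hF'
  by_contra hc
  have := h2.2.1 x hc
  simp at this

theorem faceW_eq_iff {n k : ℕ} (hk : 2 ≤ k) (hkn : k ≤ n) {w w' : Fin n → ℝ} :
    faceW n k w = faceW n k w' ↔ ∀ F : Finset (Fin n), F.card = k → Mx w F = Mx w' F := by
  constructor
  · intro h F hF
    exact (Mx_sub_of_faceW hk hkn h hF).antisymm (Mx_sub_of_faceW hk hkn h.symm hF)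
  · intro h
    apply Finset.sum_congr rfl
    intro F hF
    rw [h F (Finset.mem_powersetCard.1 hF).2]

/-- normalized rank functions. -/
def GoodR (n k : ℕ) (r : Fin n → ℕ) : Prop :=
  (Finset.univ.filter (fun x => r x = 0)).card < k ∧
  k ≤ (Finset.univ.filter (fun x => r x ≤ 1)).card ∧
  ∀ c, 1 ≤ c → c ≤ Finset.univ.sup r → ∃ y, r y = c

/-- rank function as a real weight. -/
noncomputable def rkW {n : ℕ} (r : Fin n → ℕ) : Fin n → ℝ := fun x => (r x : ℝ)

theorem mem_Mx_r {n : ℕ} {r : Fin n → ℕ} {F : Finset (Fin n)} {x : Fin n} :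
    x ∈ Mx (rkW r) F ↔ x ∈ F ∧ ∀ y ∈ F, r y ≤ r x := by
  simp [mem_Mx, rkW]

theorem exists_F {n k : ℕ} (hk : 2 ≤ k) {r : Fin n → ℕ} (hr : GoodR n k r) {x y : Fin n}
    (hy : 1 ≤ r y) (hxy : r x ≤ r y) :
    ∃ F : Finset (Fin n), F.card = k ∧ x ∈ F ∧ y ∈ Mx (rkW r) F := by
  obtain ⟨h1, h2, h3⟩ := hr
  have hsub : ({x, y} : Finset (Fin n)) ⊆ Finset.univ.filter (fun z => r z ≤ r y) := by
    intro z hz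
    simp only [Finset.mem_insert, Finset.mem_singleton] at hz
    rcases hz with rfl | rfl <;> simp [hxy]
  have hc : k ≤ (Finset.univ.filter (fun z => r z ≤ r y)).card := by
    refine h2.trans (Finset.card_le_card ?_)
    intro z hz
    simp only [Finset.mem_filter, Finset.mem_univ, true_and] at hz ⊢
    omega
  obtain ⟨F, hF1, hF2, hF3⟩ := Finset.exists_subsuperset_card_eq hsub
    (Finset.card_le_two.trans hk) hc
  refine ⟨F, hF3, hF1 (by simp), mem_Mx_r.2 ⟨hF1 (by simp), fun z hz => ?_⟩⟩
  simpa using hF2 hz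

theorem pos_of_mem_Mx {n k : ℕ} {r : Fin n → ℕ} (hr : GoodR n k r) {y : Fin n}
    {F : Finset (Fin n)} (hF : F.card = k) (hy : y ∈ Mx (rkW r) F) : 1 ≤ r y := by
  by_contra hc
  have : F ⊆ Finset.univ.filter (fun x => r x = 0) := by
    intro z hz
    have := (mem_Mx_r.1 hy).2 z hz
    simp only [Finset.mem_filter, Finset.mem_univ, true_and]
    omega
  have := Finset.card_le_card this
  have := hr.1
  omega

theorem r_le {n k : ℕ} (hk : 2 ≤ k) {r r' : Fin n → ℕ} (hr : GoodR n k r)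
    (hr' : GoodR n k r')
    (h : ∀ F : Finset (Fin n), F.card = k → Mx (rkW r) F = Mx (rkW r') F) :
    ∀ c x, r x = c → r x ≤ r' x := by
  have hpos : ∀ {y}, 1 ≤ r y → 1 ≤ r' y := by
    intro y hy
    obtain ⟨F, hF, -, hyF⟩ := exists_F hk hr hy le_rfl
    rw [h F hF] at hyF
    exact pos_of_mem_Mx hr' hF hyF
  have hle : ∀ {x y}, 1 ≤ r' y → r' x ≤ r' y → r x ≤ r y := by
    intro x y hy hxy
    obtain ⟨F, hF, hx, hyF⟩ := exists_F hk hr' hy hxy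
    rw [← h F hF] at hyF
    exact (mem_Mx_r.1 hyF).2 x hx
  intro c
  induction c with
  | zero => intro x hx; omega
  | succ c ih =>
    intro x hx
    have h1 := hpos (y := x) (by omega)
    by_cases hc : c = 0
    · omega
    · have hs : r x ≤ Finset.univ.sup r := Finset.le_sup (Finset.mem_univ x)
      obtain ⟨y, hy⟩ := hr.2.2 c (by omega) (by omega)
      have h2 := ih y hy
      have h3 : ¬ r' x ≤ r' y := by
        intro h4
        have := hle (x := x) (y := y) (by omega) h4
        omega
      omega

theorem r_inj {n k : ℕ} (hk : 2 ≤ k) (hkn : k ≤ n) {r r' : Fin n → ℕ} (hr : GoodR n k r)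
    (hr' : GoodR n k r') (h : faceW n k (rkW r) = faceW n k (rkW r')) : r = r' := by
  rw [faceW_eq_iff hk hkn] at h
  ext x
  exact le_antisymm (r_le hk hr hr' h _ x rfl)
    (r_le hk hr' hr (fun F hF => (h F hF).symm) _ x rfl)

theorem exists_threshold {n k : ℕ} (hk : 2 ≤ k) (hkn : k ≤ n) (w : Fin n → ℝ) :
    ∃ z, (Finset.univ.filter (fun x => w x < w z)).card < k ∧
      k ≤ (Finset.univ.filter (fun x => w x ≤ w z)).card := by
  classical
  let S : Finset (Fin n) :=
    Finset.univ.filter (fun z => k ≤ (Finset.univ.filter (fun x => w x ≤ w z)).card)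
  have hne : (Finset.univ : Finset (Fin n)).Nonempty := ⟨⟨0, by omega⟩, Finset.mem_univ _⟩
  have hS : S.Nonempty := by
    obtain ⟨z, -, hz⟩ := Finset.exists_max_image Finset.univ w hne
    refine ⟨z, ?_⟩
    simp only [S, Finset.mem_filter, Finset.mem_univ, true_and]
    rw [Finset.filter_true_of_mem (fun x hx => hz x hx)]
    simpa using hkn
  obtain ⟨z, hzS, hz⟩ := Finset.exists_min_image S w hS
  refine ⟨z, ?_, by simpa [S] using hzS⟩
  by_contra hc
  push Not at hc
  have hne' : (Finset.univ.filter (fun x => w x < w z)).Nonempty := by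
    apply Finset.card_pos.1; omega
  obtain ⟨y, hy, hy'⟩ := Finset.exists_max_image _ w hne'
  have hyz : w y < w z := by simpa using hy
  have : y ∈ S := by
    simp only [S, Finset.mem_filter, Finset.mem_univ, true_and]
    refine hc.trans (Finset.card_le_card ?_)
    intro x hx
    have := hy' x hx
    simpa using this
  exact absurd (hz y this) (not_le.2 hyz)

theorem r_surj {n k : ℕ} (hk : 2 ≤ k) (hkn : k ≤ n) (w : Fin n → ℝ) :
    ∃ r, GoodR n k r ∧ faceW n k (rkW r) = faceW n k w := by
  classical
  obtain ⟨z, hz1, hz2⟩ := exists_threshold hk hkn w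
  let V : ℝ → Finset ℝ := fun t => (Finset.univ.image w).filter (fun v => w z ≤ v ∧ v ≤ t)
  let r : Fin n → ℕ := fun x => (V (w x)).card
  have hmono : ∀ {x y}, w x ≤ w y → r x ≤ r y := by
    intro x y h
    apply Finset.card_le_card
    intro v hv
    simp only [V, Finset.mem_filter] at hv ⊢
    exact ⟨hv.1, hv.2.1, hv.2.2.trans h⟩
  have hstrict : ∀ {x y}, w z ≤ w y → w x < w y → r x < r y := by
    intro x y hy h
    apply Finset.card_lt_card
    refine ⟨?_, fun hc => ?_⟩
    · intro v hv
      simp only [V, Finset.mem_filter] at hv ⊢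
      exact ⟨hv.1, hv.2.1, hv.2.2.trans h.le⟩
    · have : w y ∈ V (w y) := by simp [V, hy]
      have := hc this
      simp only [V, Finset.mem_filter] at this
      linarith [this.2.2]
  have hzero : ∀ x, r x = 0 ↔ w x < w z := by
    intro x
    constructor
    · intro h
      by_contra hc
      push Not at hc
      have : w x ∈ V (w x) := by simp [V, hc]
      rw [Finset.card_eq_zero.1 h] at this
      simp at this
    · intro h
      apply Finset.card_eq_zero.2
      apply Finset.filter_eq_empty_iff.2
      rintro v - ⟨h1, h2⟩
      linarith
  have hrz : r z = 1 := by
    have : V (w z) = {w z} := by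
      ext v
      simp only [V, Finset.mem_filter, Finset.mem_image, Finset.mem_univ, true_and,
        Finset.mem_singleton]
      constructor
      · rintro ⟨-, h1, h2⟩; exact le_antisymm h2 h1
      · rintro rfl; exact ⟨⟨z, rfl⟩, le_rfl, le_rfl⟩
    simp [r, this]
  refine ⟨r, ⟨?_, ?_, ?_⟩, ?_⟩
  · simpa only [hzero] using hz1
  · refine hz2.trans (Finset.card_le_card ?_)
    intro x hx
    have : w x ≤ w z := by simpa using hx
    have := hmono this
    simpa using hrz ▸ this
  · -- downward closed
    have key : ∀ c x, r x = c + 2 → ∃ y, r y = c + 1 := by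
      intro c x hx
      have hzx : w z < w x := by
        by_contra hc
        push Not at hc
        have := hmono hc
        omega
      have hne : (Finset.univ.filter (fun y => w y < w x)).Nonempty := ⟨z, by simpa using hzx⟩
      obtain ⟨y, hy, hy'⟩ := Finset.exists_max_image _ w hne
      have hyx : w y < w x := by simpa using hy
      have hzy : w z ≤ w y := hy' z (by simpa using hzx)
      refine ⟨y, ?_⟩
      have : V (w x) = insert (w x) (V (w y)) := by
        ext v
        simp only [V, Finset.mem_filter, Finset.mem_insert, Finset.mem_image, Finset.mem_univ,
          true_and]
        constructor
        · rintro ⟨⟨u, rfl⟩, h1, h2⟩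
          rcases h2.eq_or_lt with h3 | h3
          · exact Or.inl h3
          · exact Or.inr ⟨⟨u, rfl⟩, h1, hy' u (by simpa using h3)⟩
        · rintro (rfl | ⟨h0, h1, h2⟩)
          · exact ⟨⟨x, rfl⟩, hzx.le, le_rfl⟩
          · exact ⟨h0, h1, h2.trans hyx.le⟩
      have h2 : r x = r y + 1 := by
        simp only [r]
        rw [this, Finset.card_insert_of_notMem]
        simp only [V, Finset.mem_filter]
        rintro ⟨-, -, h⟩
        linarith
      omega
    intro c hc1 hc2
    have key2 : ∀ e c x, 1 ≤ c → r x = c + e → ∃ y, r y = c := by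
      intro e
      induction e with
      | zero => intro c x _ hx; exact ⟨x, hx⟩
      | succ e ih =>
        intro c x hc hx
        obtain ⟨c', rfl⟩ : ∃ c', c = c' + 1 := ⟨c - 1, by omega⟩
        obtain ⟨y, hy⟩ := ih (c' + 2) x (by omega) (by omega)
        exact key c' y hy
    obtain ⟨x, -, hx⟩ := Finset.exists_mem_eq_sup Finset.univ ⟨z, Finset.mem_univ _⟩ r
    exact key2 (r x - c) c x hc1 (by omega)
  · rw [faceW_eq_iff hk hkn]
    intro F hF
    have hex : ∃ u ∈ F, w z ≤ w u := by
      by_contra hc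
      push Not at hc
      have : F ⊆ Finset.univ.filter (fun x => w x < w z) := fun u hu => by simpa using hc u hu
      have := Finset.card_le_card this
      omega
    obtain ⟨u, hu, huz⟩ := hex
    ext x
    rw [mem_Mx_r, mem_Mx]
    constructor
    · rintro ⟨hx, h⟩
      refine ⟨hx, ?_⟩
      have hzx : w z ≤ w x := by
        by_contra hc
        push Not at hc
        have h1 := (hzero x).2 hc
        have h2 := h u hu
        have h3 := hmono huz
        omega
      intro y hy
      by_contra hc
      push Not at hc
      have := hstrict (hzx.trans hc.le) hc
      have := h y hy
      omega
    · rintro ⟨hx, h⟩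
      exact ⟨hx, fun y hy => hmono (h y hy)⟩

/-- the map whose kernel is the direction of a face. -/
noncomputable def phiR {n : ℕ} (r : Fin n → ℕ) :
    (Fin n → ℝ) →ₗ[ℝ] ({x // r x = 0} → ℝ) × (Fin (Finset.univ.sup r) → ℝ) where
  toFun v := (fun x => v x, fun c => ∑ x with r x = c + 1, v x)
  map_add' u v := by
    ext
    · simp
    · simp [Finset.sum_add_distrib]
  map_smul' a v := by
    ext
    · simp
    · simp [Finset.mul_sum]

theorem phiR_ker {n : ℕ} (r : Fin n → ℕ) (v : Fin n → ℝ) :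
    v ∈ LinearMap.ker (phiR r) ↔
      (∀ x, r x = 0 → v x = 0) ∧ ∀ c, 1 ≤ c → ∑ x with r x = c, v x = 0 := by
  rw [LinearMap.mem_ker]
  constructor
  · intro h
    have h1 := congrArg Prod.fst h
    have h2 := congrArg Prod.snd h
    refine ⟨fun x hx => congrFun h1 ⟨x, hx⟩, fun c hc => ?_⟩
    by_cases hcs : c ≤ Finset.univ.sup r
    · have := congrFun h2 ⟨c - 1, by omega⟩
      have e : c - 1 + 1 = c := by omega
      simpa [phiR, e] using this
    · apply Finset.sum_eq_zero
      intro x hx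
      have : r x = c := by simpa using hx
      have h3 : r x ≤ Finset.univ.sup r := Finset.le_sup (Finset.mem_univ x)
      omega
  · rintro ⟨h1, h2⟩
    ext x
    · exact h1 x x.2
    · exact h2 (x + 1) (by omega)

theorem phiR_surj {n k : ℕ} {r : Fin n → ℕ} (hr : GoodR n k r) :
    Function.Surjective (phiR r) := by
  classical
  rintro ⟨a, b⟩
  have : ∀ c : Fin (Finset.univ.sup r), ∃ y, r y = c + 1 :=
    fun c => hr.2.2 (c + 1) (by omega) (by omega)
  choose s hs using this
  refine ⟨fun x => if h : r x = 0 then a ⟨x, h⟩ else ∑ c, if x = s c then b c else 0, ?_⟩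
  ext x
  · simp [phiR, x.2]
  · simp only [phiR, LinearMap.coe_mk, AddHom.coe_mk]
    rw [Finset.sum_eq_single (s x)]
    · rw [dif_neg (by rw [hs]; omega), Finset.sum_eq_single x]
      · simp
      · intro c _ hc
        rw [if_neg]
        intro h
        have := congrArg r h
        rw [hs, hs] at this
        exact hc (Fin.ext (by omega))
      · simp
    · intro y hy hne
      have hy : r y = x + 1 := by simpa using hy
      rw [dif_neg (by omega)]
      apply Finset.sum_eq_zero
      intro c _
      rw [if_neg]
      rintro rfl
      rw [hs] at hy
      apply hne
      congr 1
      exact Fin.ext (by omega)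
    · intro h
      simp [hs] at h

theorem phiR_finrank {n k : ℕ} {r : Fin n → ℕ} (hr : GoodR n k r) :
    (Finset.univ.filter (fun x => r x = 0)).card + Finset.univ.sup r +
      Module.finrank ℝ (LinearMap.ker (phiR r)) = n := by
  have h := LinearMap.finrank_range_add_finrank_ker (phiR r)
  rw [LinearMap.range_eq_top.2 (phiR_surj hr), finrank_top] at h
  simpa [Fintype.card_subtype] using h

theorem faceW_zero {n k : ℕ} {r : Fin n → ℕ} (hr : GoodR n k r) {g : Finset (Fin n) → Fin n → ℝ}
    {F : Finset (Fin n)} (hF : F ∈ (Finset.univ : Finset (Fin n)).powersetCard k)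
    (hg : g F ∈ stdSimplexOn n (Mx (rkW r) F)) {x : Fin n} (hx : r x = 0) : g F x = 0 := by
  apply hg.2.1
  intro h
  have := pos_of_mem_Mx hr (Finset.mem_powersetCard.1 hF).2 h
  omega

theorem simplex_class {n : ℕ} {r : Fin n → ℕ} {F : Finset (Fin n)} {m : Fin n}
    (hm : m ∈ Mx (rkW r) F) {v : Fin n → ℝ} (hv : v ∈ stdSimplexOn n (Mx (rkW r) F)) (c : ℕ) :
    ∑ x with r x = c, v x = if r m = c then 1 else 0 := by
  have hz : ∀ x, r x ≠ r m → v x = 0 := by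
    intro x hx
    apply hv.2.1
    intro h
    rw [mem_Mx_r] at h hm
    exact hx (le_antisymm (hm.2 x h.1) (h.2 m hm.1))
  split_ifs with h
  · rw [← hv.2.2]
    apply Finset.sum_subset (Finset.subset_univ _)
    intro x _ hx
    apply hz
    rw [h]
    simpa using hx
  · apply Finset.sum_eq_zero
    intro x hx
    apply hz
    have : r x = c := by simpa using hx
    omega

theorem faceW_direction {n k : ℕ} (hk : 2 ≤ k) (hkn : k ≤ n) {r : Fin n → ℕ}
    (hr : GoodR n k r) :
    vectorSpan ℝ (faceW n k (rkW r)) = LinearMap.ker (phiR r) := by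
  classical
  obtain ⟨m, hm⟩ := exists_choice hk hkn (rkW r)
  apply le_antisymm
  · rw [vectorSpan_def, Submodule.span_le]
    rintro _ ⟨a, ha, b, hb, rfl⟩
    have key : ∀ a ∈ faceW n k (rkW r), (∀ x, r x = 0 → a x = 0) ∧
        ∀ c, ∑ x with r x = c, a x =
          ∑ F ∈ (Finset.univ : Finset (Fin n)).powersetCard k, if r (m F) = c then (1 : ℝ) else 0 := by
      intro a ha
      obtain ⟨g, hg, rfl⟩ := (Set.mem_finsetSum _ _ _).1 ha
      constructor
      · intro x hx
        rw [Finset.sum_apply]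
        exact Finset.sum_eq_zero fun F hF => faceW_zero hr hF (hg hF) hx
      · intro c
        simp only [Finset.sum_apply]
        rw [Finset.sum_comm]
        exact Finset.sum_congr rfl fun F hF => simplex_class (hm F hF) (hg hF) c
    have ka := key a ha
    have kb := key b hb
    simp only [vsub_eq_sub, SetLike.mem_coe]
    rw [phiR_ker]
    refine ⟨fun x hx => by simp [ka.1 x hx, kb.1 x hx], fun c _ => ?_⟩
    simp only [Pi.sub_apply, Finset.sum_sub_distrib]
    rw [ka.2, kb.2, sub_self]
  · have hdiff : ∀ x y, 1 ≤ r y → r x = r y →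
        (Pi.single x 1 - Pi.single y 1 : Fin n → ℝ) ∈ vectorSpan ℝ (faceW n k (rkW r)) := by
      intro x y hy hxy
      obtain ⟨F, hF, hxF, hyF⟩ := exists_F hk hr hy hxy.le
      have hxF' : x ∈ Mx (rkW r) F := by
        rw [mem_Mx_r] at hyF ⊢
        exact ⟨hxF, fun z hz => hxy ▸ hyF.2 z hz⟩
      have hF' : F ∈ (Finset.univ : Finset (Fin n)).powersetCard k := by simp [hF]
      have hup : ∀ z ∈ Mx (rkW r) F, ∀ G ∈ (Finset.univ : Finset (Fin n)).powersetCard k,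
          Function.update m F z G ∈ Mx (rkW r) G := by
        intro z hz G hG
        by_cases hGF : G = F
        · subst hGF; simpa using hz
        · simpa [hGF] using hm G hG
      have h1 := vsub_mem_vectorSpan ℝ (faceW_sum_mem _ _ (hup x hxF'))
        (faceW_sum_mem _ _ (hup y hyF))
      rw [vsub_eq_sub, ← Finset.sum_sub_distrib, Finset.sum_eq_single F] at h1
      · simpa using h1
      · intro G _ hG
        simp [hG]
      · intro h; exact absurd hF' h
    intro v hv
    rw [phiR_ker] at hv
    have : ∀ c, ∃ y : Fin n, ∀ x, r x = c → r y = c := by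
      intro c
      by_cases h : ∃ y, r y = c
      · obtain ⟨y, hy⟩ := h
        exact ⟨y, fun _ _ => hy⟩
      · exact ⟨⟨0, by omega⟩, fun x hx => absurd ⟨x, hx⟩ h⟩
    choose s hs using this
    have hs' : ∀ x, r (s (r x)) = r x := fun x => hs _ x rfl
    have e : v = ∑ x, v x • (Pi.single x 1 - Pi.single (s (r x)) 1 : Fin n → ℝ) := by
      simp only [smul_sub, Finset.sum_sub_distrib]
      have h2 : ∑ x, v x • (Pi.single (s (r x)) 1 : Fin n → ℝ) = 0 := by
        rw [← Finset.sum_fiberwise_of_maps_to (s := Finset.univ) (t := Finset.univ.image r)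
          (g := r) (fun x _ => Finset.mem_image_of_mem _ (Finset.mem_univ x))]
        apply Finset.sum_eq_zero
        intro c _
        have : ∑ x with r x = c, v x • (Pi.single (s (r x)) 1 : Fin n → ℝ)
            = (∑ x with r x = c, v x) • (Pi.single (s c) 1 : Fin n → ℝ) := by
          rw [Finset.sum_smul]
          apply Finset.sum_congr rfl
          intro x hx
          have : r x = c := by simpa using hx
          rw [this]
        rw [this]
        by_cases hc : 1 ≤ c
        · rw [hv.2 c hc, zero_smul]
        · rw [Finset.sum_eq_zero, zero_smul]
          intro x hx
          have : r x = c := by simpa using hx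
          exact hv.1 x (by omega)
      rw [h2, sub_zero]
      ext i
      simp [Finset.sum_apply, Pi.single_apply]
    rw [e]
    apply Submodule.sum_mem
    intro x _
    by_cases hx : r x = 0
    · simp [hv.1 x hx]
    · apply Submodule.smul_mem
      apply hdiff
      · rw [hs']; omega
      · rw [hs']

theorem setDim_faceW {n k : ℕ} (hk : 2 ≤ k) (hkn : k ≤ n) {r : Fin n → ℕ}
    (hr : GoodR n k r) :
    (Finset.univ.filter (fun x => r x = 0)).card + Finset.univ.sup r +
      setDim (faceW n k (rkW r)) = n := by
  rw [setDim, direction_affineSpan, faceW_direction hk hkn hr]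
  exact phiR_finrank hr

theorem card_faces {n k d : ℕ} (hk : 2 ≤ k) (hkn : k ≤ n) :
    Nat.card {A : Set (Fin n → ℝ) // IsExpFace (genPerm n k) A ∧ setDim A = d} =
    Nat.card {r : Fin n → ℕ // GoodR n k r ∧
      (Finset.univ.filter (fun x => r x = 0)).card + Finset.univ.sup r + d = n} := by
  symm
  apply Nat.card_eq_of_bijective
    (fun r => ⟨faceW n k (rkW r.1), (isExpFace_iff hk hkn _).2 ⟨_, rfl⟩, by
      have := setDim_faceW hk hkn r.2.1
      have := r.2.2
      omega⟩)
  constructor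
  · rintro ⟨r, hr, h1⟩ ⟨r', hr', h2⟩ h
    have := congrArg Subtype.val h
    exact Subtype.ext (r_inj hk hkn hr hr' this)
  · rintro ⟨A, hA, hd⟩
    obtain ⟨w, rfl⟩ := (isExpFace_iff hk hkn _).1 hA
    obtain ⟨r, hr, hrw⟩ := r_surj hk hkn w
    refine ⟨⟨r, hr, ?_⟩, Subtype.ext hrw⟩
    have := setDim_faceW hk hkn hr
    rw [hrw] at this
    omega

theorem card_surj_congr {α β α' β' : Type*} (e : α ≃ α') (f : β ≃ β') :
    Nat.card {g : α → β // Function.Surjective g} =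
      Nat.card {g : α' → β' // Function.Surjective g} := by
  apply Nat.card_congr
  refine (Equiv.arrowCongr e f).subtypeEquiv ?_
  intro g
  simp [Equiv.arrowCongr]

theorem card_surj (a : ℕ) : ∀ (b : ℕ),
    Nat.card {g : Fin a → Fin b // Function.Surjective g} = stirling2 a b * b.factorial := by
  induction a with
  | zero =>
    intro b
    cases b with
    | zero =>
      have : Nat.card {g : Fin 0 → Fin 0 // Function.Surjective g} = 1 := by
        rw [Nat.card_eq_one_iff_unique]
        refine ⟨⟨fun a b => Subtype.ext (Subsingleton.elim _ _)⟩, ⟨⟨id, Function.surjective_id⟩⟩⟩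
      rw [this]; rfl
    | succ b =>
      have : IsEmpty {g : Fin 0 → Fin (b + 1) // Function.Surjective g} := by
        constructor
        rintro ⟨g, hg⟩
        obtain ⟨x, -⟩ := hg 0
        exact x.elim0
      rw [Nat.card_of_isEmpty]
      simp [stirling2]
  | succ a ih =>
    intro b
    cases b with
    | zero =>
      have : IsEmpty {g : Fin (a + 1) → Fin 0 // Function.Surjective g} :=
        ⟨fun g => (g.1 0).elim0⟩
      rw [Nat.card_of_isEmpty]
      simp [stirling2]
    | succ b =>
      classical
      -- split by the value at 0
      let e : {g : Fin (a + 1) → Fin (b + 1) // Function.Surjective g} ≃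
          (Σ y : Fin (b + 1), {h : Fin a → Fin (b + 1) //
            Function.Surjective (Fin.cons y h : Fin (a + 1) → Fin (b + 1))}) :=
        { toFun := fun g => ⟨g.1 0, fun i => g.1 i.succ, by
            have : (Fin.cons (g.1 0) (fun i : Fin a => g.1 i.succ) : Fin (a + 1) → Fin (b + 1))
              = g.1 := Fin.cons_self_tail g.1
            rw [this]; exact g.2⟩
          invFun := fun p => ⟨Fin.cons p.1 p.2.1, p.2.2⟩
          left_inv := fun g => Subtype.ext (Fin.cons_self_tail g.1)
          right_inv := fun p => rfl }
      have hsurj : ∀ (y : Fin (b + 1)) (h : Fin a → Fin (b + 1)),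
          Function.Surjective (Fin.cons y h : Fin (a + 1) → Fin (b + 1)) ↔
            Function.Surjective h ∨ ((∀ x, h x ≠ y) ∧ ∀ z, z ≠ y → ∃ x, h x = z) := by
        intro y h
        constructor
        · intro hs
          have h1 : ∀ z, z ≠ y → ∃ x, h x = z := by
            intro z hz
            obtain ⟨x, hx⟩ := hs z
            induction x using Fin.cases with
            | zero => exact absurd hx.symm hz
            | succ x => exact ⟨x, hx⟩
          by_cases hy : ∃ x, h x = y
          · left
            intro z
            by_cases hz : z = y
            · exact hz ▸ hy
            · exact h1 z hz
          · right
            push Not at hy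
            exact ⟨hy, h1⟩
        · rintro (hs | ⟨-, hs⟩)
          · intro z
            obtain ⟨x, hx⟩ := hs z
            exact ⟨x.succ, hx⟩
          · intro z
            by_cases hz : z = y
            · exact ⟨0, hz.symm⟩
            · obtain ⟨x, hx⟩ := hs z hz
              exact ⟨x.succ, hx⟩
      have hfib : ∀ y : Fin (b + 1), Nat.card {h : Fin a → Fin (b + 1) //
            Function.Surjective (Fin.cons y h : Fin (a + 1) → Fin (b + 1))} =
          stirling2 a (b + 1) * (b + 1).factorial + stirling2 a b * b.factorial := by
        intro y
        have h1 : Nat.card {h : Fin a → Fin (b + 1) //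
            ((∀ x, h x ≠ y) ∧ ∀ z, z ≠ y → ∃ x, h x = z)} =
            Nat.card {g : Fin a → {z : Fin (b + 1) // z ≠ y} // Function.Surjective g} := by
          apply Nat.card_congr
          exact
            { toFun := fun h => ⟨fun x => ⟨h.1 x, h.2.1 x⟩, fun z => by
                obtain ⟨x, hx⟩ := h.2.2 z.1 z.2
                exact ⟨x, Subtype.ext hx⟩⟩
              invFun := fun g => ⟨fun x => (g.1 x).1, fun x => (g.1 x).2, fun z hz => by
                obtain ⟨x, hx⟩ := g.2 ⟨z, hz⟩
                exact ⟨x, congrArg Subtype.val hx⟩⟩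
              left_inv := fun h => rfl
              right_inv := fun g => rfl }
        have h2 : Nat.card {g : Fin a → {z : Fin (b + 1) // z ≠ y} // Function.Surjective g} =
            stirling2 a b * b.factorial := by
          rw [← ih b]
          apply card_surj_congr (Equiv.refl _)
          exact Fintype.equivFinOfCardEq (by simp [Fintype.card_subtype_compl])
        rw [← ih (b + 1), ← h2, ← h1, ← Nat.card_sum]
        apply Nat.card_congr
        refine (Equiv.subtypeEquivRight (hsurj y)).trans (subtypeOrEquiv _ _ ?_)
        rw [Pi.disjoint_iff]
        intro h
        simp only [Prop.disjoint_iff]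
        rintro ⟨hs, h3, -⟩
        obtain ⟨x, hx⟩ := hs y
        exact h3 x hx
      rw [Nat.card_congr e, Nat.card_sigma]
      simp only [hfib]
      simp [stirling2, Nat.factorial_succ]
      ring

theorem card_surj' {α : Type*} [Fintype α] (b : ℕ) :
    Nat.card {g : α → Fin b // Function.Surjective g} =
      stirling2 (Fintype.card α) b * b.factorial := by
  rw [← card_surj]
  exact card_surj_congr (Fintype.equivFin α) (Equiv.refl _)

theorem card_fiber {n k d : ℕ} (A B : Finset (Fin n)) (hAB : Disjoint A B)
    (h1 : A.card < k) (h2 : k ≤ A.card + B.card) (h3 : d + A.card + 1 ≤ n) :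
    Nat.card {r : {r : Fin n → ℕ // GoodR n k r ∧
      (Finset.univ.filter (fun x => r x = 0)).card + Finset.univ.sup r + d = n} //
      (Finset.univ.filter (fun x => r.1 x = 0), Finset.univ.filter (fun x => r.1 x = 1)) = (A, B)}
      = stirling2 (n - A.card - B.card) (n - A.card - d - 1)
        * (n - A.card - d - 1).factorial := by
  classical
  have hc : Fintype.card {x // x ∉ A ∪ B} = n - A.card - B.card := by
    rw [Fintype.card_subtype_compl, Fintype.card_coe, Finset.card_union_of_disjoint hAB,
      Fintype.card_fin, Nat.sub_sub]
  rw [← hc, ← card_surj']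
  symm
  set m := n - A.card - d - 1 with hm
  have hBne : B.Nonempty := by apply Finset.card_pos.1; omega
  let ext : ({x // x ∉ A ∪ B} → Fin m) → Fin n → ℕ := fun f x =>
    if hA : x ∈ A then 0 else if hB : x ∈ B then 1 else
      (f ⟨x, by simp [hA, hB]⟩ : ℕ) + 2
  have ext0 : ∀ f x, ext f x = 0 ↔ x ∈ A := by
    intro f x
    simp only [ext]
    split_ifs with hA hB <;> simp [hA]
  have ext1 : ∀ f x, ext f x = 1 ↔ x ∈ B := by
    intro f x
    simp only [ext]
    split_ifs with hA hB
    · simp [Finset.disjoint_left.1 hAB hA]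
    · simp [hB]
    · simp [hB]
  have ext2 : ∀ f (x : {x // x ∉ A ∪ B}), ext f x = f x + 2 := by
    intro f x
    have := x.2
    simp only [Finset.mem_union, not_or] at this
    simp [ext, this.1, this.2]
  have hle1 : ∀ r : Fin n → ℕ, (∀ x, r x = 0 ↔ x ∈ A) → (∀ x, r x = 1 ↔ x ∈ B) →
      (Finset.univ.filter (fun x => r x ≤ 1)).card = A.card + B.card := by
    intro r hr0 hr1
    rw [← Finset.card_union_of_disjoint hAB]
    congr 1
    ext x
    simp only [Finset.mem_filter, Finset.mem_univ, true_and, Finset.mem_union, ← hr0, ← hr1]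
    omega
  have f0 : ∀ f, Finset.univ.filter (fun x => ext f x = 0) = A := by
    intro f; ext x; simp [ext0]
  have f1 : ∀ f, Finset.univ.filter (fun x => ext f x = 1) = B := by
    intro f; ext x; simp [ext1]
  have hsup : ∀ f, Function.Surjective f → Finset.univ.sup (ext f) = m + 1 := by
    intro f hf
    apply le_antisymm
    · apply Finset.sup_le
      intro x _
      simp only [ext]
      split_ifs with hA hB
      · omega
      · omega
      · have := (f ⟨x, by simp [hA, hB]⟩).2
        omega
    · by_cases hm0 : m = 0
      · obtain ⟨x, hx⟩ := hBne
        have h5 := (ext1 f x).2 hx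
        have : ext f x ≤ Finset.univ.sup (ext f) := Finset.le_sup (Finset.mem_univ x)
        omega
      · obtain ⟨x, hx⟩ := hf ⟨m - 1, by omega⟩
        have h5 := ext2 f x
        rw [hx] at h5
        have : ext f x ≤ Finset.univ.sup (ext f) := Finset.le_sup (Finset.mem_univ x.1)
        simp only at h5
        omega
  have hgood : ∀ f, Function.Surjective f → GoodR n k (ext f) := by
    intro f hf
    refine ⟨by rw [f0]; exact h1, by rw [hle1 _ (ext0 f) (ext1 f)]; exact h2, ?_⟩
    intro c hc1 hc2
    rw [hsup f hf] at hc2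
    by_cases hc : c = 1
    · obtain ⟨x, hx⟩ := hBne
      exact ⟨x, hc ▸ (ext1 f x).2 hx⟩
    · obtain ⟨x, hx⟩ := hf ⟨c - 2, by omega⟩
      refine ⟨x, ?_⟩
      rw [ext2, hx]
      simp only
      omega
  apply Nat.card_eq_of_bijective (fun f => ⟨⟨ext f.1, hgood f.1 f.2, by
    rw [f0, hsup f.1 f.2]; omega⟩, Prod.ext (f0 f.1) (f1 f.1)⟩)
  constructor
  · rintro ⟨f, hf⟩ ⟨g, hg⟩ h
    have h4 : ext f = ext g := congrArg (fun r => r.1.1) h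
    apply Subtype.ext
    funext x
    have h5 := congrFun h4 x
    rw [ext2, ext2] at h5
    exact Fin.ext (Nat.add_right_cancel h5)
  · rintro ⟨⟨r, hr, hd⟩, hAB'⟩
    simp only [Prod.mk.injEq] at hAB'
    obtain ⟨hA, hB⟩ := hAB'
    have r0 : ∀ x, r x = 0 ↔ x ∈ A := by intro x; rw [← hA]; simp
    have r1 : ∀ x, r x = 1 ↔ x ∈ B := by intro x; rw [← hB]; simp
    rw [hA] at hd
    have hs : Finset.univ.sup r = m + 1 := by omega
    have hlt : ∀ x, r x ≤ m + 1 := fun x => hs ▸ Finset.le_sup (Finset.mem_univ x)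
    have h2 : ∀ x : {x // x ∉ A ∪ B}, 2 ≤ r x := by
      intro x
      have := x.2
      simp only [Finset.mem_union, not_or, ← r0, ← r1] at this
      omega
    refine ⟨⟨fun x => ⟨r x - 2, by have := h2 x; have := hlt x; omega⟩, ?_⟩, ?_⟩
    · intro c
      obtain ⟨y, hy⟩ := hr.2.2 (c + 2) (by omega) (by omega)
      refine ⟨⟨y, ?_⟩, Fin.ext ?_⟩
      · simp only [Finset.mem_union, not_or, ← r0, ← r1]
        omega
      · simp [hy]
    · apply Subtype.ext
      apply Subtype.ext
      funext x
      simp only [ext]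
      split_ifs with hA hB
      · exact ((r0 x).2 hA).symm
      · exact ((r1 x).2 hB).symm
      · have := h2 ⟨x, by simp [hA, hB]⟩
        simp only at this
        omega

theorem card_fiber_empty {n k d : ℕ} (A B : Finset (Fin n))
    (h : ¬ (Disjoint A B ∧ A.card < k ∧ k ≤ A.card + B.card ∧ d + A.card + 1 ≤ n)) :
    Nat.card {r : {r : Fin n → ℕ // GoodR n k r ∧
      (Finset.univ.filter (fun x => r x = 0)).card + Finset.univ.sup r + d = n} //
      (Finset.univ.filter (fun x => r.1 x = 0), Finset.univ.filter (fun x => r.1 x = 1)) = (A, B)}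
      = 0 := by
  classical
  rw [Nat.card_eq_zero]
  left
  constructor
  rintro ⟨⟨r, hr, hd⟩, hAB'⟩
  simp only [Prod.mk.injEq] at hAB'
  obtain ⟨hA, hB⟩ := hAB'
  have hdis : Disjoint A B := by
    rw [← hA, ← hB, Finset.disjoint_left]
    intro x hx hy
    simp only [Finset.mem_filter, Finset.mem_univ, true_and] at hx hy
    omega
  have hc : (Finset.univ.filter (fun x => r x ≤ 1)).card = A.card + B.card := by
    rw [← Finset.card_union_of_disjoint hdis, ← hA, ← hB]
    congr 1
    ext x
    simp only [Finset.mem_filter, Finset.mem_univ, true_and, Finset.mem_union]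
    omega
  obtain ⟨h1, h2, h3⟩ := hr
  rw [hc] at h2
  rw [hA] at h1 hd
  apply h
  refine ⟨hdis, h1, h2, ?_⟩
  have hBne : B.Nonempty := by apply Finset.card_pos.1; omega
  obtain ⟨x, hx⟩ := hBne
  rw [← hB] at hx
  have hx : r x = 1 := by simpa using hx
  have : r x ≤ Finset.univ.sup r := Finset.le_sup (Finset.mem_univ x)
  omega

/-- the summand. -/
def GG (n k d i j : ℕ) : ℕ :=
  if i < k ∧ k ≤ i + j ∧ d + i + 1 ≤ n then
    stirling2 (n - i - j) (n - i - d - 1) * (n - i - d - 1).factorial else 0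

theorem card_good {n k d : ℕ} :
    Nat.card {r : Fin n → ℕ // GoodR n k r ∧
      (Finset.univ.filter (fun x => r x = 0)).card + Finset.univ.sup r + d = n} =
    ∑ A : Finset (Fin n), ∑ B ∈ Aᶜ.powerset, GG n k d A.card B.card := by
  classical
  have hfin : Finite {r : Fin n → ℕ // GoodR n k r ∧
      (Finset.univ.filter (fun x => r x = 0)).card + Finset.univ.sup r + d = n} := by
    apply Finite.of_injective (β := Fin n → Fin (n + 1))
      (fun r x => ⟨r.1 x, by
        have h := r.2.2
        have : r.1 x ≤ Finset.univ.sup r.1 := Finset.le_sup (Finset.mem_univ x)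
        omega⟩)
    intro r s h
    apply Subtype.ext
    funext x
    have := congrFun h x
    simpa using this
  rw [← Nat.card_congr (Equiv.sigmaFiberEquiv (fun r : {r : Fin n → ℕ // GoodR n k r ∧
      (Finset.univ.filter (fun x => r x = 0)).card + Finset.univ.sup r + d = n} =>
      (Finset.univ.filter (fun x => r.1 x = 0), Finset.univ.filter (fun x => r.1 x = 1)))),
    Nat.card_sigma, Fintype.sum_prod_type]
  apply Finset.sum_congr rfl
  intro A _
  rw [← Finset.sum_subset (Finset.subset_univ Aᶜ.powerset)]
  · apply Finset.sum_congr rfl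
    intro B hB
    have hdis : Disjoint A B := by
      rw [Finset.mem_powerset] at hB
      exact (disjoint_compl_right (a := A)).mono_right hB
    unfold GG
    split_ifs with h
    · exact card_fiber A B hdis h.1 h.2.1 h.2.2
    · exact card_fiber_empty A B (fun h' => h h'.2)
  · intro B _ hB
    apply card_fiber_empty
    rintro ⟨h, -⟩
    apply hB
    rw [Finset.mem_powerset]
    intro x hx
    rw [Finset.mem_compl]
    exact Finset.disjoint_right.1 h hx

theorem sum_GG {n k d : ℕ} :
    ∑ A : Finset (Fin n), ∑ B ∈ Aᶜ.powerset, GG n k d A.card B.card =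
    ∑ i ∈ Finset.range (n + 1), ∑ j ∈ Finset.range (n - i + 1),
      n.choose i * (n - i).choose j * GG n k d i j := by
  have h1 : ∀ A : Finset (Fin n), ∑ B ∈ Aᶜ.powerset, GG n k d A.card B.card =
      (fun i => ∑ j ∈ Finset.range (n - i + 1), (n - i).choose j * GG n k d i j) A.card := by
    intro A
    rw [Finset.sum_powerset_apply_card (fun j => GG n k d A.card j)]
    simp [Finset.card_compl]
  rw [Finset.sum_congr rfl (fun A _ => h1 A), ← Finset.powerset_univ,
    Finset.sum_powerset_apply_card
      (fun i => ∑ j ∈ Finset.range (n - i + 1), (n - i).choose j * GG n k d i j)]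
  simp [Finset.mul_sum, mul_assoc]

theorem final_sum {n k d : ℕ} (hkn : k ≤ n) :
    ∑ i ∈ Finset.range (n + 1), ∑ j ∈ Finset.range (n - i + 1),
      n.choose i * (n - i).choose j * GG n k d i j =
    ∑ i ∈ Finset.range k, ∑ j ∈ Finset.range (n + 1),
          if k ≤ i + j ∧ i + j ≤ n ∧ d + i + 1 ≤ n then
            n.choose i * (n - i).choose j * stirling2 (n - i - j) (n - i - d - 1)
              * Nat.factorial (n - i - d - 1)
          else 0 := by
  symm
  apply Finset.sum_subset_zero_on_sdiff
  · intro i hi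
    simp only [Finset.mem_range] at hi ⊢
    omega
  · intro i hi
    simp only [Finset.mem_sdiff, Finset.mem_range] at hi
    apply Finset.sum_eq_zero
    intro j _
    rw [GG, if_neg (by omega), mul_zero]
  · intro i hi
    rw [Finset.mem_range] at hi
    symm
    apply Finset.sum_subset_zero_on_sdiff
    · intro j hj
      simp only [Finset.mem_range] at hj ⊢
      omega
    · intro j hj
      simp only [Finset.mem_sdiff, Finset.mem_range] at hj
      rw [if_neg (by omega)]
    · intro j hj
      rw [Finset.mem_range] at hj
      unfold GG
      by_cases h : k ≤ i + j ∧ d + i + 1 ≤ n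
      · rw [if_pos (by omega), if_pos (by omega)]
        ring
      · rw [if_neg (by omega), if_neg (by omega), mul_zero]

/-- the number of d-dimensional nonempty exposed faces of
Π_{n−1}(k−1) equals
∑_{(i,j) : 0≤i≤k−1, k≤i+j≤n} C(n,i)·C(n−i,j)·S(n−i−j, n−i−d−1)·(n−i−d−1)!,
with summands taken to be 0 when n−i−d−1 < 0. -/
theorem genPerm_face_count (n k d : ℕ) (hk : 2 ≤ k) (hkn : k ≤ n) (hd : d ≤ n - 1) :
    Nat.card {A : Set (Fin n → ℝ) // IsExpFace (genPerm n k) A ∧ setDim A = d}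
      = ∑ i ∈ Finset.range k, ∑ j ∈ Finset.range (n + 1),
          if k ≤ i + j ∧ i + j ≤ n ∧ d + i + 1 ≤ n then
            n.choose i * (n - i).choose j * stirling2 (n - i - j) (n - i - d - 1)
              * Nat.factorial (n - i - d - 1)
          else 0 := by
  rw [card_faces hk hkn, card_good, sum_GG, final_sum hkn]
end

section
/- Fix an integer ℓ ≥ 1 and real numbers x_1, …, x_ℓ with x_1 ≠ 0 and S := x_2 + ⋯ + x_ℓ + 1 ≠ 0 (for ℓ = 1, S = 1). For each n ≥ 1 let Π_{n−1} ⊆ ℝ^n be the standard permutahedron, and let ξ^ℓ_{Π_{n−1}}(x_1,…,x_ℓ) be its exponential ℓ-flag polynomial. Then for every real y, the series ∑_{n≥1} ξ^ℓ_{Π_{n−1}}(x_1,…,x_ℓ)·y^n/n! converges absolutely and equals (e^{(S/x_1)(e^{x_1 y} − 1)} − 1)/S. -/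
open Pointwise

/-- The upper set of coordinates of a permutation at threshold `k`. -/
def pfTop {n : ℕ} (σ : Equiv.Perm (Fin n)) (k : ℕ) : Finset (Fin n) :=
  Finset.univ.filter (fun i => k ≤ (σ i : ℕ))

/-- The vertex of the permutahedron given by a permutation. -/
def pfVert {n : ℕ} (σ : Equiv.Perm (Fin n)) : Fin n → ℝ := fun i => ((σ i : ℕ) : ℝ) + 1

/-- The maximum over the permutahedron of the sum of the coordinates in `T`. -/
noncomputable def pfB {n : ℕ} (T : Finset (Fin n)) : ℝ :=
  ∑ v : Fin n, max ((v : ℝ) - ((n : ℝ) - T.card - 1 / 2)) 0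
    + T.card * (((n : ℝ) - T.card - 1 / 2) + 1)

/-- The face of the permutahedron attached to a family of subsets. -/
def pfFace {n : ℕ} (C : Finset (Finset (Fin n))) : Set (Fin n → ℝ) :=
  {x | x ∈ stdPermutahedron n ∧ ∀ T ∈ C, ∑ i ∈ T, x i = pfB T}

/-- Chains of proper nonempty subsets. -/
def pfChain {n : ℕ} (C : Finset (Finset (Fin n))) : Prop :=
  IsChain (· ⊆ ·) (C : Set (Finset (Fin n))) ∧ ∅ ∉ C ∧ Finset.univ ∉ C

lemma mem_pfTop {n : ℕ} {σ : Equiv.Perm (Fin n)} {k : ℕ} {i : Fin n} :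
    i ∈ pfTop σ k ↔ k ≤ (σ i : ℕ) := by
  simp [pfTop]

lemma pfVert_mem {n : ℕ} (σ : Equiv.Perm (Fin n)) : pfVert σ ∈ stdPermutahedron n :=
  subset_convexHull ℝ _ ⟨σ, fun _ => rfl⟩

lemma pfTop_card {n : ℕ} (σ : Equiv.Perm (Fin n)) (k : ℕ) : (pfTop σ k).card = n - k := by
  have h : (pfTop σ k).card = (Finset.univ.filter (fun i : Fin n => k ≤ (i : ℕ))).card := by
    apply Finset.card_bij (fun i _ => σ i)
    · intro a ha
      simpa [pfTop] using ha
    · intro a _ b _ h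
      exact σ.injective h
    · intro b hb
      refine ⟨σ.symm b, ?_, by simp⟩
      simpa [pfTop] using hb
  rw [h]
  have h2 : (Finset.univ.filter (fun i : Fin n => k ≤ (i : ℕ))).card
      = (Finset.Ico k n).card := by
    apply Finset.card_bij (fun (i : Fin n) _ => (i : ℕ))
    · intro a ha
      simp at ha ⊢
      exact ha
    · intro a _ b _ h
      exact Fin.ext h
    · intro b hb
      simp at hb
      exact ⟨⟨b, hb.2⟩, by simpa using hb.1, rfl⟩
  rw [h2, Nat.card_Ico]

lemma pf_vert_sum_le {n : ℕ} (σ : Equiv.Perm (Fin n)) (T : Finset (Fin n)) :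
    ∑ i ∈ T, pfVert σ i ≤ pfB T ∧
      (∑ i ∈ T, pfVert σ i = pfB T ↔ T = pfTop σ (n - T.card)) := by
  set κ : ℝ := (n : ℝ) - T.card - 1 / 2 with hκ
  have hT : T.card ≤ n := by simpa using Finset.card_le_univ T
  have e1 : ∑ i ∈ T, pfVert σ i
      = (∑ i, if i ∈ T then ((σ i : ℕ) : ℝ) - κ else 0) + T.card * (κ + 1) := by
    rw [← Finset.sum_filter, Finset.filter_mem_eq_inter, Finset.univ_inter]
    rw [← nsmul_eq_mul, ← Finset.sum_const, ← Finset.sum_add_distrib]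
    apply Finset.sum_congr rfl
    intro i _
    simp only [pfVert]
    ring
  have e2 : pfB T = (∑ i, max (((σ i : ℕ) : ℝ) - κ) 0) + T.card * (κ + 1) := by
    unfold pfB
    rw [Equiv.sum_comp σ (fun v : Fin n => max ((v : ℝ) - κ) 0)]
  have hle : ∀ i ∈ (Finset.univ : Finset (Fin n)),
      (if i ∈ T then ((σ i : ℕ) : ℝ) - κ else 0) ≤ max (((σ i : ℕ) : ℝ) - κ) 0 := by
    intro i _
    split_ifs
    · exact le_max_left _ _
    · exact le_max_right _ _
  have hcast : ((n - T.card : ℕ) : ℝ) = (n : ℝ) - T.card := by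
    push_cast [hT]; ring
  have hk1 : ∀ m : ℕ, n - T.card ≤ m → κ < m := by
    intro m hm
    have : ((n - T.card : ℕ) : ℝ) ≤ m := by exact_mod_cast hm
    rw [hcast] at this
    rw [hκ]; linarith
  have hk2 : ∀ m : ℕ, ¬ n - T.card ≤ m → (m : ℝ) < κ := by
    intro m hm
    have : m + 1 ≤ n - T.card := by omega
    have : ((m : ℝ) + 1) ≤ ((n - T.card : ℕ) : ℝ) := by exact_mod_cast this
    rw [hcast] at this
    rw [hκ]; linarith
  refine ⟨?_, ?_⟩
  · rw [e1, e2]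
    have := Finset.sum_le_sum hle
    linarith
  · rw [e1, e2, add_left_inj, Finset.sum_eq_sum_iff_of_le hle]
    constructor
    · intro h
      ext i
      have hi := h i (Finset.mem_univ i)
      simp only [pfTop, Finset.mem_filter, Finset.mem_univ, true_and]
      by_cases hm : i ∈ T
      · simp only [hm, if_true, true_iff] at hi ⊢
        by_contra hc
        have := hk2 _ hc
        have h3 := le_max_right (((σ i : ℕ) : ℝ) - κ) 0
        rw [← hi] at h3
        linarith
      · simp only [hm, if_false, false_iff] at hi ⊢
        intro hc
        have := hk1 _ hc
        have h3 := le_max_left (((σ i : ℕ) : ℝ) - κ) 0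
        rw [← hi] at h3
        linarith
    · intro h i _
      by_cases hm : i ∈ T
      · have hm' := hm
        rw [h] at hm'
        simp only [pfTop, Finset.mem_filter, Finset.mem_univ, true_and] at hm'
        have := hk1 _ hm'
        rw [if_pos hm, max_eq_left (by linarith)]
      · have hm' := hm
        rw [h] at hm'
        simp only [pfTop, Finset.mem_filter, Finset.mem_univ, true_and] at hm'
        have := hk2 _ hm'
        rw [if_neg hm, max_eq_right (by linarith)]

lemma pf_sum_le {n : ℕ} (T : Finset (Fin n)) {x : Fin n → ℝ} (hx : x ∈ stdPermutahedron n) :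
    ∑ i ∈ T, x i ≤ pfB T := by
  have hc : Convex ℝ {x : Fin n → ℝ | (∑ i ∈ T, LinearMap.proj (R := ℝ) (φ := fun _ => ℝ) i) x ≤ pfB T} :=
    convex_halfSpace_le (LinearMap.isLinear _) _
  have := convexHull_min (s := {w | ∃ σ : Equiv.Perm (Fin n), ∀ i, w i = ((σ i : ℕ) : ℝ) + 1})
    (by
      rintro w ⟨σ, hw⟩
      have : w = pfVert σ := funext hw
      subst this
      simpa using (pf_vert_sum_le σ T).1) hc hx
  simpa using this

lemma pf_sum_univ {n : ℕ} {x : Fin n → ℝ} (hx : x ∈ stdPermutahedron n) :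
    ∑ i, x i = pfB (Finset.univ : Finset (Fin n)) := by
  have hc : Convex ℝ {x : Fin n → ℝ | (∑ i, LinearMap.proj (R := ℝ) (φ := fun _ => ℝ) i) x = pfB (Finset.univ : Finset (Fin n))} :=
    convex_hyperplane (LinearMap.isLinear _) _
  have := convexHull_min (s := {w | ∃ σ : Equiv.Perm (Fin n), ∀ i, w i = ((σ i : ℕ) : ℝ) + 1})
    (by
      rintro w ⟨σ, hw⟩
      have : w = pfVert σ := funext hw
      subst this
      have := ((pf_vert_sum_le σ Finset.univ).2).2 (by ext i; simp [pfTop])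
      simpa using this) hc hx
  simpa using this

lemma pf_vert_mem_face {n : ℕ} {σ : Equiv.Perm (Fin n)} {C : Finset (Finset (Fin n))} :
    pfVert σ ∈ pfFace C ↔ ∀ T ∈ C, T = pfTop σ (n - T.card) := by
  constructor
  · intro h T hT
    exact ((pf_vert_sum_le σ T).2).1 (h.2 T hT)
  · intro h
    exact ⟨pfVert_mem σ, fun T hT => ((pf_vert_sum_le σ T).2).2 (h T hT)⟩

/-- generic description of a maximizer set -/
lemma pf_argmax {n : ℕ} {ι : Type*} (L : (Fin n → ℝ) →ₗ[ℝ] ℝ) (a : ℝ) (s : Finset ι)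
    (g : ι → ℝ) (T : ι → Finset (Fin n)) (hg : ∀ k ∈ s, 0 ≤ g k)
    (hL : ∀ x ∈ stdPermutahedron n, L x = a + ∑ k ∈ s, g k * ∑ i ∈ T k, x i)
    (x0 : Fin n → ℝ) (hx0 : x0 ∈ stdPermutahedron n)
    (h0 : ∀ k ∈ s, ∑ i ∈ T k, x0 i = pfB (T k)) :
    {x ∈ stdPermutahedron n | ∀ y ∈ stdPermutahedron n, L y ≤ L x}
      = {x ∈ stdPermutahedron n | ∀ k ∈ s, 0 < g k → ∑ i ∈ T k, x i = pfB (T k)} := by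
  have hle : ∀ x ∈ stdPermutahedron n, ∀ k ∈ s, g k * ∑ i ∈ T k, x i ≤ g k * pfB (T k) :=
    fun x hx k hk => mul_le_mul_of_nonneg_left (pf_sum_le _ hx) (hg k hk)
  have hL0 : L x0 = a + ∑ k ∈ s, g k * pfB (T k) := by
    rw [hL x0 hx0]
    congr 1
    exact Finset.sum_congr rfl fun k hk => by rw [h0 k hk]
  ext x
  constructor
  · rintro ⟨hx, h⟩
    refine ⟨hx, fun k hk hgk => ?_⟩
    have h1 := h x0 hx0
    rw [hL0, hL x hx] at h1
    have h2 := Finset.sum_le_sum (hle x hx)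
    have h3 := (Finset.sum_eq_sum_iff_of_le (hle x hx)).1 (by linarith) k hk
    exact mul_left_cancel₀ hgk.ne' h3
  · rintro ⟨hx, h⟩
    refine ⟨hx, fun y hy => ?_⟩
    rw [hL y hy, hL x hx]
    have h2 := Finset.sum_le_sum (hle y hy)
    have h3 : ∑ k ∈ s, g k * ∑ i ∈ T k, x i = ∑ k ∈ s, g k * pfB (T k) := by
      apply Finset.sum_congr rfl
      intro k hk
      rcases (hg k hk).eq_or_lt with h4 | h4
      · rw [← h4]; simp
      · rw [h k hk h4]
    linarith

lemma pf_chain_perm {n : ℕ} {C : Finset (Finset (Fin n))} (hC : pfChain C) :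
    ∃ σ : Equiv.Perm (Fin n), ∀ T ∈ C, T = pfTop σ (n - T.card) := by
  classical
  let c : Fin n → ℕ := fun i => (C.filter (fun T => i ∈ T)).card
  let τ := Tuple.sort c
  have hτ : Monotone (c ∘ τ) := Tuple.monotone_sort c
  refine ⟨τ.symm, fun T hT => ?_⟩
  -- T is an upper set
  have hup : ∀ i ∈ T, ∀ j, j ∉ T → τ.symm j < τ.symm i := by
    intro i hi j hj
    by_contra hcon
    push Not at hcon
    have h1 : c i ≤ c j := by
      have := hτ hcon
      simpa using this
    have h2 : c j < c i := by
      apply Finset.card_lt_card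
      rw [Finset.ssubset_iff_of_subset]
      · exact ⟨T, by simp [hT, hi], by simp [hj]⟩
      · intro U hU
        simp only [Finset.mem_filter] at hU ⊢
        refine ⟨hU.1, ?_⟩
        rcases hC.1.total hU.1 hT with h | h
        · exact absurd (h hU.2) hj
        · exact h hi
    omega
  have hcard : ∀ k, (pfTop τ.symm k).card = n - k := pfTop_card _
  have hTn : T.card ≤ n := by simpa using Finset.card_le_univ T
  have hc2 : (pfTop τ.symm (n - T.card)).card = T.card := by rw [hcard]; omega
  -- comparable
  by_cases hsub : T ⊆ pfTop τ.symm (n - T.card)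
  · exact Finset.eq_of_subset_of_card_le hsub hc2.le
  · obtain ⟨i, hi, hi2⟩ := Finset.not_subset.1 hsub
    have : pfTop τ.symm (n - T.card) ⊆ T := by
      intro j hj
      by_contra hjT
      have := hup i hi j hjT
      simp only [pfTop, Finset.mem_filter, Finset.mem_univ, true_and] at hj hi2
      have h3 : (τ.symm j : ℕ) < τ.symm i := this
      omega
    exact (Finset.eq_of_subset_of_card_le this hc2.ge).symm

lemma pf_face_nonempty {n : ℕ} {C : Finset (Finset (Fin n))} (hC : pfChain C) :
    (pfFace C).Nonempty := by
  obtain ⟨σ, hσ⟩ := pf_chain_perm hC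
  exact ⟨pfVert σ, pf_vert_mem_face.2 hσ⟩

lemma pf_face_exp {n : ℕ} {C : Finset (Finset (Fin n))} (hC : pfChain C) :
    IsExpFace (stdPermutahedron n) (pfFace C) := by
  refine ⟨pf_face_nonempty hC, ∑ T ∈ C, ∑ i ∈ T, LinearMap.proj i, ?_⟩
  obtain ⟨x0, hx0⟩ := pf_face_nonempty hC
  rw [pf_argmax _ 0 C (fun _ => 1) id (by simp) (by intro x _; simp) x0 hx0.1
    (fun T hT => hx0.2 T hT)]
  ext x
  simp [pfFace]

lemma pfTop_anti {n : ℕ} (σ : Equiv.Perm (Fin n)) {j k : ℕ} (h : j ≤ k) :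
    pfTop σ k ⊆ pfTop σ j := by
  intro i hi
  simp only [pfTop, Finset.mem_filter, Finset.mem_univ, true_and] at hi ⊢
  omega

lemma pf_chain_tops {n : ℕ} (σ : Equiv.Perm (Fin n)) (s : Finset ℕ)
    (hs : ∀ k ∈ s, k + 1 < n) :
    pfChain (s.image (fun k => pfTop σ (k + 1))) := by
  refine ⟨?_, ?_, ?_⟩
  · intro A hA B hB _
    simp only [Finset.coe_image, Set.mem_image, Finset.mem_coe] at hA hB
    obtain ⟨j, _, rfl⟩ := hA
    obtain ⟨k, _, rfl⟩ := hB
    rcases le_total j k with h | h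
    · exact Or.inr (pfTop_anti σ (by omega))
    · exact Or.inl (pfTop_anti σ (by omega))
  · intro h
    obtain ⟨k, hk, h⟩ := Finset.mem_image.1 h
    have := congrArg Finset.card h
    rw [pfTop_card] at this
    have := hs k hk
    simp at *
    omega
  · intro h
    obtain ⟨k, hk, h⟩ := Finset.mem_image.1 h
    have := congrArg Finset.card h
    rw [pfTop_card] at this
    have := hs k hk
    simp at *
    omega

lemma pf_exp_face {n : ℕ} {A : Set (Fin n → ℝ)} (hA : IsExpFace (stdPermutahedron n) A) :
    ∃ C, pfChain C ∧ A = pfFace C := by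
  obtain ⟨_, L, rfl⟩ := hA
  let c : Fin n → ℝ := fun i => L (Pi.single i 1)
  let τ := Tuple.sort c
  have hτ : Monotone (c ∘ τ) := Tuple.monotone_sort c
  let f : ℕ → ℝ := fun k => if h : k < n then c (τ ⟨k, h⟩) else 0
  let g : ℕ → ℝ := fun k => f (k + 1) - f k
  have hcf : ∀ i, c i = f (τ.symm i) := by
    intro i
    simp [f]
  have hc : ∀ i, c i = f 0 + ∑ k ∈ Finset.range (n - 1),
      if i ∈ pfTop τ.symm (k + 1) then g k else 0 := by
    intro i
    rw [hcf, ← Finset.sum_filter]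
    have : (Finset.range (n - 1)).filter (fun k => i ∈ pfTop τ.symm (k + 1))
        = Finset.range (τ.symm i) := by
      ext k
      have := (τ.symm i).isLt
      simp only [pfTop, Finset.mem_filter, Finset.mem_univ, true_and, Finset.mem_range]
      omega
    rw [this, Finset.sum_range_sub]
    ring
  have hLc : ∀ x, L x = ∑ i, x i * c i := by
    intro x
    conv_lhs => rw [LinearMap.pi_apply_eq_sum_univ L x]
    apply Finset.sum_congr rfl
    intro i _
    simp only [smul_eq_mul, c]
    congr 2
    ext j
    simp [Pi.single_apply, eq_comm]
  have hg : ∀ k ∈ Finset.range (n - 1), 0 ≤ g k := by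
    intro k hk
    have hk := Finset.mem_range.1 hk
    have h1 : k < n := by omega
    have h2 : k + 1 < n := by omega
    simp only [g, f, h1, h2, dif_pos, sub_nonneg]
    exact hτ (by simp [Fin.le_def])
  have key := pf_argmax L (f 0 * pfB Finset.univ) (Finset.range (n - 1)) g
    (fun k => pfTop τ.symm (k + 1)) hg (by
      intro x hx
      rw [hLc, ← pf_sum_univ hx]
      simp_rw [hc, mul_add, Finset.sum_add_distrib, Finset.mul_sum]
      rw [Finset.sum_comm]
      congr 1
      · apply Finset.sum_congr rfl; intros; ring
      · apply Finset.sum_congr rfl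
        intro k _
        rw [← Finset.sum_subset (Finset.subset_univ (pfTop τ.symm (k + 1)))]
        · apply Finset.sum_congr rfl
          intro i hi
          rw [if_pos hi, mul_comm]
        · intro i _ hi
          rw [if_neg hi, mul_zero]) (pfVert τ.symm) (pfVert_mem _) (by
      intro k hk
      have hk := Finset.mem_range.1 hk
      apply ((pf_vert_sum_le _ _).2).2
      rw [pfTop_card]
      congr 1
      omega)
  refine ⟨((Finset.range (n - 1)).filter (fun k => 0 < g k)).image
    (fun k => pfTop τ.symm (k + 1)), pf_chain_tops _ _ ?_, ?_⟩
  · intro k hk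
    have := Finset.mem_range.1 (Finset.mem_filter.1 hk).1
    omega
  · rw [key]
    ext x
    simp only [pfFace, Set.mem_ofPred_eq, Finset.forall_mem_image, Finset.mem_filter, and_imp]

lemma pf_face_subset {n : ℕ} {C D : Finset (Finset (Fin n))} (hC : pfChain C) (hD : pfChain D) :
    pfFace C ⊆ pfFace D ↔ D ⊆ C := by
  constructor
  · intro h T hT
    by_contra hTC
    obtain ⟨σ, hσ⟩ := pf_chain_perm hC
    have h1 := h (pf_vert_mem_face.2 hσ)
    have h2 := pf_vert_mem_face.1 h1 T hT
    have hT0 : T.card ≠ 0 := by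
      intro h0
      exact hD.2.1 (Finset.card_eq_zero.1 h0 ▸ hT)
    have hTn : T.card < n := by
      have : T.card ≠ n := by
        intro h0
        apply hD.2.2
        rw [← (Finset.card_eq_iff_eq_univ T).1 (by simpa using h0)]
        exact hT
      have := Finset.card_le_univ T
      simp at this
      omega
    let p : Fin n := ⟨n - T.card, by omega⟩
    let q : Fin n := ⟨n - T.card - 1, by omega⟩
    have hv : pfVert (σ.trans (Equiv.swap p q)) ∈ pfFace C := by
      apply pf_vert_mem_face.2
      intro U hU
      have h3 := hσ U hU
      conv_lhs => rw [h3]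
      have hne : U.card ≠ T.card := by
        intro h4
        rw [h4, ← h2] at h3
        exact hTC (h3 ▸ hU)
      have hUn : U.card ≤ n := by simpa using Finset.card_le_univ U
      ext i
      rw [mem_pfTop, mem_pfTop, Equiv.trans_apply, Equiv.swap_apply_def]
      split_ifs with h5 h6
      · rw [h5]; simp only [p, q]; omega
      · rw [h6]; simp only [p, q]; omega
      · rfl
    have h4 := pf_vert_mem_face.1 (h hv) T hT
    have h5 : σ.symm p ∈ T := by
      rw [h2, mem_pfTop]; simp only [p, Equiv.apply_symm_apply]; exact le_rfl
    rw [h4] at h5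
    rw [mem_pfTop, Equiv.trans_apply, Equiv.apply_symm_apply, Equiv.swap_apply_left] at h5
    simp only [q] at h5
    omega
  · intro h x hx
    exact ⟨hx.1, fun T hT => hx.2 T (h hT)⟩

lemma pf_face_inj {n : ℕ} {C D : Finset (Finset (Fin n))} (hC : pfChain C) (hD : pfChain D)
    (h : pfFace C = pfFace D) : C = D :=
  Finset.Subset.antisymm ((pf_face_subset hD hC).1 h.ge) ((pf_face_subset hC hD).1 h.le)

lemma pfChain_mono {n : ℕ} {C D : Finset (Finset (Fin n))} (hD : pfChain D) (h : C ⊆ D) :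
    pfChain C :=
  ⟨hD.1.mono (by exact_mod_cast h), fun h1 => hD.2.1 (h h1), fun h1 => hD.2.2 (h h1)⟩

lemma pf_dim_lt {n : ℕ} {C D : Finset (Finset (Fin n))} (hD : pfChain D) (h : C ⊂ D) :
    setDim (pfFace D) < setDim (pfFace C) := by
  have hC := pfChain_mono hD h.1
  have hsub : pfFace D ⊆ pfFace C := (pf_face_subset hD hC).2 h.1
  have hle := affineSpan_mono ℝ hsub
  apply Submodule.finrank_lt_finrank_of_lt
  refine lt_of_le_of_ne (AffineSubspace.direction_le hle) ?_
  intro heq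
  have hne : (affineSpan ℝ (pfFace D) : Set (Fin n → ℝ)).Nonempty :=
    (pf_face_nonempty hD).mono (subset_affineSpan ℝ _)
  have heq2 : affineSpan ℝ (pfFace D) = affineSpan ℝ (pfFace C) :=
    AffineSubspace.eq_of_direction_eq_of_nonempty_of_le heq hne hle
  have : pfFace C ⊆ pfFace D := by
    intro x hx
    refine ⟨hx.1, fun T hT => ?_⟩
    have hx2 : x ∈ affineSpan ℝ (pfFace D) := heq2 ▸ subset_affineSpan ℝ _ hx
    let φ : (Fin n → ℝ) →ₗ[ℝ] ℝ := ∑ i ∈ T, LinearMap.proj i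
    let A : AffineSubspace ℝ (Fin n → ℝ) :=
      (AffineSubspace.mk' (pfB T) (⊥ : Submodule ℝ ℝ)).comap φ.toAffineMap
    have hA : ∀ z, z ∈ A ↔ ∑ i ∈ T, z i = pfB T := by
      intro z
      simp [A, φ, AffineSubspace.mem_comap, AffineSubspace.mem_mk', sub_eq_zero]
    have : affineSpan ℝ (pfFace D) ≤ A := by
      apply affineSpan_le_of_subset_coe
      intro z hz
      exact (hA z).2 (hz.2 T hT)
    exact (hA x).1 (this hx2)
  exact h.2 ((pf_face_subset hC hD).1 this)

lemma pf_dim_add {n : ℕ} (k : ℕ) : ∀ {C D : Finset (Finset (Fin n))}, pfChain D → C ⊆ D →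
    (D \ C).card = k → setDim (pfFace D) + k ≤ setDim (pfFace C) := by
  induction k with
  | zero =>
    intro C D hD h hk
    have : D ⊆ C := by
      rw [Finset.card_eq_zero, Finset.sdiff_eq_empty_iff_subset] at hk
      exact hk
    rw [Finset.Subset.antisymm h this]
    omega
  | succ k ih =>
    intro C D hD h hk
    have hne : (D \ C).Nonempty := by
      rw [← Finset.card_pos]; omega
    obtain ⟨T, hT⟩ := hne
    have hT' := Finset.mem_sdiff.1 hT
    have hs : D.erase T ⊂ D := Finset.erase_ssubset hT'.1
    have h1 := pf_dim_lt hD hs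
    have h2 := ih (C := C) (pfChain_mono hD hs.1)
      (fun U hU => Finset.mem_erase.2 ⟨fun h0 => hT'.2 (h0 ▸ hU), h hU⟩) (by
        rw [Finset.erase_sdiff_comm, Finset.card_erase_of_mem hT, hk]; rfl)
    omega

lemma pf_dim_empty {n : ℕ} (hn : 0 < n) : setDim (pfFace (∅ : Finset (Finset (Fin n)))) < n := by
  have : setDim (pfFace (∅ : Finset (Finset (Fin n)))) < Module.finrank ℝ (Fin n → ℝ) := by
    apply Submodule.finrank_lt
    rw [Ne, Submodule.eq_top_iff']
    intro hall
    let φ : (Fin n → ℝ) →ₗ[ℝ] ℝ := ∑ i, LinearMap.proj i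
    have hle : (affineSpan ℝ (pfFace (∅ : Finset (Finset (Fin n))))).direction
        ≤ LinearMap.ker φ := by
      rw [direction_affineSpan, vectorSpan_def, Submodule.span_le]
      rintro _ ⟨x, hx, y, hy, rfl⟩
      have h1 := pf_sum_univ hx.1
      have h2 := pf_sum_univ hy.1
      simp [φ, h1, h2]
    have := hle (hall (Pi.single ⟨0, hn⟩ 1))
    simp [φ] at this
  simpa using this

lemma pf_dim {n : ℕ} (hn : 0 < n) {C : Finset (Finset (Fin n))} (hC : pfChain C) :
    setDim (pfFace C) + C.card + 1 = n := by
  obtain ⟨σ, hσ⟩ := pf_chain_perm hC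
  set M := (Finset.range (n - 1)).image (fun k => pfTop σ (k + 1)) with hM
  have hMc : pfChain M := pf_chain_tops _ _ (by
    intro k hk
    have := Finset.mem_range.1 hk
    omega)
  have hMcard : M.card = n - 1 := by
    rw [hM, Finset.card_image_of_injOn, Finset.card_range]
    intro j hj k hk h
    have h1 := congrArg Finset.card h
    have hj := Finset.mem_range.1 hj
    have hk := Finset.mem_range.1 hk
    simp only [pfTop_card] at h1
    omega
  have hCM : C ⊆ M := by
    intro T hT
    have hT0 : T.card ≠ 0 := by
      intro h0
      exact hC.2.1 (Finset.card_eq_zero.1 h0 ▸ hT)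
    have hTn : T.card < n := by
      have : T.card ≠ n := by
        intro h0
        apply hC.2.2
        rw [← (Finset.card_eq_iff_eq_univ T).1 (by simpa using h0)]
        exact hT
      have := Finset.card_le_univ T
      simp at this
      omega
    rw [hM, Finset.mem_image]
    refine ⟨n - T.card - 1, Finset.mem_range.2 (by omega), ?_⟩
    conv_rhs => rw [hσ T hT]
    congr 1
    omega
  have h1 := pf_dim_add _ hMc hCM rfl
  have h2 := pf_dim_add _ hC (Finset.empty_subset C) rfl
  have h3 := pf_dim_empty hn
  have h4 : (M \ C).card = M.card - C.card := Finset.card_sdiff_of_subset hCM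
  have h5 := Finset.card_le_card hCM
  simp only [Finset.sdiff_empty] at h2
  omega

lemma pf_flagCount {n : ℕ} (hn : 0 < n) (l : ℕ) (s : Fin l → ℕ) :
    flagCount (stdPermutahedron n) l s =
      Nat.card {K : Fin l → Finset (Finset (Fin n)) //
        (∀ i, pfChain (K i) ∧ (K i).card + s i + 1 = n) ∧ Antitone K} := by
  symm
  unfold flagCount
  refine Nat.card_congr (Equiv.ofBijective
    (fun K => ⟨fun i => pfFace (K.1 i), ?_, ?_⟩) ⟨?_, ?_⟩)
  · intro i
    have h := K.2.1 i
    refine ⟨pf_face_exp h.1, ?_⟩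
    have := pf_dim hn h.1
    change setDim (pfFace (K.1 i)) = s i
    omega
  · intro i j hij
    exact (pf_face_subset (K.2.1 i).1 (K.2.1 j).1).2 (K.2.2 hij)
  · intro K K' h
    apply Subtype.ext
    funext i
    exact pf_face_inj (K.2.1 i).1 (K'.2.1 i).1 (congrFun (congrArg Subtype.val h) i)
  · rintro ⟨A, hA, hA2⟩
    choose K hK hK2 using fun i => pf_exp_face (hA i).1
    refine ⟨⟨K, fun i => ⟨hK i, ?_⟩, fun i j hij => ?_⟩, ?_⟩
    · have := pf_dim hn (hK i)
      rw [← hK2 i, (hA i).2] at this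
      omega
    · apply (pf_face_subset (hK i) (hK j)).1
      rw [← hK2 i, ← hK2 j]
      exact hA2 i j hij
    · apply Subtype.ext
      funext i
      exact (hK2 i).symm

open Classical in
lemma pf_flagCount' {n : ℕ} (hn : 0 < n) (l : ℕ) (s : Fin l → ℕ) :
    flagCount (stdPermutahedron n) l s =
      ∑ K : Fin l → Finset (Finset (Fin n)),
        if (∀ i, pfChain (K i) ∧ (K i).card + s i + 1 = n) ∧ Antitone K then 1 else 0 := by
  rw [pf_flagCount hn, Nat.card_eq_fintype_card, Fintype.card_subtype, Finset.card_filter]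

open Classical in
lemma pf_xi {n : ℕ} (hn : 0 < n) (l : ℕ) (x : Fin (l + 1) → ℝ) :
    xiFlag (stdPermutahedron n) l x =
      ∑ K : Fin (l + 1) → Finset (Finset (Fin n)),
        if pfChain (K 0) ∧ Antitone K then
          x 0 ^ (n - 1 - (K 0).card) / (Nat.factorial ((K 0).card + 1)) *
            ∏ i : Fin l, x i.succ ^ ((K i.castSucc).card - (K i.succ).card) else 0 := by
  unfold xiFlag
  have h1 : ∀ s : Fin (l + 1) → Fin n,
      (if Monotone s then
        ((flagCount (stdPermutahedron n) (l + 1) (fun i => (s i : ℕ)) : ℝ) /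
            (Nat.factorial (n - (s 0 : ℕ)))) *
          ∏ i : Fin (l + 1), x i ^ (if (i : ℕ) = 0 then (s i : ℕ) else
            (s i : ℕ) - (s ⟨(i : ℕ) - 1, lt_of_le_of_lt (Nat.sub_le _ _) i.isLt⟩ : ℕ))
      else 0) = ∑ K : Fin (l + 1) → Finset (Finset (Fin n)),
        if Monotone s ∧ (∀ i, pfChain (K i) ∧ (K i).card + s i + 1 = n) ∧ Antitone K then
          (1 / (Nat.factorial (n - (s 0 : ℕ))) : ℝ) * 
            (x 0 ^ (s 0 : ℕ) * ∏ i : Fin l, x i.succ ^ ((s i.succ : ℕ) - (s i.castSucc : ℕ)))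
        else 0 := by
    intro s
    by_cases hs : Monotone s
    · simp only [hs, if_true, true_and]
      rw [pf_flagCount' hn, Fin.prod_univ_succ, ← Finset.sum_filter]
      push_cast
      rw [← Finset.sum_filter, Finset.sum_const, Finset.sum_const, nsmul_eq_mul, nsmul_eq_mul]
      have : ∀ i : Fin l, (⟨((i.succ : Fin (l + 1)) : ℕ) - 1,
          lt_of_le_of_lt (Nat.sub_le _ _) i.succ.isLt⟩ : Fin (l + 1)) = i.castSucc := by
        intro i; ext; simp
      simp only [this]
      simp
      ring
    · simp [hs]
  rw [Finset.sum_congr rfl fun s _ => h1 s, Finset.sum_comm]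
  apply Finset.sum_congr rfl
  intro K _
  by_cases hK : pfChain (K 0) ∧ Antitone K
  · have hch : ∀ i, pfChain (K i) := fun i => pfChain_mono hK.1 (hK.2 (Fin.zero_le i))
    have hcd : ∀ i, (K i).card + 1 ≤ n := fun i => by
      have := pf_dim hn (hch i); omega
    let s : Fin (l + 1) → Fin n := fun i => ⟨n - 1 - (K i).card, by omega⟩
    have hmono : Monotone s := by
      intro i j hij
      have := Finset.card_le_card (hK.2 hij)
      simp only [s, Fin.mk_le_mk]
      omega
    rw [Finset.sum_eq_single s]
    · rw [if_pos, if_pos hK]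
      · have e0 : n - (s 0 : ℕ) = (K 0).card + 1 := by
          have := hcd 0
          simp only [s]; omega
        rw [e0]
        have e1 : ∀ i : Fin l, (s i.succ : ℕ) - (s i.castSucc : ℕ)
            = (K i.castSucc).card - (K i.succ).card := by
          intro i
          have := hcd i.castSucc
          have := hcd i.succ
          simp only [s]; omega
        simp only [e1]
        simp only [s]
        ring
      · refine ⟨hmono, fun i => ⟨hch i, ?_⟩, hK.2⟩
        have := hcd i
        simp only [s]; omega
    · intro t _ ht
      rw [if_neg]
      rintro ⟨_, h, _⟩
      apply ht
      funext i
      ext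
      have := (h i).2
      simp only [s]; omega
    · simp
  · rw [if_neg hK]
    apply Finset.sum_eq_zero
    intro s _
    rw [if_neg]
    rintro ⟨_, h, h'⟩
    exact hK ⟨(h 0).1, h'⟩

open Classical in
lemma pf_multichain {α : Type*} [Fintype α] (l : ℕ) : ∀ (x : Fin l → ℝ) (C : Finset α),
    (∑ K : Fin l → Finset α, if Antitone (Fin.cons C K : Fin (l + 1) → Finset α) then
      ∏ i : Fin l, x i ^ (((Fin.cons C K : Fin (l + 1) → Finset α) i.castSucc).card
        - ((Fin.cons C K : Fin (l + 1) → Finset α) i.succ).card) else 0)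
      = (∑ i, x i + 1) ^ C.card := by
  induction l with
  | zero =>
    intro x C
    have : ∀ K : Fin 0 → Finset α, Antitone (Fin.cons C K : Fin (0 + 1) → Finset α) := by
      intro K i j _
      rw [Subsingleton.elim (α := Fin 1) i j]
    simp [this]
  | succ l ih =>
    intro x C
    rw [← (Fin.consEquiv (fun _ : Fin (l + 1) => Finset α)).sum_comp, Fintype.sum_prod_type]
    have h1 : ∀ D : Finset α, ∀ K : Fin l → Finset α,
        Antitone (Fin.cons C (Fin.cons D K : Fin (l + 1) → Finset α) : Fin (l + 1 + 1) → Finset α)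
          ↔ D ⊆ C ∧ Antitone (Fin.cons D K : Fin (l + 1) → Finset α) := by
      intro D K
      rw [Fin.antitone_iff_succ_le, Fin.antitone_iff_succ_le, Fin.forall_fin_succ]
      simp
    have h2 : ∀ D : Finset α, (∑ K : Fin l → Finset α,
        if Antitone (Fin.cons C (Fin.cons D K : Fin (l + 1) → Finset α) :
            Fin (l + 1 + 1) → Finset α) then
          ∏ i : Fin (l + 1), x i ^ (((Fin.cons C (Fin.cons D K : Fin (l + 1) → Finset α) :
              Fin (l + 1 + 1) → Finset α) i.castSucc).card
            - ((Fin.cons C (Fin.cons D K : Fin (l + 1) → Finset α) :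
              Fin (l + 1 + 1) → Finset α) i.succ).card) else 0)
        = if D ⊆ C then x 0 ^ (C.card - D.card) * (∑ i : Fin l, x i.succ + 1) ^ D.card else 0 := by
      intro D
      by_cases hD : D ⊆ C
      · simp only [h1, hD, true_and, if_true]
        rw [← ih (fun i => x i.succ) D, Finset.mul_sum]
        apply Finset.sum_congr rfl
        intro K _
        rw [Fin.prod_univ_succ]
        simp
      · simp [h1, hD]
    have h3 : ∀ D : Finset α, ∀ K : Fin l → Finset α,
      (Fin.consEquiv (fun _ : Fin (l + 1) => Finset α)) (D, K) = Fin.cons D K := fun _ _ => rfl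
    simp only [h3]
    rw [Finset.sum_congr rfl fun D _ => h2 D, ← Finset.sum_filter]
    have h4 : Finset.univ.filter (fun D => D ⊆ C) = C.powerset := by
      ext D; simp
    rw [h4, Fin.sum_univ_succ, add_assoc, add_comm (x 0),
      ← Finset.sum_pow_mul_eq_add_pow]
    apply Finset.sum_congr rfl
    intro D _
    ring

open Classical in
lemma pf_xi2 {n : ℕ} (hn : 0 < n) (l : ℕ) (x : Fin (l + 1) → ℝ) :
    xiFlag (stdPermutahedron n) l x =
      ∑ C : Finset (Finset (Fin n)), if pfChain C then
          x 0 ^ (n - 1 - C.card) / (Nat.factorial (C.card + 1)) *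
            (∑ i : Fin l, x i.succ + 1) ^ C.card else 0 := by
  rw [pf_xi hn, ← (Fin.consEquiv (fun _ : Fin (l + 1) => Finset (Finset (Fin n)))).sum_comp,
    Fintype.sum_prod_type]
  apply Finset.sum_congr rfl
  intro C _
  have h3 : ∀ K : Fin l → Finset (Finset (Fin n)),
    (Fin.consEquiv (fun _ : Fin (l + 1) => Finset (Finset (Fin n)))) (C, K) = Fin.cons C K :=
      fun _ => rfl
  simp only [h3, Fin.cons_zero]
  by_cases hC : pfChain C
  · simp only [hC, true_and, if_true]
    rw [← pf_multichain l (fun i => x i.succ) C, Finset.mul_sum]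
    apply Finset.sum_congr rfl
    intro K _
    rw [mul_ite, mul_zero]
    congr
  · simp [hC]

/-- Numbers of surjections onto a set with `k` elements. -/
def pfA : ℕ → ℕ → ℕ
  | 0, n => if n = 0 then 1 else 0
  | k + 1, n => ∑ j ∈ Finset.range n, n.choose j * pfA k j

lemma pfA_succ_zero (k : ℕ) : pfA (k + 1) 0 = 0 := by simp [pfA]

open Classical in
/-- Chains of nonempty proper subsets of `U` with `m` elements. -/
noncomputable def pfCh {α : Type*} [Fintype α] (U : Finset α) (m : ℕ) : Finset (Finset (Finset α)) :=
  Finset.univ.filter (fun C => IsChain (· ⊆ ·) (C : Set (Finset α)) ∧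
    (∀ T ∈ C, T.Nonempty ∧ T ⊂ U) ∧ C.card = m)

lemma mem_pfCh {α : Type*} [Fintype α] {U : Finset α} {m : ℕ} {C : Finset (Finset α)} :
    C ∈ pfCh U m ↔ IsChain (· ⊆ ·) (C : Set (Finset α)) ∧
      (∀ T ∈ C, T.Nonempty ∧ T ⊂ U) ∧ C.card = m := by
  classical
  rw [pfCh, Finset.mem_filter]
  simp only [Finset.mem_univ, true_and]

open Classical in
lemma pfCh_succ {α : Type*} [Fintype α] (U : Finset α) (m : ℕ) :
    pfCh U (m + 1) = (U.ssubsets.filter (fun T => T.Nonempty)).biUnion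
      (fun T => (pfCh T m).image (fun C => insert T C)) := by
  ext C
  simp only [pfCh, Finset.mem_filter, Finset.mem_univ, true_and, Finset.mem_biUnion,
    Finset.mem_image, Finset.mem_ssubsets]
  constructor
  · rintro ⟨hch, hT, hcard⟩
    have hne : C.Nonempty := by rw [← Finset.card_pos]; omega
    obtain ⟨T, hTC, hmax⟩ := C.exists_max_image Finset.card hne
    have hall : ∀ V ∈ C, V ⊆ T := by
      intro V hV
      rcases hch.total hV hTC with h | h
      · exact h
      · exact (Finset.eq_of_subset_of_card_le h (hmax V hV)).ge
    refine ⟨T, ⟨(hT T hTC).2, (hT T hTC).1⟩, C.erase T, ⟨?_, ?_, ?_⟩, Finset.insert_erase hTC⟩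
    · exact hch.mono (by simp)
    · intro V hV
      have hV := Finset.mem_erase.1 hV
      exact ⟨(hT V hV.2).1, (hall V hV.2).ssubset_of_ne hV.1⟩
    · rw [Finset.card_erase_of_mem hTC]; omega
  · rintro ⟨T, ⟨hTU, hT0⟩, C', ⟨hch, hT, hcard⟩, rfl⟩
    refine ⟨?_, ?_, ?_⟩
    · rw [Finset.coe_insert]
      apply hch.insert
      intro V hV _
      exact Or.inr (hT V hV).2.1
    · intro V hV
      rcases Finset.mem_insert.1 hV with rfl | hV
      · exact ⟨hT0, hTU⟩
      · exact ⟨(hT V hV).1, (hT V hV).2.trans hTU⟩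
    · rw [Finset.card_insert_of_notMem, hcard]
      intro h
      exact (hT T h).2.2 (le_refl _)

lemma pfCh_not_mem {α : Type*} [Fintype α] {T V : Finset α} {m : ℕ} {C : Finset (Finset α)}
    (hC : C ∈ pfCh T m) (hV : V ∈ C) : V ⊂ T := by
  classical
  simp only [pfCh, Finset.mem_filter, Finset.mem_univ, true_and] at hC
  exact (hC.2.1 V hV).2

lemma pfCh_card {α : Type*} [Fintype α] (m : ℕ) : ∀ U : Finset α, U.Nonempty →
    (pfCh U m).card = pfA (m + 1) U.card := by
  classical
  induction m with
  | zero =>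
    intro U hU
    have h1 : pfCh U 0 = {∅} := by
      ext C
      simp only [pfCh, Finset.mem_filter, Finset.mem_univ, true_and, Finset.card_eq_zero,
        Finset.mem_singleton]
      constructor
      · exact fun h => h.2.2
      · rintro rfl
        simp
    have h2 : 0 < U.card := Finset.card_pos.2 hU
    rw [h1]
    simp [pfA, h2]
  | succ m ih =>
    intro U hU
    rw [pfCh_succ, Finset.card_biUnion]
    · have h1 : ∀ T ∈ U.ssubsets.filter (fun T => T.Nonempty),
          ((pfCh T m).image (fun C => insert T C)).card = pfA (m + 1) T.card := by
        intro T hT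
        rw [Finset.card_image_of_injOn, ih T (Finset.mem_filter.1 hT).2]
        intro C hC C' hC' h
        have a1 : T ∉ C := fun h => (pfCh_not_mem hC h).2 (le_refl _)
        have a2 : T ∉ C' := fun h => (pfCh_not_mem hC' h).2 (le_refl _)
        have := congrArg (fun D => Finset.erase D T) h
        simpa [Finset.erase_insert a1, Finset.erase_insert a2] using this
      rw [Finset.sum_congr rfl h1]
      have h2 : ∑ T ∈ U.ssubsets.filter (fun T => T.Nonempty), pfA (m + 1) T.card
          = ∑ T ∈ U.ssubsets, pfA (m + 1) T.card := by
        apply Finset.sum_subset (Finset.filter_subset _ _)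
        intro T hT hT'
        have : T = ∅ := by
          by_contra h
          exact hT' (Finset.mem_filter.2 ⟨hT, Finset.nonempty_iff_ne_empty.2 h⟩)
        rw [this, Finset.card_empty, pfA_succ_zero]
      rw [h2]
      have h3 := Finset.sum_powerset_apply_card (fun j => pfA (m + 1) j) (x := U)
      rw [Finset.sum_range_succ, Nat.choose_self, one_smul] at h3
      have h4 : ∑ T ∈ U.ssubsets, pfA (m + 1) T.card + pfA (m + 1) U.card
          = ∑ T ∈ U.powerset, pfA (m + 1) T.card := by
        rw [Finset.ssubsets, Finset.sum_erase_add _ _ (Finset.mem_powerset_self U)]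
      have h5 : pfA (m + 1 + 1) U.card
          = ∑ j ∈ Finset.range U.card, U.card.choose j * pfA (m + 1) j := by
        conv_lhs => rw [pfA]
      rw [h5]
      simp only [smul_eq_mul] at h3
      omega
    · intro T _ T' _ hne
      rw [Function.onFun, Finset.disjoint_left]
      intro D hD hD'
      obtain ⟨C, hC, rfl⟩ := Finset.mem_image.1 hD
      obtain ⟨C', hC', h⟩ := Finset.mem_image.1 hD'
      have b1 : T ∈ insert T' C' := h ▸ Finset.mem_insert_self _ _
      have b2 : T' ∈ insert T C := h ▸ Finset.mem_insert_self _ _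
      rcases Finset.mem_insert.1 b1 with b1 | b1
      · exact hne b1
      rcases Finset.mem_insert.1 b2 with b2 | b2
      · exact hne b2.symm
      exact (pfCh_not_mem hC' b1).2 (pfCh_not_mem hC b2).1

open Classical in
lemma pf_xi3 {n : ℕ} (hn : 0 < n) (l : ℕ) (x : Fin (l + 1) → ℝ) :
    xiFlag (stdPermutahedron n) l x =
      ∑ m ∈ Finset.range n, (pfA (m + 1) n : ℝ) * (x 0 ^ (n - 1 - m) / (Nat.factorial (m + 1)) *
            (∑ i : Fin l, x i.succ + 1) ^ m) := by
  rw [pf_xi2 hn, ← Finset.sum_filter,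
    ← Finset.sum_fiberwise_of_maps_to (t := Finset.range n) (g := Finset.card)]
  · apply Finset.sum_congr rfl
    intro m _
    have hne : (Finset.univ : Finset (Fin n)).Nonempty := ⟨⟨0, hn⟩, Finset.mem_univ _⟩
    have h1 := pfCh_card m (Finset.univ : Finset (Fin n)) hne
    rw [Finset.card_univ, Fintype.card_fin] at h1
    rw [← h1, ← nsmul_eq_mul, ← Finset.sum_const]
    have h2 : (Finset.univ.filter (fun C : Finset (Finset (Fin n)) => pfChain C)).filter
        (fun C => C.card = m) = pfCh Finset.univ m := by
      ext C
      rw [Finset.mem_filter, Finset.mem_filter, mem_pfCh]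
      simp only [Finset.mem_univ, true_and]
      constructor
      · rintro ⟨⟨a, b, c⟩, d⟩
        refine ⟨a, fun T hT => ⟨?_, ?_⟩, d⟩
        · exact Finset.nonempty_iff_ne_empty.2 fun h => b (h ▸ hT)
        · exact (Finset.subset_univ T).ssubset_of_ne fun h => c (h ▸ hT)
      · rintro ⟨a, b, d⟩
        exact ⟨⟨a, fun h => by simpa using (b _ h).1, fun h => (b _ h).2.2 (le_refl _)⟩, d⟩
    rw [h2]
    apply Finset.sum_congr rfl
    intro C hC
    have : C.card = m := by
      rw [← h2] at hC
      exact (Finset.mem_filter.1 hC).2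
    rw [this]
  · intro C hC
    have := pf_dim hn (Finset.mem_filter.1 hC).2
    rw [Finset.mem_range]
    omega

lemma pfA_eq_zero (k : ℕ) : ∀ n, n < k → pfA k n = 0 := by
  induction k with
  | zero => intro n hn; omega
  | succ k ih =>
    intro n hn
    rw [pfA]
    apply Finset.sum_eq_zero
    intro j hj
    rw [ih j (by have := Finset.mem_range.1 hj; omega), mul_zero]

lemma pf_expsub (y : ℝ) :
    HasSum (fun n : ℕ => if n = 0 then 0 else y ^ n / (Nat.factorial n : ℝ)) (Real.exp y - 1) := by
  have h1 : HasSum (fun n : ℕ => y ^ n / (Nat.factorial n : ℝ)) (Real.exp y) := by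
    rw [Real.exp_eq_exp_ℝ]
    exact NormedSpace.expSeries_div_hasSum_exp y
  have h2 : HasSum (fun n : ℕ => if n = 0 then (1 : ℝ) else 0) 1 := hasSum_ite_eq 0 1
  have e : (fun n : ℕ => if n = 0 then 0 else y ^ n / (Nat.factorial n : ℝ))
      = fun n => y ^ n / (Nat.factorial n : ℝ) - (if n = 0 then (1 : ℝ) else 0) := by
    funext n
    split_ifs with h
    · simp [h]
    · simp
  rw [e]
  exact h1.sub h2

lemma pfA_hasSum (k : ℕ) (y : ℝ) :
    Summable (fun n : ℕ => ‖(pfA k n : ℝ) * y ^ n / (Nat.factorial n)‖) ∧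
    HasSum (fun n : ℕ => (pfA k n : ℝ) * y ^ n / (Nat.factorial n)) ((Real.exp y - 1) ^ k) := by
  induction k with
  | zero =>
    have : (fun n : ℕ => (pfA 0 n : ℝ) * y ^ n / (Nat.factorial n))
        = fun n => if n = 0 then 1 else 0 := by
      funext n
      by_cases h : n = 0
      · simp [pfA, h]
      · simp [pfA, h]
    have h0 : HasSum (fun n : ℕ => (pfA 0 n : ℝ) * y ^ n / (Nat.factorial n)) 1 := by
      rw [this]; exact hasSum_ite_eq 0 1
    exact ⟨h0.summable.norm, by simpa using h0⟩
  | succ k ih =>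
    have hg := pf_expsub y
    have e : (fun n : ℕ => (pfA (k + 1) n : ℝ) * y ^ n / (Nat.factorial n))
        = fun n => ∑ j ∈ Finset.range (n + 1), ((pfA k j : ℝ) * y ^ j / (Nat.factorial j)) *
          (if n - j = 0 then 0 else y ^ (n - j) / (Nat.factorial (n - j) : ℝ)) := by
      funext n
      rw [Finset.sum_range_succ]
      simp only [Nat.sub_self, if_true, mul_zero, add_zero]
      rw [pfA]
      push_cast
      rw [Finset.sum_mul, Finset.sum_div]
      apply Finset.sum_congr rfl
      intro j hj
      have hj := Finset.mem_range.1 hj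
      rw [if_neg (by omega), Nat.cast_choose ℝ hj.le]
      have h1 : (Nat.factorial n : ℝ) ≠ 0 := by exact_mod_cast Nat.factorial_ne_zero n
      have h2 : (Nat.factorial j : ℝ) ≠ 0 := by exact_mod_cast Nat.factorial_ne_zero j
      have h3 : (Nat.factorial (n - j) : ℝ) ≠ 0 := by exact_mod_cast Nat.factorial_ne_zero (n - j)
      have h4 : y ^ n = y ^ j * y ^ (n - j) := by rw [← pow_add]; congr 1; omega
      rw [h4]
      field_simp
    have hs := summable_norm_sum_mul_range_of_summable_norm ih.1 hg.summable.norm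
    have ht := tsum_mul_tsum_eq_tsum_sum_range_of_summable_norm ih.1 hg.summable.norm
    rw [← e] at ht
    have hs' : Summable (fun n : ℕ => ‖(pfA (k + 1) n : ℝ) * y ^ n / (Nat.factorial n)‖) := by
      convert hs using 2 with n
      exact congrArg _ (congrFun e n)
    refine ⟨hs', ?_⟩
    have h5 := hs'.of_norm.hasSum
    rw [← ht, ih.2.tsum_eq, hg.tsum_eq, ← pow_succ] at h5
    exact h5

lemma pf_double (u v s : ℝ) :
    Summable (fun p : ℕ × ℕ => (pfA (p.1 + 1) p.2 : ℝ) * u ^ p.2 / (Nat.factorial p.2) *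
      (v ^ (p.1 + 1) / (Nat.factorial (p.1 + 1)) / s)) := by
  apply Summable.of_norm
  rw [summable_prod_of_nonneg (fun p => norm_nonneg _)]
  constructor
  · intro m
    simp only [norm_mul]
    exact ((pfA_hasSum (m + 1) u).1.congr (fun n => by rw [norm_div, norm_mul])).mul_right _
  · have h1 : ∀ m : ℕ, ∑' n : ℕ, ‖(pfA (m + 1) n : ℝ) * u ^ n / (Nat.factorial n) *
        (v ^ (m + 1) / (Nat.factorial (m + 1)) / s)‖
        = (|v| * (Real.exp |u| - 1)) ^ (m + 1) / (Nat.factorial (m + 1)) * |s|⁻¹ := by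
      intro m
      have h2 : (fun n : ℕ => ‖(pfA (m + 1) n : ℝ) * u ^ n / (Nat.factorial n) *
          (v ^ (m + 1) / (Nat.factorial (m + 1)) / s)‖)
          = fun n => ((pfA (m + 1) n : ℝ) * |u| ^ n / (Nat.factorial n)) *
            (|v| ^ (m + 1) / (Nat.factorial (m + 1)) / |s|) := by
        funext n
        simp
      rw [h2, ((pfA_hasSum (m + 1) |u|).2.mul_right _).tsum_eq, mul_pow]
      ring
    simp only [h1]
    apply Summable.mul_right
    exact (summable_nat_add_iff 1).2
      (Real.summable_pow_div_factorial (|v| * (Real.exp |u| - 1)))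
/-- the exponential generating function of the exponential
ℓ-flag polynomials of the standard permutahedra Π_{n−1}, n ≥ 1, converges
absolutely and equals (e^{(S/x₁)(e^{x₁y}−1)} − 1)/S, S = x₂+⋯+x_ℓ+1.
(Here ℓ = l+1 ≥ 1 and x₁ = x 0.) -/
theorem exp_flag_genFun_stdPermutahedron (l : ℕ) (x : Fin (l + 1) → ℝ)
    (hx : x 0 ≠ 0) (S : ℝ)
    (hS : S = (∑ i ∈ Finset.univ.filter (fun i : Fin (l + 1) => i ≠ 0), x i) + 1)
    (hS0 : S ≠ 0) (y : ℝ) :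
    (Summable fun m : ℕ =>
      |xiFlag (stdPermutahedron (m + 1)) l x * y ^ (m + 1) / Nat.factorial (m + 1)|) ∧
    ∑' m : ℕ, xiFlag (stdPermutahedron (m + 1)) l x * y ^ (m + 1) / Nat.factorial (m + 1)
      = (Real.exp (S / x 0 * (Real.exp (x 0 * y) - 1)) - 1) / S := by
  have hS' : S = ∑ i : Fin l, x i.succ + 1 := by
    rw [hS, Finset.sum_filter, Fin.sum_univ_succ]
    simp [Fin.succ_ne_zero]
  let F : ℕ × ℕ → ℝ := fun p => (pfA (p.1 + 1) p.2 : ℝ) * (x 0 * y) ^ p.2 / (Nat.factorial p.2) *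
      ((S / x 0) ^ (p.1 + 1) / (Nat.factorial (p.1 + 1)) / S)
  have hF : Summable F := pf_double (x 0 * y) (S / x 0) S
  set V : ℝ := (Real.exp (S / x 0 * (Real.exp (x 0 * y) - 1)) - 1) / S with hV
  have hrow : ∀ m, HasSum (fun n => F (m, n))
      ((Real.exp (x 0 * y) - 1) ^ (m + 1) * ((S / x 0) ^ (m + 1) / (Nat.factorial (m + 1)) / S)) :=
    fun m => (pfA_hasSum (m + 1) (x 0 * y)).2.mul_right _
  have hFV : HasSum F V := by
    have h1 := hF.hasSum.prod_fiberwise hrow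
    have h2 : HasSum (fun m : ℕ => (Real.exp (x 0 * y) - 1) ^ (m + 1) *
        ((S / x 0) ^ (m + 1) / (Nat.factorial (m + 1)) / S)) V := by
      have h3 := (hasSum_nat_add_iff' 1).2 (pf_expsub (S / x 0 * (Real.exp (x 0 * y) - 1)))
      have h4 := h3.div_const S
      simp only [Finset.range_one, Finset.sum_singleton, if_true, sub_zero] at h4
      have e : (fun m : ℕ => (Real.exp (x 0 * y) - 1) ^ (m + 1) *
          ((S / x 0) ^ (m + 1) / (Nat.factorial (m + 1) : ℝ) / S)) = fun m : ℕ =>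
          (if m + 1 = 0 then 0 else (S / x 0 * (Real.exp (x 0 * y) - 1)) ^ (m + 1) /
            (Nat.factorial (m + 1) : ℝ)) / S := by
        funext m
        rw [if_neg (by omega), mul_pow]
        ring
      rw [e]
      exact h4
    rw [← h1.unique h2]
    exact hF.hasSum
  have hcol : ∀ n : ℕ, HasSum (fun m => F (m, n + 1))
      (xiFlag (stdPermutahedron (n + 1)) l x * y ^ (n + 1) / Nat.factorial (n + 1)) := by
    intro n
    rw [pf_xi3 (Nat.succ_pos n), ← hS', Finset.sum_mul, Finset.sum_div]
    have h1 := hasSum_sum_of_ne_finset_zero (L := SummationFilter.unconditional ℕ)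
      (f := fun m => F (m, n + 1))
      (s := Finset.range (n + 1)) (by
        intro m hm
        have hm : ¬ m < n + 1 := fun h => hm (Finset.mem_range.2 h)
        simp only [F]
        rw [pfA_eq_zero _ _ (by omega)]
        simp)
    convert h1 using 1
    apply Finset.sum_congr rfl
    intro m hm
    have hm := Finset.mem_range.1 hm
    simp only [F]
    have e1 : x 0 ^ (n + 1) = x 0 ^ (n + 1 - 1 - m) * x 0 ^ (m + 1) := by
      rw [← pow_add]; congr 1; omega
    have h2 : (Nat.factorial (n + 1) : ℝ) ≠ 0 := by exact_mod_cast Nat.factorial_ne_zero _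
    have h3 : (Nat.factorial (m + 1) : ℝ) ≠ 0 := by exact_mod_cast Nat.factorial_ne_zero _
    have h4 : x 0 ^ (m + 1) ≠ 0 := pow_ne_zero _ hx
    rw [mul_pow, div_pow, e1, pow_succ S m]
    field_simp
  have hcol0 : HasSum (fun m => F (m, 0)) 0 := by
    have : (fun m => F (m, 0)) = fun _ => 0 := by
      funext m
      simp [F, pfA_succ_zero]
    rw [this]
    exact hasSum_zero
  have hswap : HasSum (fun p : ℕ × ℕ => F (p.2, p.1)) V :=
    (Equiv.prodComm ℕ ℕ).hasSum_iff.2 hFV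
  let G : ℕ → ℝ := fun n => ∑' m, F (m, n)
  have hG : HasSum G V := hswap.prod_fiberwise (fun n => by
    cases n with
    | zero => exact hcol0.summable.hasSum
    | succ n => exact (hcol n).summable.hasSum)
  have hG1 := (hasSum_nat_add_iff' 1).2 hG
  have hG0 : G 0 = 0 := hcol0.tsum_eq
  have hGs : ∀ n, G (n + 1)
      = xiFlag (stdPermutahedron (n + 1)) l x * y ^ (n + 1) / Nat.factorial (n + 1) :=
    fun n => (hcol n).tsum_eq
  simp only [Finset.range_one, Finset.sum_singleton, hG0, sub_zero, hGs] at hG1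
  exact ⟨hG1.summable.abs, hG1.tsum_eq⟩
end

section
/- Fix integers k ≥ 2 and ℓ ≥ 1, and real numbers x_1, …, x_ℓ with x_1 ≠ 0 and S := x_2 + ⋯ + x_ℓ + 1 ≠ 0 (for ℓ = 1, S = 1). For each n ≥ k let Π_{n−1}(k−1) ⊆ ℝ^n be the general permutahedron and ξ^ℓ_{Π_{n−1}(k−1)}(x_1,…,x_ℓ) its exponential ℓ-flag polynomial. Then the series ∑_{n≥k} ξ^ℓ_{Π_{n−1}(k−1)}(x_1,…,x_ℓ)·y^n/n! converges absolutely for every real y, and for every real y ≠ 0 it equals (1/S)·∑_{i=0}^{k−1} [(x_1 y)^i·(e^{x_1 y} − E_{k−i−1}(x_1 y)) / (i!·(e^{x_1 y} − 1)^{i+1})]·[e^{(S/x_1)(e^{x_1 y} − 1)} − E_i((S/x_1)(e^{x_1 y} − 1))], where E_m(t) = ∑_{j=0}^{m} t^j/j! is the degree-m Taylor polynomial of e^t. -/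
open Pointwise

/-! ### Faces of the general permutahedron -/

/-- The face of the general permutahedron selected by the functional `u`. -/
def gpFace (n k : ℕ) (u : Fin n → ℝ) : Set (Fin n → ℝ) :=
  {x ∈ genPerm n k | ∀ y ∈ genPerm n k, ∑ i, u i * y i ≤ ∑ i, u i * x i}

theorem gp_mem_iff (n k : ℕ) (x : Fin n → ℝ) : x ∈ genPerm n k ↔
    ∃ g : Finset (Fin n) → (Fin n → ℝ), (∀ F, F.card = k → g F ∈ stdSimplexOn n F) ∧
      ∑ F ∈ Finset.univ.powersetCard k, g F = x := by
  unfold genPerm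
  rw [Set.mem_finsetSum]
  constructor
  · rintro ⟨g, hg, h⟩
    exact ⟨g, fun F hF => hg (by simp [hF]), h⟩
  · rintro ⟨g, hg, h⟩
    exact ⟨g, fun {F} hF => hg F (by simpa using hF), h⟩

theorem gp_simplex_le {n : ℕ} {F : Finset (Fin n)} {u p : Fin n → ℝ} {m : Fin n}
    (hp : p ∈ stdSimplexOn n F) (hm : ∀ b ∈ F, u b ≤ u m) :
    ∑ i, u i * p i ≤ u m ∧ (∑ i, u i * p i = u m → ∀ i, p i ≠ 0 → u i = u m) := by
  obtain ⟨h0, h1, h2⟩ := hp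
  have key : u m - ∑ i, u i * p i = ∑ i, (u m - u i) * p i := by
    simp only [sub_mul, Finset.sum_sub_distrib, ← Finset.mul_sum, h2, mul_one]
  have hnn : ∀ i ∈ Finset.univ, 0 ≤ (u m - u i) * p i := by
    intro i _
    by_cases hi : i ∈ F
    · exact mul_nonneg (sub_nonneg.2 (hm i hi)) (h0 i)
    · simp [h1 i hi]
  refine ⟨by linarith [Finset.sum_nonneg hnn], fun he i hi => ?_⟩
  have : ∑ i, (u m - u i) * p i = 0 := by rw [← key, he, sub_self]
  have h3 := (Finset.sum_eq_zero_iff_of_nonneg hnn).1 this i (Finset.mem_univ _)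
  rcases mul_eq_zero.1 h3 with h | h
  · linarith
  · exact absurd h hi

theorem gp_argmax {n k : ℕ} (hk : 1 ≤ k) (u : Fin n → ℝ) :
    ∃ m : Finset (Fin n) → Option (Fin n), ∀ F, F.card = k →
      ∃ a ∈ F, m F = some a ∧ ∀ b ∈ F, u b ≤ u a := by
  have : ∀ F : Finset (Fin n), ∃ o : Option (Fin n), F.card = k →
      ∃ a ∈ F, o = some a ∧ ∀ b ∈ F, u b ≤ u a := by
    intro F
    by_cases hF : F.card = k
    · have : F.Nonempty := Finset.card_pos.1 (by omega)
      obtain ⟨a, ha, h⟩ := F.exists_max_image u this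
      exact ⟨some a, fun _ => ⟨a, ha, rfl, h⟩⟩
    · exact ⟨none, fun h => absurd h hF⟩
  choose m hm using this
  exact ⟨m, hm⟩

theorem gp_single_mem {n : ℕ} {F : Finset (Fin n)} {a : Fin n} (ha : a ∈ F) :
    (Pi.single a 1 : Fin n → ℝ) ∈ stdSimplexOn n F := by
  refine ⟨fun i => ?_, fun i hi => ?_, by simp⟩
  · by_cases h : i = a
    · subst h; simp
    · simp [h]
  · have : i ≠ a := fun h => hi (h ▸ ha)
    simp [this]

/-- Any vertex selection supported on maximizers. -/
theorem gp_select {n k : ℕ} (hk : 1 ≤ k) (u : Fin n → ℝ) :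
    ∃ m : Finset (Fin n) → (Fin n → ℝ), ∀ F, F.card = k →
      ∃ a ∈ F, m F = Pi.single a 1 ∧ ∀ b ∈ F, u b ≤ u a := by
  obtain ⟨m, hm⟩ := gp_argmax hk u
  refine ⟨fun F => match m F with | some a => Pi.single a 1 | none => 0, fun F hF => ?_⟩
  obtain ⟨a, ha, h1, h2⟩ := hm F hF
  exact ⟨a, ha, by simp [h1], h2⟩

theorem gp_lin_sum {n : ℕ} (u : Fin n → ℝ) (T : Finset (Finset (Fin n)))
    (g : Finset (Fin n) → (Fin n → ℝ)) :
    ∑ i, u i * (∑ F ∈ T, g F) i = ∑ F ∈ T, ∑ i, u i * g F i := by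
  simp only [Finset.sum_apply, Finset.mul_sum]
  exact Finset.sum_comm

theorem gp_face_iff {n k : ℕ} (hk : 1 ≤ k) (u : Fin n → ℝ)
    (g : Finset (Fin n) → (Fin n → ℝ)) (hg : ∀ F, F.card = k → g F ∈ stdSimplexOn n F) :
    ∑ F ∈ Finset.univ.powersetCard k, g F ∈ gpFace n k u ↔
      ∀ F, F.card = k → ∀ i, g F i ≠ 0 → ∀ b ∈ F, u b ≤ u i := by
  obtain ⟨m, hm⟩ := gp_select hk u
  have hmem : ∀ g : Finset (Fin n) → (Fin n → ℝ), (∀ F, F.card = k → g F ∈ stdSimplexOn n F) →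
      ∀ F, F.card = k → ∑ i, u i * g F i ≤ ∑ i, u i * m F i := by
    intro g hg F hF
    obtain ⟨a, ha, h1, h2⟩ := hm F hF
    have := (gp_simplex_le (hg F hF) h2).1
    simpa [h1, Pi.single_apply] using this
  have hmP : ∑ F ∈ Finset.univ.powersetCard k, m F ∈ genPerm n k := by
    rw [gp_mem_iff]
    refine ⟨m, fun F hF => ?_, rfl⟩
    obtain ⟨a, ha, h1, h2⟩ := hm F hF
    rw [h1]; exact gp_single_mem ha
  constructor
  · rintro ⟨-, h⟩ F hF i hi b hb
    have h1 := h _ hmP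
    rw [gp_lin_sum, gp_lin_sum] at h1
    have h2 := (Finset.sum_eq_sum_iff_of_le (s := Finset.univ.powersetCard k)
      (fun F hF => hmem g hg F (by simpa using hF))).1
      (le_antisymm (Finset.sum_le_sum (fun F hF => hmem g hg F (by simpa using hF))) h1)
      F (by simp [hF])
    obtain ⟨a, ha, h3, h4⟩ := hm F hF
    have := (gp_simplex_le (hg F hF) h4).2 (by rw [h2, h3]; simp [Pi.single_apply]) i hi
    rw [this]; exact h4 b hb
  · intro h
    refine ⟨(gp_mem_iff _ _ _).2 ⟨g, hg, rfl⟩, fun y hy => ?_⟩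
    obtain ⟨g', hg', rfl⟩ := (gp_mem_iff _ _ _).1 hy
    rw [gp_lin_sum, gp_lin_sum]
    refine Finset.sum_le_sum fun F hF => ?_
    have hF : F.card = k := by simpa using hF
    refine (hmem g' hg' F hF).trans (le_of_eq ?_)
    obtain ⟨a, ha, h3, h4⟩ := hm F hF
    have hs := (hg F hF).2.2
    have : ∀ i, u i * g F i = u a * g F i := by
      intro i
      by_cases hi : g F i = 0
      · simp [hi]
      · have hiF : i ∈ F := by
          by_contra hc
          exact hi ((hg F hF).2.1 i hc)
        rw [le_antisymm (h4 i hiF) (h F hF i hi a ha)]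
    simp only [this, ← Finset.mul_sum, hs, h3]
    simp [Pi.single_apply]

theorem gp_face_nonempty {n k : ℕ} (hk : 1 ≤ k) (u : Fin n → ℝ) : (gpFace n k u).Nonempty := by
  obtain ⟨m, hm⟩ := gp_select hk u
  refine ⟨∑ F ∈ Finset.univ.powersetCard k, m F, (gp_face_iff hk u m fun F hF => ?_).2 ?_⟩
  · obtain ⟨a, ha, h1, h2⟩ := hm F hF
    rw [h1]; exact gp_single_mem ha
  · intro F hF i hi
    obtain ⟨a, ha, h1, h2⟩ := hm F hF
    rw [h1] at hi
    have : i = a := by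
      by_contra hc
      exact hi (by simp [hc])
    rw [this]; exact h2

theorem gp_isExpFace_iff {n k : ℕ} (hk : 1 ≤ k) (A : Set (Fin n → ℝ)) :
    IsExpFace (genPerm n k) A ↔ ∃ u, A = gpFace n k u := by
  constructor
  · rintro ⟨-, L, rfl⟩
    refine ⟨fun i => L (fun j => if i = j then 1 else 0), ?_⟩
    ext x
    have : ∀ y : Fin n → ℝ, L y = ∑ i, L (fun j => if i = j then 1 else 0) * y i := by
      intro y
      rw [LinearMap.pi_apply_eq_sum_univ L y]
      exact Finset.sum_congr rfl fun i _ => by simp [mul_comm]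
    simp only [gpFace, Set.mem_setOf_eq]
    simp only [← this]
  · rintro ⟨u, rfl⟩
    refine ⟨gp_face_nonempty hk u, Fintype.linearCombination ℝ u, ?_⟩
    ext x
    simp [gpFace, Fintype.linearCombination_apply, mul_comm]

/-- Elements `a` with at least `k` elements weakly below. -/
def gpHigh {n : ℕ} (k : ℕ) (u : Fin n → ℝ) (a : Fin n) : Prop :=
  k ≤ (Finset.univ.filter fun c => u c ≤ u a).card

theorem gp_exists_F {n k : ℕ} (hk : 2 ≤ k) {u : Fin n → ℝ} {a b : Fin n} (ha : gpHigh k u a)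
    (hb : u b ≤ u a) : ∃ F : Finset (Fin n), F.card = k ∧ a ∈ F ∧ b ∈ F ∧ ∀ c ∈ F, u c ≤ u a := by
  obtain ⟨F, h1, h2, h3⟩ := Finset.exists_subsuperset_card_eq
    (s := {a, b}) (t := Finset.univ.filter fun c => u c ≤ u a) (n := k)
    (by intro c; simp; rintro (rfl | rfl) <;> simp [hb])
    (Finset.card_le_two.trans hk) ha
  exact ⟨F, h3, h1 (by simp), h1 (by simp), fun c hc => by simpa using h2 hc⟩

theorem gp_high_of {n k : ℕ} {u : Fin n → ℝ} {a : Fin n} {F : Finset (Fin n)} (hF : F.card = k)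
    (h : ∀ c ∈ F, u c ≤ u a) : gpHigh k u a := by
  unfold gpHigh
  rw [← hF]
  exact Finset.card_le_card fun c hc => by simpa using h c hc

/-- vertex selection with prescribed choice at one set -/
theorem gp_point {n k : ℕ} (hk : 1 ≤ k) (u : Fin n → ℝ) :
    ∃ m : Finset (Fin n) → (Fin n → ℝ), (∀ F, F.card = k → m F ∈ stdSimplexOn n F) ∧
      ∀ F, F.card = k → ∀ a ∈ F, (∀ b ∈ F, u b ≤ u a) →
        ∑ G ∈ Finset.univ.powersetCard k, (Function.update m F (Pi.single a 1)) G ∈ gpFace n k u ∧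
        ∀ G, G.card = k → Function.update m F (Pi.single a 1) G ∈ stdSimplexOn n G := by
  obtain ⟨m, hm⟩ := gp_select hk u
  have h0 : ∀ F, F.card = k → m F ∈ stdSimplexOn n F := by
    intro F hF
    obtain ⟨a, ha, h1, h2⟩ := hm F hF
    rw [h1]; exact gp_single_mem ha
  refine ⟨m, h0, fun F hF a ha hmax => ?_⟩
  have hs : ∀ G, G.card = k → Function.update m F (Pi.single a 1) G ∈ stdSimplexOn n G := by
    intro G hG
    by_cases h : G = F
    · subst h; simpa using gp_single_mem ha
    · simpa [h] using h0 G hG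
  refine ⟨(gp_face_iff hk u _ hs).2 fun G hG i hi => ?_, hs⟩
  by_cases h : G = F
  · subst h
    have : i = a := by
      by_contra hc
      exact hi (by simp [hc])
    rw [this]; exact hmax
  · obtain ⟨a, ha, h1, h2⟩ := hm G hG
    simp only [ne_eq, h, not_false_eq_true, Function.update_of_ne, h1] at hi
    have : i = a := by
      by_contra hc
      exact hi (by simp [hc])
    rw [this]; exact h2

theorem gp_face_subset_iff {n k : ℕ} (hk : 2 ≤ k) (u v : Fin n → ℝ) :
    gpFace n k u ⊆ gpFace n k v ↔
      ∀ a b, gpHigh k u a → u b ≤ u a → v b ≤ v a := by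
  have hk1 : 1 ≤ k := by omega
  constructor
  · intro h a b ha hb
    obtain ⟨F, hF, haF, hbF, hmax⟩ := gp_exists_F hk ha hb
    obtain ⟨m, -, hm⟩ := gp_point hk1 u
    obtain ⟨h1, h2⟩ := hm F hF a haF hmax
    exact (gp_face_iff hk1 v _ h2).1 (h h1) F hF a (by simp) b hbF
  · intro h x hx
    obtain ⟨g, hg, rfl⟩ := (gp_mem_iff _ _ _).1 hx.1
    rw [gp_face_iff hk1 _ _ hg] at hx ⊢
    intro F hF i hi b hb
    exact h i b (gp_high_of hF (hx F hF i hi)) (hx F hF i hi b hb)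


/-! ### Codes of faces -/

/-- strict upper level set -/
noncomputable def gpU {n : ℕ} (u : Fin n → ℝ) (a : Fin n) : Finset (Fin n) :=
  Finset.univ.filter fun c => u a < u c

theorem gp_mem_U {n : ℕ} {u : Fin n → ℝ} {a c : Fin n} : c ∈ gpU u a ↔ u a < u c := by
  simp [gpU]

theorem gp_high_iff {n k : ℕ} {u : Fin n → ℝ} {a : Fin n} :
    gpHigh k u a ↔ k + (gpU u a).card ≤ n := by
  have h : (Finset.univ.filter fun c => u c ≤ u a).card + (gpU u a).card = n := by
    have := Finset.card_filter_add_card_filter_not (s := (Finset.univ : Finset (Fin n)))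
      (fun c => u c ≤ u a)
    simpa [gpU, not_le] using this
  unfold gpHigh
  omega

open scoped Classical in
/-- the class map of a functional -/
noncomputable def gpPi {n : ℕ} (k : ℕ) (u : Fin n → ℝ) (a : Fin n) : Finset (Fin n) ⊕ Fin n :=
  if gpHigh k u a then Sum.inl (gpU u a) else Sum.inr a

/-- the code of the face selected by `u` -/
noncomputable def gpCode {n : ℕ} (k : ℕ) (u : Fin n → ℝ) : Finset (Finset (Fin n) ⊕ Fin n) :=
  (Finset.univ.image (gpPi k u)).erase (Sum.inl ∅)

theorem gp_inl_mem {n k : ℕ} {u : Fin n → ℝ} {U : Finset (Fin n)} :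
    Sum.inl U ∈ gpCode k u ↔ U.Nonempty ∧ k + U.card ≤ n ∧ ∃ a, gpU u a = U := by
  simp only [gpCode, Finset.mem_erase, Finset.mem_image, Finset.mem_univ, true_and, gpPi, ne_eq,
    Sum.inl.injEq, Finset.nonempty_iff_ne_empty]
  refine and_congr_right fun _ => ?_
  constructor
  · rintro ⟨a, ha⟩
    split_ifs at ha with h
    have : gpU u a = U := by simpa using ha
    subst this
    exact ⟨gp_high_iff.1 h, a, rfl⟩
  · rintro ⟨h, a, rfl⟩
    exact ⟨a, by rw [if_pos (gp_high_iff.2 h)]⟩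

theorem gp_inr_mem {n k : ℕ} {u : Fin n → ℝ} {a : Fin n} :
    Sum.inr a ∈ gpCode k u ↔ n < k + (gpU u a).card := by
  simp only [gpCode, Finset.mem_erase, Finset.mem_image, Finset.mem_univ, true_and, gpPi, ne_eq,
    reduceCtorEq, not_false_eq_true]
  rw [← not_le, ← gp_high_iff]
  constructor
  · rintro ⟨b, hb⟩
    split_ifs at hb with h
    have : b = a := by simpa using hb
    exact this ▸ h
  · intro h
    exact ⟨a, by rw [if_neg h]⟩

theorem gp_subset_code {n k : ℕ} (hk : 2 ≤ k) (u v : Fin n → ℝ) :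
    gpFace n k u ⊆ gpFace n k v ↔ gpCode k v ⊆ gpCode k u := by
  rw [gp_face_subset_iff hk]
  constructor
  · intro h
    rintro (U | a) hx
    · rw [gp_inl_mem] at hx ⊢
      obtain ⟨h1, h2, a, rfl⟩ := hx
      refine ⟨h1, h2, ?_⟩
      obtain ⟨b, hb, hmax⟩ := (Finset.univ.filter fun c => v c ≤ v a).exists_max_image u ⟨a, by simp⟩
      have hb : v b ≤ v a := by simpa using hb
      have hmax : ∀ c, v c ≤ v a → u c ≤ u b := fun c hc => hmax c (by simpa using hc)
      have hbh : gpHigh k u b := by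
        have : gpHigh k v a := gp_high_iff.2 h2
        exact le_trans this (Finset.card_le_card fun c hc => by
          simp at hc ⊢; exact hmax c hc)
      refine ⟨b, ?_⟩
      ext c
      rw [gp_mem_U, gp_mem_U]
      constructor
      · intro hc
        by_contra hn
        exact absurd (hmax c (not_lt.1 hn)) (not_le.2 hc)
      · intro hc
        by_contra hn
        have := h b c hbh (not_lt.1 hn)
        linarith
    · rw [gp_inr_mem, ← not_le, ← gp_high_iff] at hx ⊢
      intro ha
      exact hx (le_trans ha (Finset.card_le_card fun c hc => by
          simp at hc ⊢; exact h a c ha hc))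
  · intro h a b ha hb
    have ha' : gpHigh k v a := by
      by_contra hc
      rw [gp_high_iff, not_le, ← gp_inr_mem] at hc
      have := gp_inr_mem.1 (h hc)
      rw [gp_high_iff] at ha
      omega
    by_contra hlt
    have hbU : b ∈ gpU v a := gp_mem_U.2 (not_le.1 hlt)
    have h1 : Sum.inl (gpU v a) ∈ gpCode k v := gp_inl_mem.2 ⟨⟨b, hbU⟩, gp_high_iff.1 ha', a, rfl⟩
    obtain ⟨-, -, d, hd⟩ := gp_inl_mem.1 (h h1)
    rw [← hd, gp_mem_U] at hbU
    have haU : a ∉ gpU u d := by rw [hd, gp_mem_U]; exact lt_irrefl _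
    rw [gp_mem_U] at haU
    linarith [not_lt.1 haU]

theorem gp_eq_code {n k : ℕ} (hk : 2 ≤ k) (u v : Fin n → ℝ) :
    gpFace n k u = gpFace n k v ↔ gpCode k u = gpCode k v := by
  rw [Set.Subset.antisymm_iff, gp_subset_code hk, gp_subset_code hk, Finset.Subset.antisymm_iff,
    and_comm]

theorem gp_pi_eq {n k : ℕ} {u : Fin n → ℝ} {a b : Fin n} (h : gpPi k u a = gpPi k u b) :
    a = b ∨ (gpHigh k u a ∧ u a = u b) := by
  unfold gpPi at h
  split_ifs at h with h1 h2
  · right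
    refine ⟨h1, ?_⟩
    have h : gpU u a = gpU u b := by simpa using h
    rcases lt_trichotomy (u a) (u b) with hl | hl | hl
    · have := gp_mem_U.2 hl
      rw [h, gp_mem_U] at this
      exact absurd this (lt_irrefl _)
    · exact hl
    · have := gp_mem_U.2 hl
      rw [← h, gp_mem_U] at this
      exact absurd this (lt_irrefl _)
  · left; simpa using h

theorem gp_pi_of {n k : ℕ} {u : Fin n → ℝ} {a b : Fin n} (h : gpHigh k u a) (hab : u a = u b) :
    gpPi k u a = gpPi k u b := by
  have h' : gpHigh k u b := by unfold gpHigh at *; rwa [← hab]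
  unfold gpPi
  rw [if_pos h, if_pos h']
  simp [gpU, hab]

/-- the class-sum map -/
noncomputable def gpPhi {n : ℕ} (k : ℕ) (u : Fin n → ℝ) :
    (Fin n → ℝ) →ₗ[ℝ] ({q // q ∈ Finset.univ.image (gpPi k u)} → ℝ) where
  toFun v q := ∑ a, if gpPi k u a = q.1 then v a else 0
  map_add' v w := by
    ext q
    simp only [Pi.add_apply, ← Finset.sum_add_distrib]
    exact Finset.sum_congr rfl fun a _ => by split_ifs <;> simp
  map_smul' c v := by
    ext q
    simp [Finset.mul_sum]

theorem gp_phi_apply {n k : ℕ} (u v : Fin n → ℝ) (q) :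
    gpPhi k u v q = ∑ a, if gpPi k u a = q.1 then v a else 0 := rfl

theorem gp_phi_surj {n k : ℕ} (u : Fin n → ℝ) : Function.Surjective (gpPhi k u) := by
  intro w
  have hs : ∀ q : {q // q ∈ Finset.univ.image (gpPi k u)}, ∃ a, gpPi k u a = q.1 := by
    rintro ⟨q, hq⟩; simpa using hq
  choose s hs using hs
  refine ⟨∑ q, w q • Pi.single (s q) 1, ?_⟩
  rw [map_sum]
  ext q
  simp only [map_smul, Finset.sum_apply, Pi.smul_apply, gp_phi_apply, Pi.single_apply, smul_eq_mul]
  rw [Finset.sum_eq_single q]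
  · rw [Finset.sum_eq_single (s q)]
    · simp [hs]
    · intro b _ hb; simp [hb]
    · simp
  · intro p _ hp
    rw [Finset.sum_eq_zero, mul_zero]
    intro a _
    split_ifs with h1 h2
    · exfalso; apply hp; apply Subtype.ext
      rw [← hs p, ← h2, h1]
    · rfl
    · rfl
  · simp

theorem gp_phi_const {n k : ℕ} (hk : 1 ≤ k) {u x y : Fin n → ℝ} (hx : x ∈ gpFace n k u)
    (hy : y ∈ gpFace n k u) : gpPhi k u x = gpPhi k u y := by
  obtain ⟨m, hm⟩ := gp_argmax hk u
  have key : ∀ g : Finset (Fin n) → (Fin n → ℝ), (∀ F, F.card = k → g F ∈ stdSimplexOn n F) →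
      (∀ F, F.card = k → ∀ i, g F i ≠ 0 → ∀ b ∈ F, u b ≤ u i) → ∀ F, F.card = k →
      ∀ q, gpPhi k u (g F) q = if (m F).map (gpPi k u) = some q.1 then 1 else 0 := by
    intro g hg hmax F hF q
    obtain ⟨a, ha, h1, h2⟩ := hm F hF
    have hah := gp_high_of hF h2
    rw [gp_phi_apply, h1]
    have : ∀ i, (if gpPi k u i = q.1 then g F i else 0) =
        (if gpPi k u a = q.1 then 1 else 0) * g F i := by
      intro i
      by_cases hi : g F i = 0
      · simp [hi]
      · have hiF : i ∈ F := by
          by_contra hc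
          exact hi ((hg F hF).2.1 i hc)
        have : gpPi k u a = gpPi k u i :=
          gp_pi_of hah (le_antisymm (hmax F hF i hi a ha) (h2 i hiF))
        rw [this]; simp
    simp only [this, ← Finset.mul_sum, (hg F hF).2.2, Option.map_some, Option.some.injEq, mul_one]
  obtain ⟨g, hg, rfl⟩ := (gp_mem_iff _ _ _).1 hx.1
  obtain ⟨g', hg', rfl⟩ := (gp_mem_iff _ _ _).1 hy.1
  rw [gp_face_iff hk _ _ hg] at hx
  rw [gp_face_iff hk _ _ hg'] at hy
  rw [map_sum, map_sum]
  refine Finset.sum_congr rfl fun F hF => ?_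
  have hF : F.card = k := by simpa using hF
  ext q
  rw [key g hg hx F hF, key g' hg' hy F hF]

theorem gp_single_sub_mem {n k : ℕ} (hk : 2 ≤ k) {u : Fin n → ℝ} {a b : Fin n}
    (h : gpPi k u a = gpPi k u b) :
    (Pi.single a 1 - Pi.single b 1 : Fin n → ℝ) ∈ vectorSpan ℝ (gpFace n k u) := by
  rcases gp_pi_eq h with rfl | ⟨ha, hab⟩
  · simp
  · obtain ⟨F, hF, haF, hbF, hmax⟩ := gp_exists_F hk ha hab.ge
    obtain ⟨m, -, hm⟩ := gp_point (by omega : 1 ≤ k) u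
    have h1 := (hm F hF a haF hmax).1
    have h2 := (hm F hF b hbF (fun c hc => hab ▸ hmax c hc)).1
    have := vsub_mem_vectorSpan ℝ h1 h2
    convert this using 1
    have hFm : F ∈ Finset.univ.powersetCard k := by simp [hF]
    rw [vsub_eq_sub, Finset.sum_update_of_mem hFm, Finset.sum_update_of_mem hFm]
    abel

theorem gp_vectorSpan {n k : ℕ} (hk : 2 ≤ k) (u : Fin n → ℝ) :
    vectorSpan ℝ (gpFace n k u) = LinearMap.ker (gpPhi k u) := by
  apply le_antisymm
  · rw [vectorSpan_def, Submodule.span_le]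
    rintro _ ⟨x, hx, y, hy, rfl⟩
    simp [gp_phi_const (by omega : 1 ≤ k) hx hy]
  · intro v hv
    have hs : ∀ q : Finset (Fin n) ⊕ Fin n, ∃ o : Option (Fin n), ∀ a, gpPi k u a = q →
        ∃ b, o = some b ∧ gpPi k u b = q := by
      intro q
      by_cases h : ∃ a, gpPi k u a = q
      · obtain ⟨a, ha⟩ := h
        exact ⟨some a, fun _ _ => ⟨a, rfl, ha⟩⟩
      · exact ⟨none, fun a ha => absurd ⟨a, ha⟩ h⟩
    choose s hs using hs
    have hr : ∀ a, ∃ b, s (gpPi k u a) = some b ∧ gpPi k u b = gpPi k u a :=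
      fun a => hs _ a rfl
    choose r hr1 hr2 using hr
    have hrr : ∀ a b, gpPi k u a = gpPi k u b → r a = r b := by
      intro a b h
      have := hr1 a
      rw [h, hr1 b] at this
      simpa using this.symm
    have hzero : ∑ a, v a • (Pi.single (r a) 1 : Fin n → ℝ) = 0 := by
      ext i
      simp only [Finset.sum_apply, Pi.smul_apply, Pi.single_apply, smul_eq_mul, Pi.zero_apply]
      have hq := congrFun (LinearMap.mem_ker.1 hv) ⟨gpPi k u i, by simp⟩
      rw [gp_phi_apply] at hq
      by_cases hi : r i = i
      · rw [Pi.zero_apply] at hq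
        refine Eq.trans ?_ hq
        refine Finset.sum_congr rfl fun a _ => ?_
        have : i = r a ↔ gpPi k u a = gpPi k u i := by
          constructor
          · intro h; rw [h, hr2]
          · intro h; rw [hrr a i h, hi]
        simp only [this]
        simp
      · apply Finset.sum_eq_zero
        intro a _
        rw [if_neg, mul_zero]
        intro h
        apply hi
        rw [h]
        exact hrr _ _ (hr2 a)
    have hv' : v = ∑ a, v a • (Pi.single a 1 - Pi.single (r a) 1 : Fin n → ℝ) := by
      simp only [smul_sub, Finset.sum_sub_distrib, hzero, sub_zero]
      ext i
      simp [Finset.sum_apply, Pi.single_apply]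
    rw [hv']
    exact Submodule.sum_mem _ fun a _ => Submodule.smul_mem _ _ (gp_single_sub_mem hk (hr2 a).symm)

theorem gp_inl_empty_mem {n k : ℕ} (hk : 2 ≤ k) (hn : k ≤ n) (u : Fin n → ℝ) :
    Sum.inl ∅ ∈ Finset.univ.image (gpPi k u) := by
  obtain ⟨a, -, ha⟩ := (Finset.univ : Finset (Fin n)).exists_max_image u
    ⟨⟨0, by omega⟩, Finset.mem_univ _⟩
  have hU : gpU u a = ∅ := by
    ext c; simp [gp_mem_U, ha c]
  refine Finset.mem_image.2 ⟨a, Finset.mem_univ _, ?_⟩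
  unfold gpPi
  rw [if_pos (gp_high_iff.2 (by rw [hU]; simpa using hn)), hU]

theorem gp_setDim {n k : ℕ} (hk : 2 ≤ k) (hn : k ≤ n) (u : Fin n → ℝ) :
    setDim (gpFace n k u) + (gpCode k u).card + 1 = n := by
  have h1 := LinearMap.finrank_range_add_finrank_ker (gpPhi k u)
  rw [LinearMap.range_eq_top.2 (gp_phi_surj u), finrank_top, ← gp_vectorSpan hk,
    ← direction_affineSpan] at h1
  have h2 := Finset.card_erase_add_one (gp_inl_empty_mem hk hn u)
  change (gpCode k u).card + 1 = _ at h2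
  simp only [Module.finrank_fintype_fun_eq_card, Fintype.card_coe, Fintype.card_fin] at h1
  unfold setDim
  omega


/-! ### Valid codes -/

/-- the combinatorial description of codes -/
def gpValid {n : ℕ} (k : ℕ) (W : Finset (Finset (Fin n) ⊕ Fin n)) : Prop :=
  (∀ U, Sum.inl U ∈ W → U.Nonempty ∧ k + U.card ≤ n) ∧
  (∀ U V, Sum.inl U ∈ W → Sum.inl V ∈ W → U ⊆ V ∨ V ⊆ U) ∧
  (∀ U a, Sum.inl U ∈ W → Sum.inr a ∈ W → a ∉ U) ∧
  W.toRight.card < k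

theorem gpValid.mono {n k : ℕ} {W W' : Finset (Finset (Fin n) ⊕ Fin n)} (h : gpValid k W)
    (hW : W' ⊆ W) : gpValid k W' := by
  obtain ⟨h1, h2, h3, h4⟩ := h
  refine ⟨fun U hU => h1 U (hW hU), fun U V hU hV => h2 U V (hW hU) (hW hV),
    fun U a hU ha => h3 U a (hW hU) (hW ha), lt_of_le_of_lt (Finset.card_le_card ?_) h4⟩
  intro a ha
  rw [Finset.mem_toRight] at *
  exact hW ha

theorem gp_code_valid {n k : ℕ} (hk : 2 ≤ k) (u : Fin n → ℝ) :
    gpValid k (gpCode k u) := by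
  refine ⟨fun U hU => ⟨(gp_inl_mem.1 hU).1, (gp_inl_mem.1 hU).2.1⟩, fun U V hU hV => ?_,
    fun U a hU ha haU => ?_, ?_⟩
  · obtain ⟨-, -, a, rfl⟩ := gp_inl_mem.1 hU
    obtain ⟨-, -, b, rfl⟩ := gp_inl_mem.1 hV
    rcases le_total (u a) (u b) with h | h
    · right; intro c hc; rw [gp_mem_U] at *; linarith
    · left; intro c hc; rw [gp_mem_U] at *; linarith
  · obtain ⟨-, h1, b, rfl⟩ := gp_inl_mem.1 hU
    have h2 := gp_inr_mem.1 ha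
    rw [gp_mem_U] at haU
    have : gpU u a ⊆ gpU u b := by intro c hc; rw [gp_mem_U] at *; linarith
    have := Finset.card_le_card this
    omega
  · rcases (gpCode k u).toRight.eq_empty_or_nonempty with h | h
    · rw [h]; simp; omega
    · obtain ⟨a, ha, hmax⟩ := Finset.exists_max_image _ u h
      rw [Finset.mem_toRight, gp_inr_mem, ← not_le, ← gp_high_iff] at ha
      unfold gpHigh at ha
      refine lt_of_le_of_lt (Finset.card_le_card ?_) (not_le.1 ha)
      intro c hc
      simpa using hmax c hc

/-- level function of a code -/
def gpF {n : ℕ} (W : Finset (Finset (Fin n) ⊕ Fin n)) (a : Fin n) : ℕ :=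
  (W.toLeft.filter fun U => a ∈ U).card + if Sum.inr a ∈ W then 0 else 1

theorem gp_F_of_mem {n k : ℕ} {W : Finset (Finset (Fin n) ⊕ Fin n)} (h : gpValid k W) {a : Fin n} :
    Sum.inr a ∈ W ↔ gpF W a = 0 := by
  unfold gpF
  constructor
  · intro ha
    rw [if_pos ha, add_zero, Finset.card_eq_zero, Finset.filter_eq_empty_iff]
    intro U hU
    exact h.2.2.1 U a (by simpa using hU) ha
  · intro ha
    by_contra hc
    rw [if_neg hc] at ha
    omega

theorem gp_F_lt {n k : ℕ} {W : Finset (Finset (Fin n) ⊕ Fin n)} (h : gpValid k W)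
    {U : Finset (Fin n)} (hU : Sum.inl U ∈ W) {a b : Fin n} (ha : a ∉ U) (hb : b ∈ U) :
    gpF W a < gpF W b := by
  unfold gpF
  have hb' : Sum.inr b ∉ W := fun hc => h.2.2.1 U b hU hc hb
  rw [if_neg hb']
  have : (W.toLeft.filter fun V => a ∈ V).card < (W.toLeft.filter fun V => b ∈ V).card := by
    apply Finset.card_lt_card
    rw [Finset.ssubset_iff_of_subset]
    · exact ⟨U, by simp [hU, hb], by simp [ha]⟩
    · intro V hV
      simp only [Finset.mem_filter, Finset.mem_toLeft] at hV ⊢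
      refine ⟨hV.1, ?_⟩
      rcases h.2.1 U V hU hV.1 with h1 | h1
      · exact h1 hb
      · exact absurd (h1 hV.2) ha
  split_ifs <;> omega

theorem gp_code_F {n k : ℕ} (hk : 2 ≤ k) (hn : k ≤ n) {W : Finset (Finset (Fin n) ⊕ Fin n)}
    (h : gpValid k W) : gpCode k (fun a => (gpF W a : ℝ)) = W := by
  set u : Fin n → ℝ := fun a => (gpF W a : ℝ) with hu
  have hlt : ∀ a b, u a < u b ↔ gpF W a < gpF W b := by intro a b; simp [hu]
  -- upper sets of elements not in the remainder
  have hA : ∀ a, Sum.inr a ∉ W → (gpU u a).Nonempty → Sum.inl (gpU u a) ∈ W := by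
    intro a ha ⟨c, hc⟩
    have hE : ∀ c, c ∈ gpU u a → ∃ V, Sum.inl V ∈ W ∧ c ∈ V ∧ a ∉ V := by
      intro c hc
      by_contra hno
      push Not at hno
      rw [gp_mem_U, hlt] at hc
      have : gpF W c ≤ gpF W a := by
        unfold gpF
        rw [if_neg ha]
        refine add_le_add (Finset.card_le_card ?_) (by split_ifs <;> simp)
        intro V hV
        simp only [Finset.mem_filter, Finset.mem_toLeft] at hV ⊢
        exact ⟨hV.1, hno V hV.1 hV.2⟩
      omega
    obtain ⟨V, hV, hcV, haV⟩ := hE c hc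
    obtain ⟨M, hM, hmax⟩ := (W.toLeft.filter fun V => a ∉ V).exists_max_image Finset.card
      ⟨V, by simp [hV, haV]⟩
    simp only [Finset.mem_filter, Finset.mem_toLeft] at hM hmax
    have : gpU u a = M := by
      ext d
      constructor
      · intro hd
        obtain ⟨V, hV, hdV, haV⟩ := hE d hd
        rcases h.2.1 M V hM.1 hV with h1 | h1
        · rw [Finset.eq_of_subset_of_card_le h1 (hmax V ⟨hV, haV⟩)]
          exact hdV
        · exact h1 hdV
      · intro hd
        rw [gp_mem_U, hlt]
        exact gp_F_lt h hM.1 hM.2 hd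
    rw [this]; exact hM.1
  have hR : ∀ a, Sum.inr a ∈ W → n < k + (gpU u a).card := by
    intro a ha
    have h0 := (gp_F_of_mem h).1 ha
    have : gpU u a = W.toRightᶜ := by
      ext c
      rw [gp_mem_U, hlt, Finset.mem_compl, Finset.mem_toRight, gp_F_of_mem h]
      omega
    rw [this, Finset.card_compl, Fintype.card_fin]
    have := h.2.2.2
    omega
  ext z
  rcases z with U | a
  · rw [gp_inl_mem]
    constructor
    · rintro ⟨h1, h2, a, rfl⟩
      apply hA a _ h1
      intro hc
      have := hR a hc
      omega
    · intro hU
      have hUc := h.1 U hU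
      refine ⟨hUc.1, hUc.2, ?_⟩
      have hne : (Uᶜ).Nonempty := by
        rw [← Finset.card_pos, Finset.card_compl, Fintype.card_fin]; omega
      obtain ⟨a, ha, hmax⟩ := Finset.exists_max_image _ u hne
      rw [Finset.mem_compl] at ha
      refine ⟨a, ?_⟩
      ext c
      rw [gp_mem_U]
      constructor
      · intro hc
        by_contra hcU
        exact absurd (hmax c (by simpa using hcU)) (not_le.2 hc)
      · intro hc
        rw [hlt]
        exact gp_F_lt h hU ha hc
  · rw [gp_inr_mem]
    constructor
    · intro ha
      by_contra hc
      rcases (gpU u a).eq_empty_or_nonempty with h1 | h1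
      · rw [h1] at ha; simp at ha; omega
      · have := (h.1 _ (hA a hc h1)).2
        omega
    · exact hR a

/-- the face with a given code -/
noncomputable def gpCF (n k : ℕ) (W : Finset (Finset (Fin n) ⊕ Fin n)) : Set (Fin n → ℝ) :=
  gpFace n k (fun a => (gpF W a : ℝ))

theorem gpCF_subset {n k : ℕ} (hk : 2 ≤ k) (hn : k ≤ n) {W W' : Finset (Finset (Fin n) ⊕ Fin n)}
    (h : gpValid k W) (h' : gpValid k W') : gpCF n k W ⊆ gpCF n k W' ↔ W' ⊆ W := by
  unfold gpCF
  rw [gp_subset_code hk, gp_code_F hk hn h, gp_code_F hk hn h']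

theorem gpCF_inj {n k : ℕ} (hk : 2 ≤ k) (hn : k ≤ n) {W W' : Finset (Finset (Fin n) ⊕ Fin n)}
    (h : gpValid k W) (h' : gpValid k W') (he : gpCF n k W = gpCF n k W') : W = W' :=
  Finset.Subset.antisymm ((gpCF_subset hk hn h' h).1 he.ge) ((gpCF_subset hk hn h h').1 he.le)

theorem gpCF_dim {n k : ℕ} (hk : 2 ≤ k) (hn : k ≤ n) {W : Finset (Finset (Fin n) ⊕ Fin n)}
    (h : gpValid k W) : setDim (gpCF n k W) + W.card + 1 = n := by
  have := gp_setDim hk hn (fun a => (gpF W a : ℝ))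
  rwa [gp_code_F hk hn h] at this

theorem gpCF_face {n k : ℕ} (hk : 2 ≤ k) (hn : k ≤ n) (A : Set (Fin n → ℝ)) :
    IsExpFace (genPerm n k) A ↔ ∃ W, gpValid k W ∧ A = gpCF n k W := by
  rw [gp_isExpFace_iff (by omega)]
  constructor
  · rintro ⟨u, rfl⟩
    refine ⟨gpCode k u, gp_code_valid hk u, ?_⟩
    unfold gpCF
    rw [gp_eq_code hk, gp_code_F hk hn (gp_code_valid hk u)]
  · rintro ⟨W, -, rfl⟩
    exact ⟨_, rfl⟩



/-! ### Summing over flags -/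

open scoped Classical in
theorem gp_flagCount {n k : ℕ} (hk : 2 ≤ k) (hn : k ≤ n) (l : ℕ) (s : Fin l → ℕ) :
    flagCount (genPerm n k) l s = (Finset.univ.filter
      fun W : Fin l → Finset (Finset (Fin n) ⊕ Fin n) =>
        (∀ i, gpValid k (W i) ∧ n - 1 - (W i).card = s i) ∧ Antitone W).card := by
  unfold flagCount
  rw [← Fintype.card_subtype, ← Nat.card_eq_fintype_card]
  symm
  refine Nat.card_congr (Equiv.ofBijective (fun W => ⟨fun i => gpCF n k (W.1 i), ?_, ?_⟩) ⟨?_, ?_⟩)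
  · intro i
    have h := W.2.1 i
    have := gpCF_dim hk hn h.1
    exact ⟨(gpCF_face hk hn _).2 ⟨_, h.1, rfl⟩, by
      change setDim (gpCF n k (W.1 i)) = s i
      omega⟩
  · intro i j hij
    exact (gpCF_subset hk hn (W.2.1 i).1 (W.2.1 j).1).2 (W.2.2 hij)
  · intro W W' h
    apply Subtype.ext
    funext i
    have := congrFun (congrArg Subtype.val h) i
    exact gpCF_inj hk hn (W.2.1 i).1 (W'.2.1 i).1 this
  · rintro ⟨A, hA, hsub⟩
    have h1 := fun i => (gpCF_face hk hn _).1 (hA i).1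
    choose W hW hAW using h1
    have h2 : A = fun i => gpCF n k (W i) := funext hAW
    subst h2
    refine ⟨⟨W, fun i => ⟨hW i, ?_⟩, fun i j hij => ?_⟩, rfl⟩
    · have := gpCF_dim hk hn (hW i)
      have := (hA i).2
      simp only at this
      omega
    · exact (gpCF_subset hk hn (hW i) (hW j)).1 (hsub i j hij)

open scoped Classical in
theorem gp_chain_sum {E : Type*} [Fintype E] (l : ℕ) :
    ∀ (x : Fin l → ℝ) (W : Finset E),
    ∑ V : Fin l → Finset E, (if Antitone (Fin.cons W V : Fin (l + 1) → Finset E) then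
      ∏ i : Fin l, x i ^ (((Fin.cons W V : Fin (l + 1) → Finset E) i.castSucc).card -
        ((Fin.cons W V : Fin (l + 1) → Finset E) i.succ).card) else 0)
      = (∑ i, x i + 1) ^ W.card := by
  induction l with
  | zero =>
    intro x W
    have : ∀ V : Fin 0 → Finset E, Antitone (Fin.cons W V : Fin (0 + 1) → Finset E) := by
      intro V
      rw [Fin.antitone_iff_succ_le]
      exact fun i => i.elim0
    simp [this]
  | succ l ih =>
    intro x W
    have hanti : ∀ (V0 : Finset E) (V : Fin l → Finset E),
        Antitone (Fin.cons W (Fin.cons V0 V : Fin (l + 1) → Finset E) : Fin (l + 2) → Finset E) ↔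
        V0 ⊆ W ∧ Antitone (Fin.cons V0 V : Fin (l + 1) → Finset E) := by
      intro V0 V
      rw [Fin.antitone_iff_succ_le, Fin.antitone_iff_succ_le, Fin.forall_fin_succ]
      simp
    rw [Fintype.sum_equiv (Fin.consEquiv fun _ : Fin (l + 1) => Finset E).symm _
      (fun p => if Antitone (Fin.cons W (Fin.cons p.1 p.2 : Fin (l + 1) → Finset E) :
          Fin (l + 2) → Finset E) then
        ∏ i : Fin (l + 1), x i ^ (((Fin.cons W (Fin.cons p.1 p.2 : Fin (l + 1) → Finset E) :
          Fin (l + 2) → Finset E) i.castSucc).card -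
        ((Fin.cons W (Fin.cons p.1 p.2 : Fin (l + 1) → Finset E) :
          Fin (l + 2) → Finset E) i.succ).card) else 0)
      (fun V => by
        have : (Fin.cons ((Fin.consEquiv fun _ : Fin (l + 1) => Finset E).symm V).1
          ((Fin.consEquiv fun _ : Fin (l + 1) => Finset E).symm V).2 : Fin (l + 1) → Finset E) = V :=
          Fin.cons_self_tail V
        rw [this]), Fintype.sum_prod_type]
    simp only [hanti, Fin.prod_univ_succ]
    simp only [Fin.castSucc_zero, Fin.cons_zero, Fin.cons_succ, Fin.castSucc_succ]
    have : ∀ V0 : Finset E, ∑ V : Fin l → Finset E,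
        (if V0 ⊆ W ∧ Antitone (Fin.cons V0 V : Fin (l + 1) → Finset E) then
          x 0 ^ (W.card - V0.card) * ∏ i : Fin l, x i.succ ^
          (((Fin.cons V0 V : Fin (l + 1) → Finset E) i.castSucc).card - (V i).card) else 0) =
        if V0 ⊆ W then (∑ i : Fin l, x i.succ + 1) ^ V0.card * x 0 ^ (W.card - V0.card) else 0 := by
      intro V0
      by_cases h : V0 ⊆ W
      · have := ih (fun i => x i.succ) V0
        simp only [Fin.cons_succ] at this
        rw [if_pos h, ← this, Finset.sum_mul]
        refine Finset.sum_congr rfl fun V _ => ?_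
        simp only [h, true_and]
        split_ifs
        · ring
        · ring
      · simp [h]
    simp only [this]
    rw [← Finset.sum_filter]
    have hf : (Finset.univ.filter fun V0 : Finset E => V0 ⊆ W) = W.powerset := by
      ext V; simp
    rw [hf, Finset.sum_pow_mul_eq_add_pow, Fin.sum_univ_succ]
    congr 1
    ring

open scoped Classical in
theorem gp_xiFlag {n k : ℕ} (hk : 2 ≤ k) (hn : k ≤ n) (l : ℕ) (x : Fin (l + 1) → ℝ) :
    xiFlag (genPerm n k) l x =
      ∑ W : Finset (Finset (Fin n) ⊕ Fin n), if gpValid k W then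
        x 0 ^ (n - 1 - W.card) * (∑ i : Fin l, x i.succ + 1) ^ W.card / (Nat.factorial (W.card + 1))
      else 0 := by
  have hcard : ∀ W : Finset (Finset (Fin n) ⊕ Fin n), gpValid k W → W.card + 1 ≤ n := by
    intro W hW
    have := gpCF_dim hk hn hW
    omega
  have h1 : xiFlag (genPerm n k) l x = ∑ W : Fin (l + 1) → Finset (Finset (Fin n) ⊕ Fin n),
      if (∀ i, gpValid k (W i)) ∧ Antitone W then
        1 / (Nat.factorial ((W 0).card + 1) : ℝ) * (x 0 ^ (n - 1 - (W 0).card) *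
          ∏ i : Fin l, x i.succ ^ ((W i.castSucc).card - (W i.succ).card)) else 0 := by
    unfold xiFlag
    simp only [gp_flagCount hk hn]
    set w : (Fin (l + 1) → Fin n) → ℝ := fun s => 1 / (Nat.factorial (n - (s 0 : ℕ)) : ℝ) *
      ∏ i : Fin (l + 1), x i ^ (if (i : ℕ) = 0 then (s i : ℕ) else
        (s i : ℕ) - (s ⟨(i : ℕ) - 1, lt_of_le_of_lt (Nat.sub_le _ _) i.isLt⟩ : ℕ)) with hw
    have step : ∀ s : Fin (l + 1) → Fin n, (if Monotone s then
        (((Finset.univ.filter fun W : Fin (l + 1) → Finset (Finset (Fin n) ⊕ Fin n) =>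
          (∀ i, gpValid k (W i) ∧ n - 1 - (W i).card = (s i : ℕ)) ∧ Antitone W).card : ℝ) /
          (Nat.factorial (n - (s 0 : ℕ)))) *
        ∏ i : Fin (l + 1), x i ^ (if (i : ℕ) = 0 then (s i : ℕ) else
        (s i : ℕ) - (s ⟨(i : ℕ) - 1, lt_of_le_of_lt (Nat.sub_le _ _) i.isLt⟩ : ℕ)) else 0) =
        ∑ W : Fin (l + 1) → Finset (Finset (Fin n) ⊕ Fin n),
          if (∀ i, gpValid k (W i) ∧ n - 1 - (W i).card = (s i : ℕ)) ∧ Antitone W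
            then w s else 0 := by
      intro s
      rw [← Finset.sum_filter, Finset.sum_const, nsmul_eq_mul]
      split_ifs with hs
      · simp only [hw]; ring
      · rw [Finset.filter_eq_empty_iff.2]
        · simp
        · rintro W - ⟨hW1, hW2⟩
          apply hs
          intro i j hij
          rw [Fin.le_def, ← (hW1 i).2, ← (hW1 j).2]
          have := Finset.card_le_card (hW2 hij)
          omega
    rw [Finset.sum_congr rfl fun s _ => step s, Finset.sum_comm]
    refine Finset.sum_congr rfl fun W _ => ?_
    by_cases hW : (∀ i, gpValid k (W i)) ∧ Antitone W
    · rw [if_pos hW]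
      have hlt : ∀ i, n - 1 - (W i).card < n := fun i => by omega
      rw [Finset.sum_eq_single (fun i => ⟨n - 1 - (W i).card, hlt i⟩)]
      · rw [if_pos ⟨fun i => ⟨hW.1 i, rfl⟩, hW.2⟩]
        simp only [hw]
        have h0 := hcard _ (hW.1 0)
        rw [show n - (n - 1 - (W 0).card) = (W 0).card + 1 by omega, Fin.prod_univ_succ]
        congr 1
        congr 1
        · refine Finset.prod_congr rfl fun i _ => ?_
          congr 1
          rw [if_neg (by simp)]
          have h1 := hcard _ (hW.1 i.castSucc)
          have h2 := hcard _ (hW.1 i.succ)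
          have h3 := Finset.card_le_card (hW.2 (Fin.castSucc_le_succ i))
          have h4 : (⟨(i.succ : ℕ) - 1, lt_of_le_of_lt (Nat.sub_le _ _) i.succ.isLt⟩ : Fin (l + 1))
            = i.castSucc := by ext; simp
          rw [h4]
          omega
      · intro s _ hs
        rw [if_neg]
        rintro ⟨h, -⟩
        apply hs
        funext i
        ext
        exact (h i).2.symm
      · simp
    · rw [if_neg hW]
      apply Finset.sum_eq_zero
      intro s _
      rw [if_neg]
      rintro ⟨h, h'⟩
      exact hW ⟨fun i => (h i).1, h'⟩
  rw [h1]
  rw [Fintype.sum_equiv (Fin.consEquiv fun _ : Fin (l + 1) => Finset (Finset (Fin n) ⊕ Fin n)).symm _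
    (fun p => if gpValid k p.1 then 1 / (Nat.factorial (p.1.card + 1) : ℝ) *
        x 0 ^ (n - 1 - p.1.card) * (if Antitone
        (Fin.cons p.1 p.2 : Fin (l + 1) → Finset (Finset (Fin n) ⊕ Fin n)) then
        ∏ i : Fin l, x i.succ ^
        (((Fin.cons p.1 p.2 : Fin (l + 1) → Finset (Finset (Fin n) ⊕ Fin n)) i.castSucc).card -
        ((Fin.cons p.1 p.2 : Fin (l + 1) → Finset (Finset (Fin n) ⊕ Fin n)) i.succ).card) else 0)
        else 0) ?_, Fintype.sum_prod_type]
  · refine Finset.sum_congr rfl fun W _ => ?_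
    by_cases hW : gpValid k W
    · simp only [if_pos hW]
      have hc := gp_chain_sum l (fun i => x i.succ) W
      rw [← Finset.mul_sum]
      trans 1 / (Nat.factorial (W.card + 1) : ℝ) * x 0 ^ (n - 1 - W.card) *
        (∑ i : Fin l, x i.succ + 1) ^ W.card
      · refine congrArg (HMul.hMul _) ?_
        rw [← hc]
        refine Finset.sum_congr rfl fun V _ => ?_
        by_cases hA : Antitone (Fin.cons W V : Fin (l + 1) → Finset (Finset (Fin n) ⊕ Fin n))
        · rw [if_pos hA, if_pos hA]
        · rw [if_neg hA, if_neg hA]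
      · ring
    · simp [if_neg hW]
  · intro W
    have : (Fin.cons ((Fin.consEquiv fun _ : Fin (l + 1) => Finset (Finset (Fin n) ⊕ Fin n)).symm W).1
      ((Fin.consEquiv fun _ : Fin (l + 1) => Finset (Finset (Fin n) ⊕ Fin n)).symm W).2 :
      Fin (l + 1) → Finset (Finset (Fin n) ⊕ Fin n)) = W := Fin.cons_self_tail W
    rw [this]
    have h0 : ((Fin.consEquiv fun _ : Fin (l + 1) => Finset (Finset (Fin n) ⊕ Fin n)).symm W).1
      = W 0 := rfl
    rw [h0]
    by_cases hA : Antitone W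
    · by_cases hV : gpValid k (W 0)
      · rw [if_pos hV, if_pos hA, if_pos ⟨fun i => hV.mono (hA (Fin.zero_le i)), hA⟩]
        ring
      · rw [if_neg hV, if_neg fun h => hV (h.1 0)]
    · rw [if_neg fun h => hA h.2, if_neg hA]
      simp


/-! ### Counting valid codes through level functions -/

/-- good level functions -/
def gpGood {n : ℕ} (k r m : ℕ) (f : Fin n → Fin (m + 2)) : Prop :=
  (Finset.univ.filter fun a => f a = 0).card = r ∧
  k ≤ r + (Finset.univ.filter fun a => f a = 1).card ∧
  ∀ i : Fin m, (Finset.univ.filter fun a => f a = i.succ.succ).card ≠ 0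

theorem gp_F_le {n : ℕ} (W : Finset (Finset (Fin n) ⊕ Fin n)) (a : Fin n) :
    gpF W a < W.toLeft.card + 2 := by
  unfold gpF
  have := Finset.card_filter_le W.toLeft (fun U => a ∈ U)
  split_ifs <;> omega

theorem gp_F_surj {n k : ℕ} (hk : 2 ≤ k) (hn : k ≤ n) {W : Finset (Finset (Fin n) ⊕ Fin n)}
    (h : gpValid k W) (i : ℕ) (hi : 1 ≤ i) (hi' : i ≤ W.toLeft.card + 1) :
    ∃ a, gpHigh k (fun a => (gpF W a : ℝ)) a ∧ gpF W a = i := by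
  classical
  set u : Fin n → ℝ := fun a => (gpF W a : ℝ) with hu
  have hW : gpCode k u = W := gp_code_F hk hn h
  set H := Finset.univ.filter fun a => gpHigh k u a with hH
  have h1 : H.image (gpF W) ⊆ Finset.Icc 1 (W.toLeft.card + 1) := by
    intro t ht
    simp only [hH, Finset.mem_image, Finset.mem_filter, Finset.mem_univ, true_and] at ht
    obtain ⟨a, ha, rfl⟩ := ht
    rw [Finset.mem_Icc]
    have h2 := gp_F_le W a
    refine ⟨?_, by omega⟩
    by_contra hc
    have h3 : Sum.inr a ∈ W := (gp_F_of_mem h).2 (by omega)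
    rw [← hW, gp_inr_mem] at h3
    rw [gp_high_iff] at ha
    omega
  have h2 : H.image (gpU u) = (H.image (gpF W)).image
      (fun t => Finset.univ.filter fun c => t < gpF W c) := by
    rw [Finset.image_image]
    refine Finset.image_congr fun a _ => ?_
    ext c
    simp [gp_mem_U, hu]
  have h3 : insert ∅ W.toLeft ⊆ H.image (gpU u) := by
    intro U hU
    rcases Finset.mem_insert.1 hU with rfl | hU
    · have := gp_inl_empty_mem hk hn u
      simp only [Finset.mem_image, Finset.mem_univ, true_and, gpPi] at this
      obtain ⟨a, ha⟩ := this
      split_ifs at ha with hh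
      exact Finset.mem_image.2 ⟨a, by simp [hH, hh], by simpa using ha⟩
    · rw [Finset.mem_toLeft, ← hW, gp_inl_mem] at hU
      obtain ⟨-, h4, a, rfl⟩ := hU
      exact Finset.mem_image.2 ⟨a, by simp [hH, gp_high_iff, h4], rfl⟩
  have h4 : ∅ ∉ W.toLeft := by
    intro hc
    exact Finset.not_nonempty_empty (h.1 ∅ (by simpa using hc)).1
  have h5 := Finset.card_le_card h3
  rw [Finset.card_insert_of_notMem h4, h2] at h5
  have h6 := h5.trans Finset.card_image_le
  have h7 : H.image (gpF W) = Finset.Icc 1 (W.toLeft.card + 1) :=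
    Finset.eq_of_subset_of_card_le h1 (by simpa using h6)
  have h8 : i ∈ H.image (gpF W) := by rw [h7, Finset.mem_Icc]; exact ⟨hi, hi'⟩
  obtain ⟨a, ha, hai⟩ := Finset.mem_image.1 h8
  exact ⟨a, by simpa [hH] using ha, hai⟩

theorem gp_good_F {n k r m : ℕ} (hk : 2 ≤ k) (hn : k ≤ n) {W : Finset (Finset (Fin n) ⊕ Fin n)}
    (h : gpValid k W) (hm : W.toLeft.card = m) (hr : W.toRight.card = r)
    (f : Fin n → Fin (m + 2)) (hf : ∀ a, (f a : ℕ) = gpF W a) : gpGood k r m f := by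
  have h0 : (Finset.univ.filter fun a => f a = 0) = W.toRight := by
    ext a
    simp [Fin.ext_iff, hf, gp_F_of_mem h]
  refine ⟨by rw [h0, hr], ?_, ?_⟩
  · obtain ⟨a, ha, ha1⟩ := gp_F_surj hk hn h 1 le_rfl (by omega)
    refine le_trans ha ?_
    rw [← hr, ← h0]
    refine le_trans (Finset.card_le_card ?_) (Finset.card_union_le _ _)
    intro c hc
    simp only [Finset.mem_filter, Finset.mem_univ, true_and, Nat.cast_le, ha1] at hc
    simp only [Finset.mem_union, Finset.mem_filter, Finset.mem_univ, true_and, Fin.ext_iff, hf,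
      Fin.val_zero, Fin.val_one]
    omega
  · intro i
    have := i.isLt
    obtain ⟨a, ha, ha1⟩ := gp_F_surj hk hn h (i + 2) (by omega) (by omega)
    rw [Finset.card_ne_zero]
    exact ⟨a, by simp [Fin.ext_iff, hf, ha1]⟩

theorem gp_code_good {n k r m : ℕ} (hk : 2 ≤ k) (hr : r < k) (f : Fin n → Fin (m + 2))
    (hf : gpGood k r m f) :
    (gpCode k (fun a => ((f a : ℕ) : ℝ))).toLeft.card = m ∧
    (gpCode k (fun a => ((f a : ℕ) : ℝ))).toRight.card = r ∧
    ∀ a, gpF (gpCode k (fun a => ((f a : ℕ) : ℝ))) a = f a := by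
  set u : Fin n → ℝ := fun a => ((f a : ℕ) : ℝ) with hu
  have hle : ∀ a b, u a ≤ u b ↔ (f a : ℕ) ≤ f b := by intro a b; simp [hu]
  have hlt : ∀ a b, u a < u b ↔ (f a : ℕ) < f b := by intro a b; simp [hu]
  obtain ⟨h0, h1, h2⟩ := hf
  have hhigh : ∀ a, gpHigh k u a ↔ 1 ≤ (f a : ℕ) := by
    intro a
    unfold gpHigh
    constructor
    · intro h
      by_contra hc
      have hc : (f a : ℕ) = 0 := by omega
      have : (Finset.univ.filter fun c => u c ≤ u a) = Finset.univ.filter fun a => f a = 0 := by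
        ext c
        simp only [Finset.mem_filter, Finset.mem_univ, true_and, hle, hc, Fin.ext_iff, Fin.val_zero]
        omega
      rw [this, h0] at h
      omega
    · intro h
      refine h1.trans ?_
      rw [← h0, ← Finset.card_union_of_disjoint]
      · apply Finset.card_le_card
        intro c hc
        simp only [Finset.mem_union, Finset.mem_filter, Finset.mem_univ, true_and, Fin.ext_iff,
          Fin.val_zero, Fin.val_one] at hc
        simp only [Finset.mem_filter, Finset.mem_univ, true_and, hle]
        omega
      · rw [Finset.disjoint_filter]
        intro c _ hc
        rw [hc]; simp
  have hR : ∀ a, Sum.inr a ∈ gpCode k u ↔ (f a : ℕ) = 0 := by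
    intro a
    rw [gp_inr_mem, ← not_le, ← gp_high_iff, hhigh]
    omega
  have hfib : ∀ i : ℕ, 1 ≤ i → i ≤ m + 1 → ∃ a, (f a : ℕ) = i := by
    intro i hi hi'
    rcases Nat.lt_or_ge i 2 with h | h
    · have : i = 1 := by omega
      subst this
      have : (Finset.univ.filter fun a => f a = 1).card ≠ 0 := by omega
      obtain ⟨a, ha⟩ := Finset.card_ne_zero.1 this
      simp only [Finset.mem_filter, Finset.mem_univ, true_and] at ha
      exact ⟨a, by simp [ha]⟩
    · obtain ⟨a, ha⟩ := Finset.card_ne_zero.1 (h2 ⟨i - 2, by omega⟩)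
      simp only [Finset.mem_filter, Finset.mem_univ, true_and] at ha
      refine ⟨a, ?_⟩
      rw [ha]
      simp
      omega
  set T : ℕ → Finset (Fin n) := fun i => Finset.univ.filter fun c => i < (f c : ℕ) with hT
  have hUT : ∀ a, gpU u a = T (f a) := by
    intro a; ext c; simp [gp_mem_U, hlt, hT]
  have hL : (gpCode k u).toLeft = (Finset.Icc 1 m).image T := by
    ext U
    rw [Finset.mem_toLeft, gp_inl_mem, Finset.mem_image]
    constructor
    · rintro ⟨⟨c, hc⟩, h4, a, rfl⟩
      rw [gp_mem_U, hlt] at hc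
      have h5 := (hhigh a).1 (gp_high_iff.2 h4)
      have := (f c).isLt
      exact ⟨f a, Finset.mem_Icc.2 ⟨h5, by omega⟩, (hUT a).symm⟩
    · rintro ⟨i, hi, rfl⟩
      rw [Finset.mem_Icc] at hi
      obtain ⟨a, ha⟩ := hfib i hi.1 (by omega)
      obtain ⟨b, hb⟩ := hfib (i + 1) (by omega) (by omega)
      refine ⟨⟨b, by simp [hT, hb]⟩, ?_, a, by rw [hUT, ha]⟩
      have := gp_high_iff.1 ((hhigh a).2 (by omega))
      rwa [hUT, ha] at this
  have hinj : Set.InjOn T (Finset.Icc 1 m : Finset ℕ) := by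
    have key : ∀ i j, 1 ≤ i → j ≤ m → i < j → T i ≠ T j := by
      intro i j hi hj hij he
      obtain ⟨a, ha⟩ := hfib j (by omega) (by omega)
      have : a ∈ T i := by simp [hT, ha, hij]
      rw [he] at this
      simp [hT, ha] at this
    intro i hi j hj he
    rw [Finset.mem_coe, Finset.mem_Icc] at hi hj
    rcases lt_trichotomy i j with hl | hl | hl
    · exact absurd he (key i j hi.1 hj.2 hl)
    · exact hl
    · exact absurd he.symm (key j i hj.1 hi.2 hl)
  refine ⟨?_, ?_, ?_⟩
  · rw [hL, Finset.card_image_of_injOn hinj]; simp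
  · rw [← h0]
    congr 1
    ext a
    rw [Finset.mem_toRight, hR]
    simp only [Finset.mem_filter, Finset.mem_univ, true_and, Fin.ext_iff, Fin.val_zero]
  · intro a
    unfold gpF
    have hb := (f a).isLt
    have : ((gpCode k u).toLeft.filter fun U => a ∈ U) = (Finset.Ico 1 (f a : ℕ)).image T := by
      ext U
      rw [hL]
      simp only [Finset.mem_filter, Finset.mem_image, Finset.mem_Icc, Finset.mem_Ico]
      constructor
      · rintro ⟨⟨i, hi, rfl⟩, haU⟩
        have : i < (f a : ℕ) := by simpa [hT] using haU
        exact ⟨i, ⟨hi.1, this⟩, rfl⟩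
      · rintro ⟨i, hi, rfl⟩
        exact ⟨⟨i, ⟨hi.1, by omega⟩, rfl⟩, by simpa [hT] using hi.2⟩
    rw [this, Finset.card_image_of_injOn (hinj.mono ?_), Nat.card_Ico]
    · simp only [hR]
      split_ifs <;> omega
    · intro i hi
      simp only [Finset.coe_Ico, Set.mem_Ico, Finset.coe_Icc, Set.mem_Icc] at *
      omega

open scoped Classical in
theorem gp_count {n k r m : ℕ} (hk : 2 ≤ k) (hn : k ≤ n) (hr : r < k) :
    (Finset.univ.filter fun W : Finset (Finset (Fin n) ⊕ Fin n) =>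
      gpValid k W ∧ W.toLeft.card = m ∧ W.toRight.card = r).card =
    (Finset.univ.filter fun f : Fin n → Fin (m + 2) => gpGood k r m f).card := by
  refine Finset.card_bij (fun W hW a => ⟨gpF W a, ?_⟩) ?_ ?_ ?_
  · have := gp_F_le W a
    simp only [Finset.mem_filter, Finset.mem_univ, true_and] at hW
    rwa [hW.2.1] at this
  · intro W hW
    simp only [Finset.mem_filter, Finset.mem_univ, true_and] at hW ⊢
    exact gp_good_F hk hn hW.1 hW.2.1 hW.2.2 _ (fun a => rfl)
  · intro W hW W' hW' he
    simp only [Finset.mem_filter, Finset.mem_univ, true_and] at hW hW'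
    rw [← gp_code_F hk hn hW.1, ← gp_code_F hk hn hW'.1]
    congr 1
    funext a
    have := congrFun he a
    rw [Fin.mk.injEq] at this
    rw [this]
  · intro f hf
    simp only [Finset.mem_filter, Finset.mem_univ, true_and] at hf
    obtain ⟨h1, h2, h3⟩ := gp_code_good hk hr f hf
    refine ⟨gpCode k (fun a => ((f a : ℕ) : ℝ)), ?_, ?_⟩
    · simp only [Finset.mem_filter, Finset.mem_univ, true_and]
      exact ⟨gp_code_valid hk _, h1, h2⟩
    · funext a
      ext
      exact h3 a


/-! ### Exponential formula -/

theorem gp_sum_fibers {p : ℕ} (n : ℕ) (w : Fin p → ℕ → ℝ) :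
    ∑ f : Fin n → Fin p, ∏ i, w i (Finset.univ.filter fun a => f a = i).card =
      (Nat.factorial n : ℝ) *
        PowerSeries.coeff n (∏ i, PowerSeries.mk fun t => w i t / (Nat.factorial t : ℝ)) := by
  classical
  let φ : MvPolynomial (Fin p) ℝ →ₗ[ℝ] ℝ :=
    (MvPolynomial.basisMonomials (Fin p) ℝ).constr ℝ (fun m => ∏ i, w i (m i))
  have hφ : ∀ m, φ (MvPolynomial.monomial m 1) = ∏ i, w i (m i) := by
    intro m
    have := (MvPolynomial.basisMonomials (Fin p) ℝ).constr_basis ℝ (fun m => ∏ i, w i (m i)) m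
    rwa [MvPolynomial.coe_basisMonomials] at this
  have hmon : ∀ q : Fin p → ℕ, ∏ i, (MvPolynomial.X i : MvPolynomial (Fin p) ℝ) ^ q i =
      MvPolynomial.monomial (Finsupp.equivFunOnFinite.symm q) 1 := by
    intro q
    rw [MvPolynomial.monomial_eq, Finsupp.prod_fintype _ _ (by simp)]
    simp
  have h1 : ∀ f : Fin n → Fin p, ∏ a, (MvPolynomial.X (f a) : MvPolynomial (Fin p) ℝ) =
      MvPolynomial.monomial (Finsupp.equivFunOnFinite.symm
        fun i => (Finset.univ.filter fun a => f a = i).card) 1 := by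
    intro f
    rw [← hmon, Finset.prod_comp (s := Finset.univ) (fun i => MvPolynomial.X i) f]
    refine Finset.prod_subset_one_on_sdiff (Finset.subset_univ _) ?_ ?_
    · intro i hi
      have : (Finset.univ.filter fun a => f a = i) = ∅ := by
        rw [Finset.filter_eq_empty_iff]
        intro a _ ha
        simp at hi
        exact hi a ha
      rw [this]; simp
    · intro i _; rfl
  have e1 := Fintype.sum_pow (fun i : Fin p => (MvPolynomial.X i : MvPolynomial (Fin p) ℝ)) n
  have e2 := Finset.sum_pow_eq_sum_piAntidiag Finset.univ
    (fun i : Fin p => (MvPolynomial.X i : MvPolynomial (Fin p) ℝ)) n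
  rw [e1] at e2
  have e3 := congrArg φ e2
  simp only [h1, map_sum, hφ, hmon, ← nsmul_eq_mul, map_nsmul] at e3
  simp only [Finsupp.equivFunOnFinite_symm_apply_apply, nsmul_eq_mul] at e3
  rw [e3, PowerSeries.coeff_prod, Finset.mul_sum]
  refine Finset.sum_bij' (fun q _ => Finsupp.equivFunOnFinite.symm q) (fun q _ => ⇑q) ?_ ?_ ?_ ?_ ?_
  · intro q hq
    rw [Finset.mem_piAntidiag] at hq
    rw [Finset.mem_finsuppAntidiag]
    exact ⟨by simpa using hq.1, Finset.subset_univ _⟩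
  · intro q hq
    rw [Finset.mem_finsuppAntidiag] at hq
    rw [Finset.mem_piAntidiag]
    exact ⟨hq.1, by simp⟩
  · intro q _; rfl
  · intro q _; ext; rfl
  · intro q hq
    rw [Finset.mem_piAntidiag] at hq
    have hs := Nat.multinomial_spec Finset.univ q
    rw [hq.1] at hs
    simp only [PowerSeries.coeff_mk, Finsupp.equivFunOnFinite_symm_apply_apply,
      Finset.prod_div_distrib]
    rw [← hs]
    push_cast
    have : (∏ i, ((q i).factorial : ℝ)) ≠ 0 :=
      Finset.prod_ne_zero_iff.2 fun i _ => by exact_mod_cast (q i).factorial_ne_zero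
    field_simp

/-- power series with coefficients `[c ≤ t]/t!` -/
noncomputable def gpTail (c : ℕ) : PowerSeries ℝ :=
  PowerSeries.mk fun t => (if c ≤ t then 1 else 0) / (Nat.factorial t : ℝ)

/-- power series `X^r/r!` -/
noncomputable def gpMono (r : ℕ) : PowerSeries ℝ :=
  PowerSeries.mk fun t => (if t = r then 1 else 0) / (Nat.factorial t : ℝ)

/-- the generating series of good level functions -/
noncomputable def gpSer (k r m : ℕ) : PowerSeries ℝ := gpMono r * (gpTail (k - r) * gpTail 1 ^ m)

open scoped Classical in
theorem gp_good_card {n k r m : ℕ} :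
    ((Finset.univ.filter fun f : Fin n → Fin (m + 2) => gpGood k r m f).card : ℝ) =
      (Nat.factorial n : ℝ) * PowerSeries.coeff n (gpSer k r m) := by
  have h := gp_sum_fibers n (Fin.cons (fun t => if t = r then 1 else 0)
    (Fin.cons (fun t => if k - r ≤ t then 1 else 0) (fun _ t => if 1 ≤ t then 1 else 0)) :
    Fin (m + 2) → ℕ → ℝ)
  simp only [Fin.prod_univ_succ, Fin.cons_zero, Fin.cons_succ, Finset.prod_const,
    Finset.card_univ, Fintype.card_fin] at h
  unfold gpSer gpMono gpTail
  rw [← h, Finset.card_filter]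
  push_cast
  refine Finset.sum_congr rfl fun f _ => ?_
  by_cases h0 : (Finset.univ.filter fun a => f a = 0).card = r
  · by_cases h1 : k - r ≤ (Finset.univ.filter fun a => f a = Fin.succ 0).card
    · by_cases h2 : ∀ i : Fin m, (Finset.univ.filter fun a => f a = i.succ.succ).card ≠ 0
      · rw [if_pos, if_pos h0, if_pos h1, Finset.prod_eq_one]
        · simp
        · intro i _
          rw [if_pos]
          have := h2 i
          omega
        · refine ⟨h0, ?_, h2⟩
          change k ≤ r + (Finset.univ.filter fun a => f a = Fin.succ 0).card
          omega
      · rw [if_neg fun hg => h2 hg.2.2]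
        push Not at h2
        obtain ⟨i, hi⟩ := h2
        rw [Finset.prod_eq_zero (Finset.mem_univ i)]
        · simp
        · rw [if_neg]; omega
    · rw [if_neg, if_neg h1]
      · simp
      · intro hg
        have : k ≤ r + (Finset.univ.filter fun a => f a = Fin.succ 0).card := hg.2.1
        omega
  · rw [if_neg fun hg => h0 hg.1, if_neg h0]
    simp

/-! ### Evaluating power series -/

/-- `P` converges absolutely at `z` with sum `v`. -/
def gpHas (P : PowerSeries ℝ) (z v : ℝ) : Prop :=
  Summable (fun n => ‖PowerSeries.coeff n P * z ^ n‖) ∧ ∑' n, PowerSeries.coeff n P * z ^ n = v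

theorem gpHas.mul {P Q : PowerSeries ℝ} {z v w : ℝ} (hP : gpHas P z v) (hQ : gpHas Q z w) :
    gpHas (P * Q) z (v * w) := by
  have key : ∀ n, PowerSeries.coeff n (P * Q) * z ^ n = ∑ kl ∈ Finset.HasAntidiagonal.antidiagonal n,
      (PowerSeries.coeff kl.1 P * z ^ kl.1) * (PowerSeries.coeff kl.2 Q * z ^ kl.2) := by
    intro n
    rw [PowerSeries.coeff_mul, Finset.sum_mul]
    refine Finset.sum_congr rfl fun p hp => ?_
    rw [← Finset.HasAntidiagonal.mem_antidiagonal.1 hp, pow_add]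
    ring
  obtain ⟨hP1, hP2⟩ := hP
  obtain ⟨hQ1, hQ2⟩ := hQ
  have h1 := summable_norm_sum_mul_antidiagonal_of_summable_norm hP1 hQ1
  have h2 := tsum_mul_tsum_eq_tsum_sum_antidiagonal_of_summable_norm hP1 hQ1
  rw [hP2, hQ2] at h2
  refine ⟨?_, ?_⟩
  · refine h1.congr fun n => ?_
    rw [key n]
  · rw [h2]
    exact tsum_congr key

theorem gpHas_one (z : ℝ) : gpHas 1 z 1 := by
  have h : ∀ n, n ∉ ({0} : Finset ℕ) → PowerSeries.coeff n (1 : PowerSeries ℝ) * z ^ n = 0 := by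
    intro n hn
    simp at hn
    simp [PowerSeries.coeff_one, hn]
  have hs := hasSum_sum_of_ne_finset_zero (L := .unconditional ℕ) h
  refine ⟨hs.summable.norm, ?_⟩
  rw [hs.tsum_eq]; simp

theorem gpHas.pow {P : PowerSeries ℝ} {z v : ℝ} (hP : gpHas P z v) (m : ℕ) :
    gpHas (P ^ m) z (v ^ m) := by
  induction m with
  | zero => simpa using gpHas_one z
  | succ m ih => rw [pow_succ, pow_succ]; exact ih.mul hP

theorem gpHas_mono (r : ℕ) (z : ℝ) : gpHas (gpMono r) z (z ^ r / (Nat.factorial r)) := by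
  have h : ∀ n, n ∉ ({r} : Finset ℕ) → PowerSeries.coeff n (gpMono r) * z ^ n = 0 := by
    intro n hn
    simp at hn
    simp [gpMono, PowerSeries.coeff_mk, hn]
  have hs := hasSum_sum_of_ne_finset_zero (L := .unconditional ℕ) h
  refine ⟨hs.summable.norm, ?_⟩
  rw [hs.tsum_eq]
  simp [gpMono, PowerSeries.coeff_mk]
  ring

theorem gp_hasSum_exp (z : ℝ) : HasSum (fun n : ℕ => z ^ n / (Nat.factorial n : ℝ)) (Real.exp z) := by
  rw [Real.exp_eq_exp_ℝ]
  exact NormedSpace.expSeries_div_hasSum_exp z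

theorem gpHas_tail (c : ℕ) (z : ℝ) :
    gpHas (gpTail c) z (Real.exp z - ∑ t ∈ Finset.range c, z ^ t / (Nat.factorial t)) := by
  have h : ∀ n, n ∉ Finset.range c →
      (if n < c then z ^ n / (Nat.factorial n : ℝ) else 0) = 0 := by
    intro n hn
    simp only [Finset.mem_range] at hn
    rw [if_neg hn]
  have hs := (gp_hasSum_exp z).sub (hasSum_sum_of_ne_finset_zero (L := .unconditional ℕ) h)
  have he : (fun n => PowerSeries.coeff n (gpTail c) * z ^ n) = fun n =>
      z ^ n / (Nat.factorial n : ℝ) - (if n < c then z ^ n / (Nat.factorial n : ℝ) else 0) := by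
    funext n
    rw [gpTail, PowerSeries.coeff_mk]
    split_ifs with h1 h2 h2
    · omega
    · ring
    · ring
    · omega
  have h2 : ∑ t ∈ Finset.range c, (if t < c then z ^ t / (Nat.factorial t : ℝ) else 0) =
      ∑ t ∈ Finset.range c, z ^ t / (Nat.factorial t : ℝ) :=
    Finset.sum_congr rfl fun t ht => by rw [if_pos (Finset.mem_range.1 ht)]
  rw [h2, ← he] at hs
  exact ⟨hs.summable.norm, hs.tsum_eq⟩

theorem gpHas_ser {k r : ℕ} (m : ℕ) (hr : r < k) (z : ℝ) : gpHas (gpSer k r m) z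
    (z ^ r / (Nat.factorial r) * ((Real.exp z - Etaylor (k - r - 1) z) * (Real.exp z - 1) ^ m)) := by
  have h1 := gpHas_tail (k - r) z
  have h2 := gpHas_tail 1 z
  simp only [Finset.range_one, Finset.sum_singleton, pow_zero, Nat.factorial_zero, Nat.cast_one,
    div_one] at h2
  unfold Etaylor
  rw [show k - r - 1 + 1 = k - r by omega]
  exact (gpHas_mono r z).mul (h1.mul (h2.pow m))

theorem gp_ser_nonneg (k r m n : ℕ) : 0 ≤ PowerSeries.coeff n (gpSer k r m) := by
  have := gp_good_card (n := n) (k := k) (r := r) (m := m)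
  have h2 : (0 : ℝ) < Nat.factorial n := by exact_mod_cast n.factorial_pos
  by_contra hc
  have := mul_neg_of_pos_of_neg h2 (not_le.1 hc)
  rw [← gp_good_card] at this
  exact absurd this (not_lt.2 (Nat.cast_nonneg _))


/-! ### Assembling the generating function -/

theorem gp_ser_zero_lt {n k r m : ℕ} (h : n < k) :
    PowerSeries.coeff n (gpSer k r m) = 0 := by
  classical
  have h0 := gp_good_card (n := n) (k := k) (r := r) (m := m)
  have : (Finset.univ.filter fun f : Fin n → Fin (m + 2) => gpGood k r m f) = ∅ := by
    rw [Finset.filter_eq_empty_iff]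
    intro f _ hf
    obtain ⟨h1, h2, -⟩ := hf
    have hd : Disjoint (Finset.univ.filter fun a => f a = 0)
        (Finset.univ.filter fun a => f a = 1) := by
      rw [Finset.disjoint_filter]
      intro a _ ha hb
      rw [ha] at hb
      exact absurd hb (by simp)
    have h3 := Finset.card_union_of_disjoint hd
    have h4 := Finset.card_le_univ ((Finset.univ.filter fun a => f a = 0) ∪
        (Finset.univ.filter fun a => f a = 1))
    rw [Fintype.card_fin] at h4
    omega
  rw [this, Finset.card_empty, Nat.cast_zero] at h0
  have h2 : (Nat.factorial n : ℝ) ≠ 0 := by exact_mod_cast n.factorial_ne_zero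
  exact (mul_eq_zero.1 h0.symm).resolve_left h2

theorem gp_valid_card {n k : ℕ} (hk : 2 ≤ k) (hn : k ≤ n) {W : Finset (Finset (Fin n) ⊕ Fin n)}
    (h : gpValid k W) : W.toLeft.card + W.toRight.card + 1 ≤ n := by
  have h1 := gpCF_dim hk hn h
  have h2 := Finset.card_toLeft_add_card_toRight (u := W)
  omega

theorem gp_ser_zero_big {n k r m : ℕ} (hk : 2 ≤ k) (hn : k ≤ n) (hr : r < k) (h : n < m + r + 1) :
    PowerSeries.coeff n (gpSer k r m) = 0 := by
  classical
  have h0 := gp_good_card (n := n) (k := k) (r := r) (m := m)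
  have hc := gp_count (m := m) hk hn hr
  have : (Finset.univ.filter fun W : Finset (Finset (Fin n) ⊕ Fin n) =>
      gpValid k W ∧ W.toLeft.card = m ∧ W.toRight.card = r) = ∅ := by
    rw [Finset.filter_eq_empty_iff]
    rintro W _ ⟨h1, h2, h3⟩
    have := gp_valid_card hk hn h1
    omega
  have hz : (Finset.univ.filter fun f : Fin n → Fin (m + 2) => gpGood k r m f).card = 0 := by
    rw [← hc]
    exact Finset.card_eq_zero.2 this
  rw [hz, Nat.cast_zero] at h0
  have h2 : (Nat.factorial n : ℝ) ≠ 0 := by exact_mod_cast n.factorial_ne_zero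
  exact (mul_eq_zero.1 h0.symm).resolve_left h2

theorem gp_xi_grouped {n k : ℕ} (hk : 2 ≤ k) (hn : k ≤ n) (l : ℕ) (x : Fin (l + 1) → ℝ) :
    xiFlag (genPerm n k) l x = ∑ r ∈ Finset.range k, ∑ m ∈ Finset.range n,
      (Nat.factorial n : ℝ) * PowerSeries.coeff n (gpSer k r m) *
      (x 0 ^ (n - 1 - (m + r)) * (∑ i : Fin l, x i.succ + 1) ^ (m + r) /
        (Nat.factorial (m + r + 1))) := by
  classical
  rw [gp_xiFlag hk hn]
  have h1 : ∀ W : Finset (Finset (Fin n) ⊕ Fin n), (if gpValid k W then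
        x 0 ^ (n - 1 - W.card) * (∑ i : Fin l, x i.succ + 1) ^ W.card / (Nat.factorial (W.card + 1))
      else 0) = ∑ r ∈ Finset.range k, ∑ m ∈ Finset.range n,
        if gpValid k W ∧ W.toLeft.card = m ∧ W.toRight.card = r then
          (x 0 ^ (n - 1 - (m + r)) * (∑ i : Fin l, x i.succ + 1) ^ (m + r) /
            (Nat.factorial (m + r + 1) : ℝ)) else 0 := by
    intro W
    by_cases hW : gpValid k W
    · have h2 := gp_valid_card hk hn hW
      have h3 := Finset.card_toLeft_add_card_toRight (u := W)
      rw [if_pos hW, Finset.sum_eq_single_of_mem W.toRight.card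
        (Finset.mem_range.2 hW.2.2.2), Finset.sum_eq_single_of_mem W.toLeft.card
        (Finset.mem_range.2 (by omega)), if_pos ⟨hW, rfl, rfl⟩, h3]
      · intro b _ hb
        rw [if_neg]
        exact fun h => hb h.2.1.symm
      · intro b _ hb
        refine Finset.sum_eq_zero fun m _ => ?_
        rw [if_neg]
        exact fun h => hb h.2.2.symm
    · rw [if_neg hW]
      symm
      refine Finset.sum_eq_zero fun r _ => Finset.sum_eq_zero fun m _ => ?_
      rw [if_neg]
      exact fun h => hW h.1
  have h1' : ∑ W : Finset (Finset (Fin n) ⊕ Fin n), _ = ∑ W, _ :=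
    Finset.sum_congr rfl fun W _ => h1 W
  refine Eq.trans ?_ (h1'.trans ?_)
  · refine Finset.sum_congr rfl fun W _ => ?_
    by_cases hW : gpValid k W
    · rw [if_pos hW]
    · rw [if_neg hW]
  rw [Finset.sum_comm]
  refine Finset.sum_congr rfl fun r hr => ?_
  rw [Finset.sum_comm]
  refine Finset.sum_congr rfl fun m _ => ?_
  rw [← gp_good_card, ← gp_count hk hn (Finset.mem_range.1 hr), ← Finset.sum_filter,
    Finset.sum_const, nsmul_eq_mul]

/-- the terms of the double series -/
noncomputable def gpT (k r : ℕ) (X S z : ℝ) (m n : ℕ) : ℝ :=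
  PowerSeries.coeff n (gpSer k r m) * z ^ n *
    (S ^ (m + r) / (X ^ (m + r + 1) * (Nat.factorial (m + r + 1))))

theorem gp_term {n k : ℕ} (hk : 2 ≤ k) (hn : k ≤ n) (l : ℕ) (x : Fin (l + 1) → ℝ) (hx : x 0 ≠ 0)
    (y : ℝ) : xiFlag (genPerm n k) l x * y ^ n / (Nat.factorial n) =
      ∑ r ∈ Finset.range k, ∑' m, gpT k r (x 0) (∑ i : Fin l, x i.succ + 1) (x 0 * y) m n := by
  rw [gp_xi_grouped hk hn, Finset.sum_mul, Finset.sum_div]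
  refine Finset.sum_congr rfl fun r hr => ?_
  have hr := Finset.mem_range.1 hr
  rw [tsum_eq_sum (s := Finset.range n), Finset.sum_mul, Finset.sum_div]
  · refine Finset.sum_congr rfl fun m _ => ?_
    unfold gpT
    by_cases h : n < m + r + 1
    · rw [gp_ser_zero_big hk hn hr h]; simp
    · have h2 : (Nat.factorial n : ℝ) ≠ 0 := by exact_mod_cast n.factorial_ne_zero
      have h3 : (Nat.factorial (m + r + 1) : ℝ) ≠ 0 := by exact_mod_cast (m + r + 1).factorial_ne_zero
      have h4 : (x 0) ^ n = x 0 ^ (n - 1 - (m + r)) * x 0 ^ (m + r + 1) := by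
        rw [← pow_add]
        exact congrArg _ (by omega)
      have h5 : x 0 ^ (m + r + 1) ≠ 0 := pow_ne_zero _ hx
      rw [mul_pow, h4]
      generalize x 0 ^ (m + r + 1) = A at *
      generalize x 0 ^ (n - 1 - (m + r)) = B at *
      field_simp
  · intro m hm
    have hm : n ≤ m := by simpa using hm
    unfold gpT
    rw [gp_ser_zero_big hk hn hr (by omega)]; simp

theorem gp_exp_tail (r : ℕ) (Z : ℝ) :
    HasSum (fun m : ℕ => Z ^ (m + (r + 1)) / (Nat.factorial (m + (r + 1)) : ℝ))
      (Real.exp Z - Etaylor r Z) := by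
  unfold Etaylor
  exact (hasSum_nat_add_iff' (r + 1)).2 (gp_hasSum_exp Z)

theorem gp_summable_tail (r : ℕ) (X S u : ℝ) :
    Summable (fun m : ℕ => u ^ m * (S ^ (m + r) / (X ^ (m + r + 1) * (Nat.factorial (m + r + 1))))) := by
  have h := (Real.summable_pow_div_factorial (u * S / X)).norm.mul_left (‖S ^ r / X ^ (r + 1)‖)
  refine Summable.of_norm_bounded h fun m => ?_
  rw [← norm_mul, show u ^ m * (S ^ (m + r) / (X ^ (m + r + 1) * (Nat.factorial (m + r + 1)))) =
    (u ^ m * S ^ (m + r) / X ^ (m + r + 1)) / (Nat.factorial (m + r + 1)) by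
      rw [← div_div, mul_div_assoc, mul_div_assoc],
    show S ^ r / X ^ (r + 1) * ((u * S / X) ^ m / (Nat.factorial m)) =
    (u ^ m * S ^ (m + r) / X ^ (m + r + 1)) / (Nat.factorial m) by
      rw [div_pow, mul_pow, pow_add, show m + r + 1 = m + (r + 1) by omega, pow_add]
      simp only [div_eq_mul_inv, mul_inv]
      ring,
    norm_div _ (Nat.factorial (m + r + 1) : ℝ), norm_div _ (Nat.factorial m : ℝ)]
  refine div_le_div_of_nonneg_left (norm_nonneg (_ : ℝ)) ?_ ?_
  · rw [Real.norm_natCast]; exact_mod_cast Nat.factorial_pos _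
  · rw [Real.norm_natCast, Real.norm_natCast]; exact_mod_cast Nat.factorial_le (by omega)

theorem gp_summable_prod {k r : ℕ} (hr : r < k) (X S z : ℝ) :
    Summable (fun p : ℕ × ℕ => gpT k r X S z p.1 p.2) := by
  refine Summable.of_norm ?_
  have hn : ∀ m n, ‖gpT k r X S z m n‖ = PowerSeries.coeff n (gpSer k r m) * |z| ^ n *
      (|S| ^ (m + r) / (|X| ^ (m + r + 1) * (Nat.factorial (m + r + 1)))) := by
    intro m n
    unfold gpT
    rw [norm_mul, norm_mul, norm_div, norm_mul, norm_pow, norm_pow, norm_pow, Real.norm_natCast,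
      Real.norm_of_nonneg (gp_ser_nonneg k r m n)]
    rfl
  rw [summable_prod_of_nonneg (fun p => norm_nonneg _)]
  simp only [hn]
  constructor
  · intro m
    exact (gpHas_ser m hr |z|).1.of_norm.mul_right _
  · simp only [tsum_mul_right, (gpHas_ser _ hr |z|).2]
    have h := (gp_summable_tail r |X| |S| (Real.exp |z| - 1)).mul_left
      (|z| ^ r / (Nat.factorial r) * (Real.exp |z| - Etaylor (k - r - 1) |z|))
    refine h.congr fun m => ?_
    ring

theorem gp_value {k r : ℕ} (hr : r < k) {X S z : ℝ} (hX : X ≠ 0) (hS : S ≠ 0) (hz : z ≠ 0) :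
    ∑' m, ∑' n, gpT k r X S z m n = (1 / S) *
      ((z ^ r * (Real.exp z - Etaylor (k - r - 1) z) /
                (Nat.factorial r * (Real.exp z - 1) ^ (r + 1))) *
              (Real.exp (S / X * (Real.exp z - 1)) -
                Etaylor r (S / X * (Real.exp z - 1)))) := by
  unfold gpT
  simp only [tsum_mul_right, (gpHas_ser _ hr z).2]
  have hu : Real.exp z - 1 ≠ 0 := by
    rw [sub_ne_zero]
    exact fun h => hz (Real.exp_eq_one_iff z |>.1 h)
  rw [← (gp_exp_tail r (S / X * (Real.exp z - 1))).tsum_eq, ← tsum_mul_left, ← tsum_mul_left]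
  refine tsum_congr fun m => ?_
  generalize Real.exp z - Etaylor (k - r - 1) z = A
  generalize Real.exp z - 1 = u at *
  rw [show m + (r + 1) = m + r + 1 by omega]
  have h3 : (Nat.factorial (m + r + 1) : ℝ) ≠ 0 := by exact_mod_cast (m + r + 1).factorial_ne_zero
  have h4 : (Nat.factorial r : ℝ) ≠ 0 := by exact_mod_cast r.factorial_ne_zero
  rw [mul_pow, div_pow, pow_succ S (m + r), show u ^ (m + r + 1) = u ^ m * u ^ (r + 1) by
    rw [← pow_add]; rfl]
  have h5 : X ^ (m + r + 1) ≠ 0 := pow_ne_zero _ hX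
  have h6 : u ^ (r + 1) ≠ 0 := pow_ne_zero _ hu
  generalize X ^ (m + r + 1) = B at *
  generalize u ^ (r + 1) = C at *
  generalize S ^ (m + r) = D at *
  field_simp

theorem gp_main (k : ℕ) (hk : 2 ≤ k) (l : ℕ)
    (x : Fin (l + 1) → ℝ) (hx : x 0 ≠ 0) (S : ℝ) (hS : S = ∑ i : Fin l, x i.succ + 1) (y : ℝ) :
    HasSum (fun m : ℕ => xiFlag (genPerm (k + m) k) l x * y ^ (k + m) / Nat.factorial (k + m))
      (∑ r ∈ Finset.range k, ∑' m, ∑' n, gpT k r (x 0) S (x 0 * y) m n) := by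
  have h1 : HasSum (fun n => ∑ r ∈ Finset.range k, ∑' m, gpT k r (x 0) S (x 0 * y) m n)
      (∑ r ∈ Finset.range k, ∑' m, ∑' n, gpT k r (x 0) S (x 0 * y) m n) := by
    refine hasSum_sum fun r hr => ?_
    have hs := gp_summable_prod (Finset.mem_range.1 hr) (x 0) S (x 0 * y)
    have hc : ∑' m, ∑' n, gpT k r (x 0) S (x 0 * y) m n =
      ∑' n, ∑' m, gpT k r (x 0) S (x 0 * y) m n := (Summable.tsum_comm hs).symm
    rw [hc]
    exact (hs.prod_symm.prod).hasSum
  have h2 := (hasSum_nat_add_iff' k).2 h1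
  have h3 : ∑ n ∈ Finset.range k,
      ∑ r ∈ Finset.range k, ∑' m, gpT k r (x 0) S (x 0 * y) m n = 0 := by
    refine Finset.sum_eq_zero fun n hn => Finset.sum_eq_zero fun r _ => ?_
    unfold gpT
    simp [gp_ser_zero_lt (Finset.mem_range.1 hn)]
  rw [h3, sub_zero] at h2
  have h4 : (fun m : ℕ => xiFlag (genPerm (k + m) k) l x * y ^ (k + m) / Nat.factorial (k + m)) =
      fun m => ∑ r ∈ Finset.range k, ∑' j, gpT k r (x 0) S (x 0 * y) j (m + k) := by
    funext m
    rw [gp_term hk (Nat.le_add_right k m) l x hx y, hS, Nat.add_comm m k]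
  rw [h4]
  exact h2

/-- the exponential generating function of the exponential
ℓ-flag polynomials of the general permutahedra Π_{n−1}(k−1), n ≥ k, converges
absolutely for all y, and for y ≠ 0 equals
(1/S)·∑_{i=0}^{k−1} [(x₁y)^i(e^{x₁y}−E_{k−i−1}(x₁y))/(i!(e^{x₁y}−1)^{i+1})]
·[e^{(S/x₁)(e^{x₁y}−1)} − E_i((S/x₁)(e^{x₁y}−1))].
(Here ℓ = l+1 ≥ 1 and x₁ = x 0.) -/
theorem exp_flag_genFun_genPerm (k : ℕ) (hk : 2 ≤ k) (l : ℕ)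
    (x : Fin (l + 1) → ℝ) (hx : x 0 ≠ 0) (S : ℝ)
    (hS : S = (∑ i ∈ Finset.univ.filter (fun i : Fin (l + 1) => i ≠ 0), x i) + 1)
    (hS0 : S ≠ 0) :
    (∀ y : ℝ, Summable fun m : ℕ =>
      |xiFlag (genPerm (k + m) k) l x * y ^ (k + m) / Nat.factorial (k + m)|) ∧
    ∀ y : ℝ, y ≠ 0 →
      ∑' m : ℕ, xiFlag (genPerm (k + m) k) l x * y ^ (k + m) / Nat.factorial (k + m)
        = (1 / S) * ∑ i ∈ Finset.range k,
            ((x 0 * y) ^ i * (Real.exp (x 0 * y) - Etaylor (k - i - 1) (x 0 * y)) /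
                (Nat.factorial i * (Real.exp (x 0 * y) - 1) ^ (i + 1))) *
              (Real.exp (S / x 0 * (Real.exp (x 0 * y) - 1)) -
                Etaylor i (S / x 0 * (Real.exp (x 0 * y) - 1))) := by
  have hS' : S = ∑ i : Fin l, x i.succ + 1 := by
    rw [hS, Finset.sum_filter, Fin.sum_univ_succ]
    simp
  refine ⟨fun y => (gp_main k hk l x hx S hS' y).summable.abs, fun y hy => ?_⟩
  rw [(gp_main k hk l x hx S hS' y).tsum_eq, Finset.mul_sum]
  refine Finset.sum_congr rfl fun r hr => ?_
  exact gp_value (Finset.mem_range.1 hr) hx hS0 (mul_ne_zero hx hy)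
end
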